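/- For all integers 0 < d < n and every M < +∞, there exist ε > 0 (depending only on n, d) and C ≥ 1 (depending only on n, d, M) with the following property. Let E ⊆ ℝ^n be a closed set containing the origin such that for every x ∈ E ∩ B(0,10) and every 0 < r ≤ 10 there is a d-dimensional affine plane P(x,r) containing x with dist(y,P(x,r)) ≤ εr for all y ∈ E ∩ B(x,r) and dist(y,E) ≤ εr for all y ∈ P(x,r) ∩ B(x,r). Assume in addition that J₁(x) := Σ_{k ≥ 0} β₁(x,10^{-k})² ≤ M for all x ∈ E ∩ B(0,10). Then there is a bijective map g : ℝ^n → ℝ^n such that E ∩ B(0,1) = g(P(0,10)) ∩ B(0,1) and C⁻¹|x−y| ≤ |g(x) − g(y)| ≤ C|x−y| for all x, y ∈ ℝ^n. (Theorem 1.18.) -/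

import Mathlib

open Metric Set MeasureTheory
open scoped ENNReal

noncomputable section

/-- `ℝⁿ`. -/
abbrev V (n : ℕ) := EuclideanSpace ℝ (Fin n)

/-- `P` is a `d`-dimensional affine plane of `ℝⁿ`. -/
def IsAffinePlane (n d : ℕ) (P : Set (V n)) : Prop :=
  ∃ Q : AffineSubspace ℝ (V n), (Q : Set (V n)) = P ∧
    Module.finrank ℝ Q.direction = d ∧ (Q : Set (V n)).Nonempty

/-- The Jones number `β₁(x,r) = inf_P r^{-d} ∫_{E ∩ B(x,r)} dist(y,P)/r dH^d(y)`,
the infimum being over `d`-planes `P` meeting `B(x,r)`; valued in `ℝ≥0∞`. -/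
def beta1 (n d : ℕ) (E : Set (V n)) (x : V n) (r : ℝ) : ℝ≥0∞ :=
  ⨅ P ∈ {P : Set (V n) | IsAffinePlane n d P ∧ (P ∩ ball x r).Nonempty},
    (∫⁻ y in E ∩ ball x r, ENNReal.ofReal (infDist y P / r) ∂(μH[(d : ℝ)])) /
      ENNReal.ofReal (r ^ d)

/-!
A point `z` is split along the first plane into a base point `a` on the plane and an offset `ν`
normal to it. The step of generation `k` averages, with a partition of unity `θ` at scale `10⁻ᵏ`,
the normal projections `Q j` of planes that almost minimize `β₁`: the base point moves to
`a - ∑ j, θ j a • Q j (a - c j)` and the offset to `∑ j, θ j a • Q j ν`. Points whose offset is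
large compared to `10⁻ᵏ` are no longer moved, and `g z` is the limit of `a + ν`. By Pythagoras one
step changes the distance of two points by a factor `1 + O(s ^ 2)`, where `s` is the angle between
neighbouring planes, so that only `∑ s ^ 2` matters. Finally `s` is bounded by `β₁`: by Brouwer's
theorem `E` projects onto discs in its approximating planes, hence is lower Ahlfors regular, and an
`L¹` bound on the distance to a plane gives a pointwise bound at many points of `E`.
-/

open Filter Topology Polynomial
open scoped NNReal

/-! ### The Brouwer theorem -/

section Brouwer

theorem exists_weights_eval_eq_sum {K : Type*} [Field K] {T : Set K} (hT : T.Infinite) (m : ℕ)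
    (a : K) : ∃ (s : Finset K) (w : K → K), ↑s ⊆ T ∧
      ∀ p : K[X], p.natDegree ≤ m → p.eval a = ∑ t ∈ s, w t * p.eval t := by
  classical
  obtain ⟨s, hsT, hs⟩ := hT.exists_subset_card_eq (m + 1)
  refine ⟨s, fun t => (Lagrange.basis s id t).eval a, hsT, fun p hp => ?_⟩
  have hdeg : p.degree < s.card := by
    rw [hs]
    exact degree_le_natDegree.trans_lt (by exact_mod_cast Nat.lt_succ_of_le hp)
  conv_lhs => rw [Lagrange.eq_interpolate (v := id) Function.injective_id.injOn hdeg,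
    Lagrange.interpolate_apply, eval_finsetSum]
  exact Finset.sum_congr rfl fun t _ => by rw [eval_mul, eval_C, mul_comm, id]

theorem exists_natDegree_le_eval_eq_det_one_add_smul {K M : Type*} [Field K] [AddCommGroup M]
    [Module K M] [FiniteDimensional K M] (f : Module.End K M) :
    ∃ p : K[X], p.natDegree ≤ Module.finrank K M ∧
      ∀ t, p.eval t = LinearMap.det (1 + t • f) := by
  let b := Module.finBasis K M
  set A := LinearMap.toMatrix b b f with hA
  refine ⟨((X : K[X]) • A.map C + (1 : Matrix _ _ K).map C).det, ?_, fun t => ?_⟩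
  · simpa using natDegree_det_X_add_C_le A 1
  · rw [← LinearMap.det_toMatrix b, map_add, map_smul, LinearMap.toMatrix_one, ← hA,
      ← coe_evalRingHom, RingHom.map_det]
    congr 1
    ext i j
    simp only [RingHom.mapMatrix_apply, Matrix.map_apply, Matrix.add_apply, Matrix.smul_apply,
      smul_eq_mul, Matrix.one_apply, apply_ite C, apply_ite (eval t), eval_add, eval_mul,
      coe_evalRingHom, eval_X, eval_C, map_one, map_zero, eval_one, eval_zero]
    ring

variable {H : Type*} [NormedAddCommGroup H] [NormedSpace ℝ H] {u : H → H} {K : ℝ≥0}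

theorem bijective_id_add_of_lipschitzWith [CompleteSpace H] (hu : LipschitzWith K u)
    (hK : K < 1) : Function.Bijective fun x => x + u x := by
  have happ : ApproximatesLinearOn (fun x => x + u x)
      (ContinuousLinearEquiv.refl ℝ H : H →L[ℝ] H) univ K := by
    refine fun x _ y _ => (Eq.le ?_).trans (hu.norm_sub_le x y)
    congr 1
    change x + u x - (y + u y) - (x - y) = u x - u y
    abel
  have hc : Subsingleton H ∨
      K < ‖((ContinuousLinearEquiv.refl ℝ H).symm : H →L[ℝ] H)‖₊⁻¹ := by
    rcases subsingleton_or_nontrivial H with h | h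
    · exact .inl h
    · right
      rwa [show ‖((ContinuousLinearEquiv.refl ℝ H).symm : H →L[ℝ] H)‖₊ = 1 from
        NNReal.eq ContinuousLinearMap.norm_id, inv_one]
  exact ⟨injOn_univ.1 (happ.injOn hc), happ.surjective hc⟩

theorem image_eq_of_bijective_of_eqOn_compl {α : Type*} {f : α → α} {s : Set α}
    (hf : Function.Bijective f) (hs : EqOn f id sᶜ) : f '' s = s :=
  compl_injective (by rw [← image_compl_eq hf, hs.image_eq, image_id])

theorem lipschitzWith_of_lipschitzOnWith_of_eq_off_interior {Y : Type*} [PseudoMetricSpace Y]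
    {f : H → Y} {y₀ : Y} {s : Set H} (hf : LipschitzOnWith K f s) (hs : IsClosed s)
    (hf₀ : ∀ x ∉ interior s, f x = y₀) : LipschitzWith K f := by
  have crossing : ∀ x ∈ s, ∀ y ∉ s, dist (f x) (f y) ≤ K * dist x y := fun x hx y hy => by
    obtain ⟨z, hzxy, hzs, hz⟩ := isPreconnected_closed_iff.1
      (convex_segment (𝕜 := ℝ) x y).isPreconnected s (interior s)ᶜ hs
      isOpen_interior.isClosed_compl
      (fun z _ => or_iff_not_imp_left.2 fun hz h => hz (interior_subset h))
      ⟨x, left_mem_segment ℝ x y, hx⟩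
      ⟨y, right_mem_segment ℝ x y, fun h => hy (interior_subset h)⟩
    rw [hf₀ y (fun h => hy (interior_subset h)), ← hf₀ z hz]
    refine (hf.dist_le_mul x hx z hzs).trans ?_
    gcongr
    linarith [dist_add_dist_of_mem_segment hzxy, dist_nonneg (x := z) (y := y)]
  refine .of_dist_le_mul fun x y => ?_
  by_cases hx : x ∈ s <;> by_cases hy : y ∈ s
  · exact hf.dist_le_mul x hx y hy
  · exact crossing x hx y hy
  · rw [dist_comm, dist_comm x]
    exact crossing y hy x hx
  · rw [hf₀ x fun h => hx (interior_subset h), hf₀ y fun h => hy (interior_subset h), dist_self]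
    positivity

theorem exists_det_id_add_pos (H : Type*) [NormedAddCommGroup H] [NormedSpace ℝ H] :
    ∃ η > 0, ∀ A : H →L[ℝ] H, ‖A‖ < η → 0 < (ContinuousLinearMap.id ℝ H + A).det := by
  have hcont : Continuous fun A : H →L[ℝ] H => (ContinuousLinearMap.id ℝ H + A).det :=
    ContinuousLinearMap.continuous_det.comp (continuous_const.add continuous_id)
  have h0 : (ContinuousLinearMap.id ℝ H + 0).det = 1 := by
    rw [add_zero]
    exact LinearMap.det_id
  obtain ⟨η, hη, h⟩ := Metric.mem_nhds_iff.1
    ((isOpen_lt continuous_const hcont).mem_nhds (one_pos.trans_eq h0.symm))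
  exact ⟨η, hη, fun A hA => h (mem_ball_zero_iff.2 hA)⟩

variable [FiniteDimensional ℝ H] [MeasurableSpace H] [BorelSpace H] {μ : Measure H} {s : Set H}

theorem integrableOn_det_id_add_smul_fderiv (hu : LipschitzWith K u) (t : ℝ) (hμs : μ s ≠ ∞) :
    IntegrableOn (fun x => (ContinuousLinearMap.id ℝ H + t • fderiv ℝ u x).det) s μ := by
  have hcont : Continuous fun A : H →L[ℝ] H => (ContinuousLinearMap.id ℝ H + t • A).det :=
    ContinuousLinearMap.continuous_det.comp (continuous_const.add (continuous_id.const_smul t))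
  obtain ⟨C, hC⟩ := (isCompact_closedBall (0 : H →L[ℝ] H) K).exists_bound_of_continuousOn
    hcont.continuousOn
  exact Measure.integrableOn_of_bounded (M := C) hμs
    (hcont.measurable.comp (measurable_fderiv ℝ u)).aestronglyMeasurable
    (.of_forall fun x => hC _ (mem_closedBall_zero_iff.2 (norm_fderiv_le_of_lipschitz ℝ hu)))

variable [μ.IsAddHaarMeasure]

theorem setIntegral_det_fderiv_of_injective {f : H → H} {f' : H → H →L[ℝ] H}
    (hs : MeasurableSet s) (hf' : ∀ x ∈ s, HasFDerivWithinAt f (f' x) s x) (hf : InjOn f s)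
    (hdet : ∀ x ∈ s, 0 ≤ (f' x).det) : ∫ x in s, (f' x).det ∂μ = μ.real (f '' s) := by
  have := integral_image_eq_integral_abs_det_fderiv_smul μ hs hf' hf fun _ => (1 : ℝ)
  simp only [smul_eq_mul, mul_one, setIntegral_const] at this
  rw [this]
  exact setIntegral_congr_fun hs fun x hx => (abs_of_nonneg (hdet x hx)).symm

theorem exists_setIntegral_det_id_add_smul_fderiv_eq (hu : LipschitzWith K u)
    (hs : MeasurableSet s) (hus : ∀ x ∈ s, DifferentiableAt ℝ u x) (hu₀ : ∀ x ∉ s, u x = 0) :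
    ∃ T > (0 : ℝ), ∀ t ∈ Ioo 0 T,
      ∫ x in s, (ContinuousLinearMap.id ℝ H + t • fderiv ℝ u x).det ∂μ = μ.real s := by
  obtain ⟨η, hη, hdet⟩ := exists_det_id_add_pos H
  refine ⟨min 1 η / (K + 1), by positivity, fun t ⟨ht, htT⟩ => ?_⟩
  have htK : t * K < min 1 η := by
    rw [lt_div_iff₀ (by positivity)] at htT
    linarith
  have hlip : LipschitzWith (t.toNNReal * K) fun x => t • u x := .of_dist_le_mul fun x y => by
    rw [dist_smul₀, Real.norm_of_nonneg ht.le, NNReal.coe_mul, Real.coe_toNNReal t ht.le,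
      mul_assoc]
    exact mul_le_mul_of_nonneg_left (hu.dist_le_mul x y) ht.le
  have hlt : t.toNNReal * K < 1 := by
    rw [← NNReal.coe_lt_coe, NNReal.coe_mul, Real.coe_toNNReal t ht.le]
    exact htK.trans_le (min_le_left _ _)
  have hbij := bijective_id_add_of_lipschitzWith hlip hlt
  have himage : (fun x => x + t • u x) '' s = s :=
    image_eq_of_bijective_of_eqOn_compl hbij fun x hx => by simp [hu₀ x hx]
  rw [setIntegral_det_fderiv_of_injective (f := fun x => x + t • u x) hs
    (fun x hx => ((hasFDerivAt_id x).add ((hus x hx).hasFDerivAt.const_smul t)).hasFDerivWithinAt)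
    hbij.1.injOn fun x _ => (hdet _ ?_).le, himage]
  refine lt_of_le_of_lt ?_ (htK.trans_le (min_le_right _ _))
  rw [norm_smul, Real.norm_of_nonneg ht.le]
  exact mul_le_mul_of_nonneg_left (norm_fderiv_le_of_lipschitz ℝ hu) ht.le

/- The integral is a polynomial in `t` when `fderiv` is multiplied by `t`, and it is constant for
small `t > 0`. -/
theorem setIntegral_det_id_add_fderiv_eq (hu : LipschitzWith K u) (hs : MeasurableSet s)
    (hμs : μ s ≠ ∞) (hus : ∀ x ∈ s, DifferentiableAt ℝ u x) (hu₀ : ∀ x ∉ s, u x = 0) :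
    ∫ x in s, (ContinuousLinearMap.id ℝ H + fderiv ℝ u x).det ∂μ = μ.real s := by
  obtain ⟨T, hT, hsmall⟩ := exists_setIntegral_det_id_add_smul_fderiv_eq (μ := μ) hu hs hus hu₀
  obtain ⟨S, w, hST, hw⟩ := exists_weights_eval_eq_sum (Ioo_infinite hT) (Module.finrank ℝ H) 1
  have hw_one : ∑ t ∈ S, w t = 1 := by simpa using (hw 1 (by simp)).symm
  have hdet (A : H →L[ℝ] H) : (ContinuousLinearMap.id ℝ H + A).det =
      ∑ t ∈ S, w t * (ContinuousLinearMap.id ℝ H + t • A).det := by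
    obtain ⟨p, hp, hpdet⟩ := exists_natDegree_le_eval_eq_det_one_add_smul (A : H →ₗ[ℝ] H)
    have := hw p hp
    simp only [hpdet, one_smul] at this
    exact this
  calc ∫ x in s, (ContinuousLinearMap.id ℝ H + fderiv ℝ u x).det ∂μ
      = ∑ t ∈ S, w t * ∫ x in s, (ContinuousLinearMap.id ℝ H + t • fderiv ℝ u x).det ∂μ := by
        simp_rw [← integral_const_mul]
        rw [← integral_finsetSum _ fun t _ =>
          (integrableOn_det_id_add_smul_fderiv hu t hμs).const_mul _]
        exact integral_congr_ae (.of_forall fun x => hdet _)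
    _ = ∑ t ∈ S, w t * μ.real s :=
        Finset.sum_congr rfl fun t ht => by rw [hsmall t (hST ht)]
    _ = μ.real s := by rw [← Finset.sum_mul, hw_one, one_mul]

end Brouwer

section BrouwerEuclidean

variable {H : Type*} [NormedAddCommGroup H] [InnerProductSpace ℝ H] [FiniteDimensional ℝ H]
  {u : H → H} {ρ : ℝ}

theorem det_eq_zero_of_eventually_norm_eq {f : H → H} {f' : H →L[ℝ] H} {x : H}
    (hf : HasFDerivAt f f' x) (hρ : ρ ≠ 0) (hfx : ∀ᶠ y in 𝓝 x, ‖f y‖ = ρ) : f'.det = 0 := by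
  by_contra hdet
  have hsurj : Function.Surjective f' := LinearMap.range_eq_top.1
    ((LinearMap.isUnit_iff_range_eq_top _).1
      ((LinearMap.isUnit_iff_isUnit_det _).2 (isUnit_iff_ne_zero.2 hdet)))
  obtain ⟨w, hw⟩ := hsurj (f x)
  have hconst : HasFDerivAt (fun y => ‖f y‖ ^ 2) (0 : H →L[ℝ] ℝ) x :=
    (hasFDerivAt_const (ρ ^ 2) x).congr_of_eventuallyEq (hfx.mono fun y hy => by simp only [hy])
  have hinner : 2 • inner ℝ (f x) (f' w) = 0 := DFunLike.congr_fun (hf.norm_sq.unique hconst) w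
  rw [hw, real_inner_self_eq_norm_sq, hfx.self_of_nhds] at hinner
  exact hρ (by simpa using hinner)

theorem exists_norm_id_add_ne {K : ℝ≥0} (hu : LipschitzWith K u)
    (hu_diff : ∀ x ∈ ball (0 : H) ρ, DifferentiableAt ℝ u x) (hρ : 0 < ρ)
    (hu₀ : ∀ x ∉ ball (0 : H) ρ, u x = 0) : ∃ x ∈ ball (0 : H) ρ, ‖x + u x‖ ≠ ρ := by
  borelize H
  by_contra! hsphere
  have hint := setIntegral_det_id_add_fderiv_eq (μ := volume) hu measurableSet_ball
    measure_ball_lt_top.ne hu_diff hu₀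
  rw [setIntegral_congr_fun (g := fun _ => (0 : ℝ)) measurableSet_ball fun x hx =>
    det_eq_zero_of_eventually_norm_eq ((hasFDerivAt_id x).add (hu_diff x hx).hasFDerivAt) hρ.ne'
      (by filter_upwards [isOpen_ball.mem_nhds hx] using hsphere), integral_zero] at hint
  exact (ENNReal.toReal_pos (measure_ball_pos volume 0 hρ).ne' measure_ball_lt_top.ne).ne hint

theorem exists_id_add_eq_zero_of_contDiff (hu : ContDiff ℝ 1 u) (hρ : 0 < ρ)
    (hu₀ : ∀ x ∉ ball (0 : H) ρ, u x = 0) : ∃ x, x + u x = 0 := by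
  classical
  by_contra! hne
  -- `x + v x` is the radial projection of `x + u x` to the sphere.
  let v : H → H := fun x => (ρ / ‖x + u x‖) • (x + u x) - x
  have hv : ContDiff ℝ 1 v :=
    ((contDiff_const.div ((contDiff_id.add hu).norm ℝ hne)
      fun x => norm_ne_zero_iff.2 (hne x)).smul (contDiff_id.add hu)).sub contDiff_id
  obtain ⟨K, hK⟩ := hv.contDiffOn.exists_lipschitzOnWith (s := closedBall (0 : H) ρ)
    one_ne_zero (convex_closedBall 0 ρ) (isCompact_closedBall 0 ρ)
  let U : H → H := (ball 0 ρ).indicator v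
  have hU₀ : ∀ x ∉ ball (0 : H) ρ, U x = 0 := fun x hx => indicator_of_notMem hx v
  have hvU : EqOn U v (closedBall 0 ρ) := fun x hx => by
    by_cases hxb : x ∈ ball (0 : H) ρ
    · exact indicator_of_mem hxb v
    · have hxρ : ‖x‖ = ρ := le_antisymm (by simpa using hx) (by simpa using hxb)
      simp [hU₀ x hxb, v, hu₀ x hxb, hxρ, hρ.ne']
  have hU : LipschitzWith K U := lipschitzWith_of_lipschitzOnWith_of_eq_off_interior
    (fun x hx y hy => by rw [hvU hx, hvU hy]; exact hK hx hy) isClosed_closedBall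
    (by rwa [interior_closedBall 0 hρ.ne'])
  have hU_diff : ∀ x ∈ ball (0 : H) ρ, DifferentiableAt ℝ U x := fun x hx =>
    (hv.differentiable one_ne_zero x).congr_of_eventuallyEq <| by
      filter_upwards [isOpen_ball.mem_nhds hx] with y hy using hvU (ball_subset_closedBall hy)
  obtain ⟨x, hx, hxρ⟩ := exists_norm_id_add_ne hU hU_diff hρ hU₀
  refine hxρ ?_
  rw [hvU (ball_subset_closedBall hx), add_sub_cancel, norm_smul, norm_div, norm_norm,
    div_mul_cancel₀ _ (norm_ne_zero_iff.2 (hne x)), Real.norm_of_nonneg hρ.le]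

theorem exists_id_add_eq_zero_of_continuous (hu : Continuous u) (hρ : 0 < ρ)
    (hu₀ : ∀ x ∉ ball (0 : H) ρ, u x = 0) : ∃ x, x + u x = 0 := by
  by_contra! hne
  obtain ⟨x₀, -, hmin⟩ := (isCompact_closedBall (0 : H) ρ).exists_isMinOn
    (f := fun x => ‖x + u x‖) ⟨0, mem_closedBall_self hρ.le⟩
    (continuous_id.add hu).norm.continuousOn
  obtain ⟨w, hw, hwu, hsupp⟩ := hu.exists_contDiff_approx 1
    (ε := fun _ => ‖x₀ + u x₀‖) continuous_const fun _ => norm_pos_iff.2 (hne x₀)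
  have hw₀ : ∀ x ∉ ball (0 : H) ρ, w x = 0 := fun x hx =>
    Function.notMem_support.1 fun h => hsupp h (hu₀ x hx)
  obtain ⟨x, hx⟩ := exists_id_add_eq_zero_of_contDiff hw hρ hw₀
  by_cases hxb : x ∈ ball (0 : H) ρ
  · refine (hwu x).not_ge ((hmin (ball_subset_closedBall hxb)).trans_eq ?_)
    rw [eq_neg_of_add_eq_zero_right hx, dist_eq_norm, ← norm_neg]
    simp only [neg_sub, sub_neg_eq_add, add_comm]
  · rw [hw₀ x hxb, add_zero] at hx
    exact hxb (hx ▸ mem_ball_self hρ)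

theorem exists_isFixedPt_of_mapsTo_closedBall {c : H} {f : H → H}
    (hf : ContinuousOn f (closedBall c ρ)) (hρ : 0 < ρ)
    (hmaps : MapsTo f (closedBall c ρ) (closedBall c ρ)) :
    ∃ x ∈ closedBall c ρ, Function.IsFixedPt f x := by
  have := Metric.instTietzeExtensionClosedBall ℝ c hρ
  obtain ⟨F, hF, hFf⟩ := ContinuousMap.exists_forall_mem_restrict_eq
    (t := closedBall c ρ) isClosed_closedBall ⟨_, hf.domRestrict⟩ fun x => hmaps x.2
  have hFf' : EqOn F f (closedBall c ρ) := fun x hx => DFunLike.congr_fun hFf ⟨x, hx⟩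
  let κ : H → ℝ := fun x => max 0 (min 1 (2 - ‖x‖ / ρ))
  obtain ⟨x, hx⟩ := exists_id_add_eq_zero_of_continuous
    (u := fun x => -(κ x • (F (x + c) - c))) (ρ := 2 * ρ) (by fun_prop) (by positivity)
    fun x hx => by
      have : 2 ≤ ‖x‖ / ρ := by
        rw [le_div_iff₀ hρ]
        simpa using hx
      simp [κ, min_le_of_right_le (sub_nonpos.2 this)]
  have hxκ : x = κ x • (F (x + c) - c) := by rw [← sub_eq_zero, sub_eq_add_neg, hx]
  have hxρ : ‖x‖ ≤ ρ := by
    have hκ : |κ x| ≤ 1 := by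
      rw [abs_of_nonneg (le_max_left _ _)]
      exact max_le zero_le_one (min_le_left _ _)
    rw [hxκ, norm_smul, Real.norm_eq_abs]
    exact (mul_le_of_le_one_left (norm_nonneg _) hκ).trans (mem_closedBall_iff_norm.1 (hF _))
  have hκ : κ x = 1 := by
    have : ‖x‖ / ρ ≤ 1 := (div_le_one hρ).2 hxρ
    simp only [κ]
    rw [min_eq_left (by linarith), max_eq_right zero_le_one]
  have hmem : x + c ∈ closedBall c ρ := by simpa using hxρ
  refine ⟨x + c, hmem, ?_⟩
  rw [hκ, one_smul, hFf' hmem] at hxκ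
  exact (eq_add_of_sub_eq hxκ.symm)

theorem exists_eq_of_dist_le {F : H → H} {c : H} {s : ℝ}
    (hF : ContinuousOn F (closedBall c ρ)) (hs : ∀ x ∈ closedBall c ρ, dist (F x) x ≤ s)
    {y : H} (hy : dist y c ≤ ρ - s) (hρ : 0 < ρ) : ∃ x ∈ closedBall c ρ, F x = y := by
  obtain ⟨x, hx, hfix⟩ := exists_isFixedPt_of_mapsTo_closedBall (f := fun x => x - F x + y)
    (by fun_prop) hρ fun x hx => by
      have := hs x hx
      rw [mem_closedBall, dist_eq_norm, show x - F x + y - c = -(F x - x) + (y - c) by abel]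
      refine (norm_add_le _ _).trans ?_
      rw [norm_neg, ← dist_eq_norm, ← dist_eq_norm]
      linarith
  refine ⟨x, hx, ?_⟩
  have : x - F x + y = x := hfix
  rwa [sub_add_eq_add_sub, add_sub_assoc, add_eq_left, sub_eq_zero, eq_comm] at this

end BrouwerEuclidean

/-! ### Planes and their averages -/

section Planes

variable {F : Type*} [NormedAddCommGroup F] [InnerProductSpace ℝ F]

variable (F) in
/-- An affine plane of `F`, encoded by a point `c` of it and the orthogonal projection `Q` onto
the space of its normal directions. -/
structure NormalPlane where
  Q : F →L[ℝ] F
  c : F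
  isSymmetricProjection : (Q : F →ₗ[ℝ] F).IsSymmetricProjection

namespace NormalPlane

variable (L L' : NormalPlane F)

/-- The normal component of the displacement from the plane; its norm is the distance to the
plane. -/
def N (z : F) : F := L.Q (z - L.c)

instance : Nonempty (NormalPlane F) :=
  ⟨0, 0, ⟨by simp [IsIdempotentElem], fun _ _ => by simp⟩⟩

theorem Q_Q (x : F) : L.Q (L.Q x) = L.Q x :=
  LinearMap.congr_fun L.isSymmetricProjection.isIdempotentElem x

theorem inner_Q_left (x y : F) : inner ℝ (L.Q x) y = inner ℝ x (L.Q y) :=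
  L.isSymmetricProjection.isSymmetric x y

theorem inner_Q_self (x : F) : inner ℝ (L.Q x) x = ‖L.Q x‖ ^ 2 := by
  rw [← real_inner_self_eq_norm_sq, L.inner_Q_left, L.inner_Q_left, L.Q_Q]

theorem norm_sq_eq (x : F) : ‖x‖ ^ 2 = ‖L.Q x‖ ^ 2 + ‖x - L.Q x‖ ^ 2 := by
  rw [norm_sub_sq_real, real_inner_comm, L.inner_Q_self]; ring

theorem norm_Q_le (x : F) : ‖L.Q x‖ ≤ ‖x‖ := by
  refine le_of_sq_le_sq ?_ (norm_nonneg _)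
  linarith [L.norm_sq_eq x, sq_nonneg ‖x - L.Q x‖]

theorem norm_sub_Q_le (x : F) : ‖x - L.Q x‖ ≤ ‖x‖ := by
  refine le_of_sq_le_sq ?_ (norm_nonneg _)
  linarith [L.norm_sq_eq x, sq_nonneg ‖L.Q x‖]

theorem N_add (z v : F) : L.N (z + v) = L.N z + L.Q v := by
  rw [N, N, ← map_add]; congr 1; abel

theorem N_sub (z v : F) : L.N (z - v) = L.N z - L.Q v := by
  rw [N, N, ← map_sub]; congr 1; abel

theorem N_sub_N (z w : F) : L.N z - L.N w = L.Q (z - w) := by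
  rw [N, N, ← map_sub, sub_sub_sub_cancel_right]

theorem Q_N (z : F) : L.Q (L.N z) = L.N z := L.Q_Q _

theorem N_sub_N_self (z : F) : L.N (z - L.N z) = 0 := by rw [N_sub, Q_N, sub_self]

variable {L L'} {s x y : ℝ} {t w : F}

theorem norm_Q_sub_Q_le (h : ‖L.Q - L'.Q‖ ≤ s) (v : F) : ‖L.Q v - L'.Q v‖ ≤ s * ‖v‖ :=
  (L.Q - L'.Q).le_of_opNorm_le h v

theorem norm_Q_sub_Q_Q_le (h : ‖L.Q - L'.Q‖ ≤ s) (v : F) :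
    ‖L.Q v - L'.Q (L.Q v)‖ ≤ s * ‖L.Q v‖ := by
  simpa only [L.Q_Q] using norm_Q_sub_Q_le h (L.Q v)

/-- By Pythagoras, a normal component contributes to the norm only through its square. -/
theorem norm_le_of_tangent_close (hx : 0 ≤ x) (hy : 0 ≤ y)
    (ht : ‖(w - L.Q w) - (t - L.Q t)‖ ≤ x * ‖t‖) (hw : ‖L.Q w‖ ^ 2 ≤ y * ‖t‖ ^ 2) :
    ‖w‖ ≤ (1 + x + y) * ‖t‖ := by
  refine le_of_sq_le_sq ?_ (by positivity)
  have htan : ‖w - L.Q w‖ ≤ (1 + x) * ‖t‖ := by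
    linarith [norm_sub_norm_le (w - L.Q w) (t - L.Q t), L.norm_sub_Q_le t]
  calc ‖w‖ ^ 2 = ‖L.Q w‖ ^ 2 + ‖w - L.Q w‖ ^ 2 := L.norm_sq_eq w
    _ ≤ y * ‖t‖ ^ 2 + ((1 + x) * ‖t‖) ^ 2 := by gcongr
    _ ≤ y * ‖t‖ ^ 2 + ((1 + x) * ‖t‖) ^ 2 + (y + 2 * x * y + y ^ 2) * ‖t‖ ^ 2 :=
      le_add_of_nonneg_right (by positivity)
    _ = ((1 + x + y) * ‖t‖) ^ 2 := by ring

theorem le_norm_of_tangent_close (hy : 0 ≤ y) (hy1 : y ≤ 1)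
    (ht : ‖(w - L.Q w) - (t - L.Q t)‖ ≤ x * ‖t‖) (hn : ‖L.Q t‖ ^ 2 ≤ y * ‖t‖ ^ 2) :
    (1 - x - y) * ‖t‖ ≤ ‖w‖ := by
  have htan : (1 - y) * ‖t‖ ≤ ‖t - L.Q t‖ := by
    refine le_of_sq_le_sq ?_ (norm_nonneg _)
    have : 0 ≤ y * (1 - y) * ‖t‖ ^ 2 := mul_nonneg (mul_nonneg hy (sub_nonneg.2 hy1)) (sq_nonneg _)
    linarith [L.norm_sq_eq t]
  rw [norm_sub_rev] at ht
  have := norm_sub_norm_le (t - L.Q t) (w - L.Q w)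
  linarith [L.norm_sub_Q_le w]

end NormalPlane
end Planes

section Average

variable {F : Type*} [NormedAddCommGroup F] [InnerProductSpace ℝ F] {ι : Type*} {J : Finset ι}

/-- The coefficients of a convex combination of the family indexed by `J`. -/
structure IsWeight (J : Finset ι) (α : ι → ℝ) : Prop where
  nonneg : ∀ j ∈ J, 0 ≤ α j
  sum_eq_one : ∑ j ∈ J, α j = 1

theorem norm_sum_smul_le {γ : ι → ℝ} {x : ι → F} {B : ℝ} (h : ∀ j ∈ J, γ j ≠ 0 → ‖x j‖ ≤ B) :
    ‖∑ j ∈ J, γ j • x j‖ ≤ (∑ j ∈ J, |γ j|) * B := by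
  rw [Finset.sum_mul]
  refine norm_sum_le_of_le _ fun j hj => ?_
  rw [norm_smul, Real.norm_eq_abs]
  by_cases hg : γ j = 0
  · simp [hg]
  · exact mul_le_mul_of_nonneg_left (h j hj hg) (abs_nonneg _)

variable {α β : ι → ℝ} {L : ι → NormalPlane F} {L' : NormalPlane F} {s B : ℝ}

theorem IsWeight.norm_sum_le (hα : IsWeight J α) {x : ι → F}
    (h : ∀ j ∈ J, α j ≠ 0 → ‖x j‖ ≤ B) : ‖∑ j ∈ J, α j • x j‖ ≤ B := by
  have := norm_sum_smul_le h
  rwa [Finset.sum_congr rfl fun j hj => abs_of_nonneg (hα.nonneg j hj), hα.sum_eq_one,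
    one_mul] at this

theorem IsWeight.sub_sum (hα : IsWeight J α) (x : ι → F) (y : F) :
    y - ∑ j ∈ J, α j • x j = ∑ j ∈ J, α j • (y - x j) := by
  simp only [smul_sub, Finset.sum_sub_distrib]
  rw [← Finset.sum_smul, hα.sum_eq_one, one_smul]

theorem IsWeight.sum_sub_smul (hα : IsWeight J α) (hβ : IsWeight J β) (x : ι → F) (y : F) :
    ∑ j ∈ J, (α j - β j) • (x j - y) = ∑ j ∈ J, (α j - β j) • x j := by
  simp only [smul_sub, Finset.sum_sub_distrib]
  rw [← Finset.sum_smul, Finset.sum_sub_distrib, hα.sum_eq_one, hβ.sum_eq_one, sub_self, zero_smul,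
    sub_zero]

/-- The weighted average of the normal projections of the planes `L j`. -/
def avgQ (J : Finset ι) (L : ι → NormalPlane F) (α : ι → ℝ) : F →L[ℝ] F :=
  ∑ j ∈ J, α j • (L j).Q

/-- The weighted average of the displacements of `x` from the planes `L j`. -/
def avgN (J : Finset ι) (L : ι → NormalPlane F) (α : ι → ℝ) (x : F) : F :=
  ∑ j ∈ J, α j • (L j).N x

theorem avgQ_apply (v : F) : avgQ J L α v = ∑ j ∈ J, α j • (L j).Q v := by simp [avgQ]

theorem avgN_sub_avgN (x y : F) : avgN J L α x - avgN J L α y = avgQ J L α (x - y) := by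
  simp only [avgN, avgQ_apply, ← NormalPlane.N_sub_N, smul_sub, Finset.sum_sub_distrib]

theorem sub_avgN_sub_sub_avgN (a b : F) : a - avgN J L α a - (b - avgN J L β b) =
    a - b - avgQ J L α (a - b) - ∑ j ∈ J, (α j - β j) • (L j).N b := by
  have hsum : ∑ j ∈ J, (α j - β j) • (L j).N b = avgN J L α b - avgN J L β b := by
    simp only [avgN, sub_smul, Finset.sum_sub_distrib]
  rw [hsum, ← avgN_sub_avgN]
  abel

namespace IsWeight

theorem norm_avgQ_le (hα : IsWeight J α) (v : F) : ‖avgQ J L α v‖ ≤ ‖v‖ := by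
  rw [avgQ_apply]
  exact hα.norm_sum_le fun j _ _ => (L j).norm_Q_le v

theorem norm_avgQ_sub_le (hα : IsWeight J α) (hs : 0 ≤ s)
    (h : ∀ j ∈ J, α j ≠ 0 → ‖(L j).Q - L'.Q‖ ≤ s) (v : F) :
    ‖avgQ J L α v - L'.Q (avgQ J L α v)‖ ≤ s * ‖v‖ := by
  rw [avgQ_apply, map_sum, ← Finset.sum_sub_distrib]
  simp_rw [map_smul, ← smul_sub]
  exact hα.norm_sum_le fun j hj hne => (NormalPlane.norm_Q_sub_Q_Q_le (h j hj hne) v).trans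
    (mul_le_mul_of_nonneg_left ((L j).norm_Q_le v) hs)

theorem norm_sub_avgQ_le (hα : IsWeight J α) {v : F} (h : ∀ j ∈ J, α j ≠ 0 → ‖v - (L j).Q v‖ ≤ B) :
    ‖v - avgQ J L α v‖ ≤ B := by
  rw [avgQ_apply, hα.sub_sum]
  exact hα.norm_sum_le h

/-- The loss is quadratic in `B` because `⟪Q v, v⟫ = ‖v‖² - ‖v - Q v‖²` for a projection. -/
theorem le_norm_avgQ (hα : IsWeight J α) {v : F}
    (h : ∀ j ∈ J, α j ≠ 0 → ‖v - (L j).Q v‖ ≤ B * ‖v‖) :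
    (1 - B ^ 2) * ‖v‖ ≤ ‖avgQ J L α v‖ := by
  rcases (norm_nonneg v).eq_or_lt with h0 | h0
  · simp [← h0]
  have hinner : (1 - B ^ 2) * ‖v‖ ^ 2 ≤ inner ℝ (avgQ J L α v) v := by
    have hsum := Finset.sum_mul J α ((1 - B ^ 2) * ‖v‖ ^ 2)
    rw [hα.sum_eq_one, one_mul] at hsum
    rw [avgQ_apply, sum_inner, hsum]
    refine Finset.sum_le_sum fun j hj => ?_
    rw [real_inner_smul_left]
    by_cases hne : α j = 0
    · simp [hne]
    refine mul_le_mul_of_nonneg_left ?_ (hα.nonneg j hj)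
    rw [NormalPlane.inner_Q_self]
    have hsq := pow_le_pow_left₀ (norm_nonneg _) (h j hj hne) 2
    rw [mul_pow] at hsq
    linarith [(L j).norm_sq_eq v]
  refine le_of_mul_le_mul_right ?_ h0
  calc (1 - B ^ 2) * ‖v‖ * ‖v‖ = (1 - B ^ 2) * ‖v‖ ^ 2 := by ring
    _ ≤ ‖avgQ J L α v‖ * ‖v‖ := hinner.trans (real_inner_le_norm _ _)

theorem norm_N_sub_avgN_le (hα : IsWeight J α) {x : F}
    (h : ∀ j ∈ J, α j ≠ 0 → ‖(L j).N x - L'.N x‖ ≤ B) : ‖L'.N (x - avgN J L α x)‖ ≤ B := by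
  rw [NormalPlane.N_sub, ← L'.Q_N x, ← map_sub, avgN, hα.sub_sum]
  refine (L'.norm_Q_le _).trans (hα.norm_sum_le fun j hj hne => ?_)
  rw [norm_sub_rev]
  exact h j hj hne

end IsWeight
end Average

/-! ### Distortion of one step -/

section Step

variable {F : Type*} [NormedAddCommGroup F] [InnerProductSpace ℝ F] {ι : Type*} {J : Finset ι}

/-- The data of one step of the construction at two points `a`, `b`, at scale `r`: convex weights
`α`, `β` and planes `L j`, all of them `s'`-close to a reference plane `L₁`, which is itself
`s`-close to the previous reference plane `L₀`. -/
structure PairData (J : Finset ι) (L : ι → NormalPlane F) (α β : ι → ℝ) (L₀ L₁ : NormalPlane F)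
    (s s' Λ r : ℝ) (a b : F) : Prop where
  weight_left : IsWeight J α
  weight_right : IsWeight J β
  r_pos : 0 < r
  s_nonneg : 0 ≤ s
  s'_nonneg : 0 ≤ s'
  one_le_Λ : 1 ≤ Λ
  s_small : 1000 * Λ ^ 2 * s ≤ 1
  s'_small : 1000 * Λ ^ 2 * s' ≤ 1
  norm_Q_sub_le : ∀ j ∈ J, (α j ≠ 0 ∨ β j ≠ 0) → ‖(L j).Q - L₁.Q‖ ≤ s'
  norm_N_left_sub_le : ∀ j ∈ J, (α j ≠ 0 ∨ β j ≠ 0) → ‖(L j).N a - L₁.N a‖ ≤ s' * r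
  norm_N_right_sub_le : ∀ j ∈ J, (α j ≠ 0 ∨ β j ≠ 0) → ‖(L j).N b - L₁.N b‖ ≤ s' * r
  norm_ref_Q_sub_le : ‖L₁.Q - L₀.Q‖ ≤ s
  norm_ref_N_sub_le : ‖L₁.N b - L₀.N b‖ ≤ 10 * s * r
  sum_abs_sub_mul_le : (∑ j ∈ J, |α j - β j|) * r ≤ Λ * ‖a - b‖

variable {L : ι → NormalPlane F} {α β : ι → ℝ} {L₀ L₁ : NormalPlane F}
  {s s' Λ r : ℝ} {a b ν ν' : F}

theorem sq_le_mul_sq {x B T C : ℝ} (hx₀ : 0 ≤ x) (hx : x ≤ B * T) (hB : B ^ 2 ≤ C) :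
    x ^ 2 ≤ C * T ^ 2 :=
  (pow_le_pow_left₀ hx₀ hx 2).trans <| by
    rw [mul_pow]
    exact mul_le_mul_of_nonneg_right hB (sq_nonneg T)

namespace PairData

variable (h : PairData J L α β L₀ L₁ s s' Λ r a b)
include h

theorem Λ_mul_s_le : Λ * s ≤ 1 / 1000 := by
  have : Λ * s ≤ Λ ^ 2 * s :=
    mul_le_mul_of_nonneg_right (le_self_pow₀ h.one_le_Λ two_ne_zero) h.s_nonneg
  linarith [h.s_small]

theorem Λ_mul_s'_le : Λ * s' ≤ 1 / 1000 := by
  have : Λ * s' ≤ Λ ^ 2 * s' :=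
    mul_le_mul_of_nonneg_right (le_self_pow₀ h.one_le_Λ two_ne_zero) h.s'_nonneg
  linarith [h.s'_small]

theorem s_le : s ≤ 1 / 1000 :=
  (le_mul_of_one_le_left h.s_nonneg h.one_le_Λ).trans h.Λ_mul_s_le

theorem s'_le : s' ≤ 1 / 1000 :=
  (le_mul_of_one_le_left h.s'_nonneg h.one_le_Λ).trans h.Λ_mul_s'_le

theorem Λ_sq_mul_le : Λ ^ 2 * (s ^ 2 + s' ^ 2) ≤ 1 / 100000 := by
  have hs : (Λ * s) ^ 2 ≤ (1 / 1000) ^ 2 :=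
    pow_le_pow_left₀ (mul_nonneg (zero_le_one.trans h.one_le_Λ) h.s_nonneg) h.Λ_mul_s_le 2
  have hs' : (Λ * s') ^ 2 ≤ (1 / 1000) ^ 2 :=
    pow_le_pow_left₀ (mul_nonneg (zero_le_one.trans h.one_le_Λ) h.s'_nonneg) h.Λ_mul_s'_le 2
  linarith

theorem norm_sum_sub_smul_le {x : ι → F} {B : ℝ} (hB : 0 ≤ B)
    (hx : ∀ j ∈ J, (α j ≠ 0 ∨ β j ≠ 0) → ‖x j‖ ≤ B * r) :
    ‖∑ j ∈ J, (α j - β j) • x j‖ ≤ Λ * ‖a - b‖ * B := by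
  have hx' : ∀ j ∈ J, α j - β j ≠ 0 → ‖x j‖ ≤ B * r := fun j hj hne => hx j hj <| by
    by_contra! hc
    simp [hc.1, hc.2] at hne
  calc ‖∑ j ∈ J, (α j - β j) • x j‖ ≤ (∑ j ∈ J, |α j - β j|) * (B * r) := norm_sum_smul_le hx'
    _ = (∑ j ∈ J, |α j - β j|) * r * B := by ring
    _ ≤ Λ * ‖a - b‖ * B := mul_le_mul_of_nonneg_right h.sum_abs_sub_mul_le hB

theorem norm_Q_sub_avgN_sub_le :
    ‖L₁.Q (a - avgN J L α a - (b - avgN J L β b))‖ ≤ (1 + Λ) * s' * ‖a - b‖ := by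
  have havg : ‖L₁.Q (a - b - avgQ J L α (a - b))‖ ≤ s' * ‖a - b‖ := by
    rw [avgQ_apply, h.weight_left.sub_sum, map_sum]
    simp_rw [map_smul, map_sub (L₁.Q) (a - b)]
    refine h.weight_left.norm_sum_le fun j hj hne => ?_
    rw [← L₁.Q_Q (a - b), ← map_sub]
    refine (L₁.norm_Q_le _).trans ?_
    rw [norm_sub_rev (L₁.Q (a - b))]
    exact NormalPlane.norm_Q_sub_Q_le (h.norm_Q_sub_le j hj (Or.inl hne)) _
  have hdiff := (L₁.norm_Q_le _).trans (h.norm_sum_sub_smul_le h.s'_nonneg h.norm_N_right_sub_le)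
  rw [h.weight_left.sum_sub_smul h.weight_right] at hdiff
  rw [sub_avgN_sub_sub_avgN, map_sub]
  linarith [norm_sub_le (L₁.Q (a - b - avgQ J L α (a - b)))
    (L₁.Q (∑ j ∈ J, (α j - β j) • (L j).N b))]

theorem norm_Q_apply_sub_le (ht : ‖L₀.Q (a - b)‖ ≤ 2 * (1 + Λ) * s * ‖a - b‖) :
    ‖L₁.Q (a - b)‖ ≤ (3 + 2 * Λ) * s * ‖a - b‖ := by
  have href := NormalPlane.norm_Q_sub_Q_le h.norm_ref_Q_sub_le (a - b)
  linarith [norm_le_norm_add_norm_sub' (L₁.Q (a - b)) (L₀.Q (a - b))]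

theorem norm_N_right_le (hb : ‖L₀.N b‖ ≤ 10 * s * r) : ‖L₁.N b‖ ≤ 20 * s * r := by
  linarith [norm_le_norm_add_norm_sub' (L₁.N b) (L₀.N b), h.norm_ref_N_sub_le]

theorem norm_avgQ_sub_Q_avgQ_le (ht : ‖L₀.Q (a - b)‖ ≤ 2 * (1 + Λ) * s * ‖a - b‖) :
    ‖avgQ J L α (a - b) - L₁.Q (avgQ J L α (a - b))‖ ≤
      s' * ((3 + 2 * Λ) * s + s') * ‖a - b‖ := by
  rw [avgQ_apply, map_sum, ← Finset.sum_sub_distrib]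
  simp_rw [map_smul, ← smul_sub]
  refine h.weight_left.norm_sum_le fun j hj hne => ?_
  have hj' := h.norm_Q_sub_le j hj (Or.inl hne)
  rw [mul_assoc]
  refine (NormalPlane.norm_Q_sub_Q_Q_le hj' _).trans (mul_le_mul_of_nonneg_left ?_ h.s'_nonneg)
  linarith [norm_le_norm_add_norm_sub' ((L j).Q (a - b)) (L₁.Q (a - b)),
    NormalPlane.norm_Q_sub_Q_le hj' (a - b), h.norm_Q_apply_sub_le ht]

theorem norm_sum_sub_smul_N_sub_Q_le (hb : ‖L₀.N b‖ ≤ 10 * s * r) :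
    ‖∑ j ∈ J, (α j - β j) • (L j).N b - L₁.Q (∑ j ∈ J, (α j - β j) • (L j).N b)‖ ≤
      Λ * ‖a - b‖ * (s' * (20 * s + s')) := by
  have hs := h.s_nonneg
  have hs' := h.s'_nonneg
  rw [map_sum, ← Finset.sum_sub_distrib]
  simp_rw [map_smul, ← smul_sub]
  refine h.norm_sum_sub_smul_le (by positivity) fun j hj hne => ?_
  have hN := NormalPlane.norm_Q_sub_Q_Q_le (h.norm_Q_sub_le j hj hne) (b - (L j).c)
  rw [mul_assoc]
  refine hN.trans (mul_le_mul_of_nonneg_left ?_ hs')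
  change ‖(L j).N b‖ ≤ _
  linarith [norm_le_norm_add_norm_sub' ((L j).N b) (L₁.N b), h.norm_N_right_sub_le j hj hne,
    h.norm_N_right_le hb]

theorem norm_tangent_sub_le (ht : ‖L₀.Q (a - b)‖ ≤ 2 * (1 + Λ) * s * ‖a - b‖)
    (hb : ‖L₀.N b‖ ≤ 10 * s * r) :
    ‖(a - avgN J L α a - (b - avgN J L β b) - L₁.Q (a - avgN J L α a - (b - avgN J L β b))) -
      (a - b - L₁.Q (a - b))‖ ≤ 15 * (Λ ^ 2 * (s ^ 2 + s' ^ 2)) * ‖a - b‖ := by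
  obtain ⟨hs, hs', hΛ⟩ := h.s_nonneg, h.s'_nonneg, h.one_le_Λ
  set X := avgQ J L α (a - b)
  set Y := ∑ j ∈ J, (α j - β j) • (L j).N b
  have hXb : ‖X - L₁.Q X‖ ≤ s' * ((3 + 2 * Λ) * s + s') * ‖a - b‖ := h.norm_avgQ_sub_Q_avgQ_le ht
  have hYb : ‖Y - L₁.Q Y‖ ≤ Λ * ‖a - b‖ * (s' * (20 * s + s')) :=
    h.norm_sum_sub_smul_N_sub_Q_le hb
  have hcoef : s' * ((3 + 2 * Λ) * s + s') + Λ * (s' * (20 * s + s')) ≤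
      15 * (Λ ^ 2 * (s ^ 2 + s' ^ 2)) := by
    have hss : 2 * (s * s') ≤ s ^ 2 + s' ^ 2 := by linarith [two_mul_le_add_sq s s']
    calc s' * ((3 + 2 * Λ) * s + s') + Λ * (s' * (20 * s + s'))
        ≤ s' * ((3 * Λ + 2 * Λ) * s + Λ * s') + Λ * (s' * (20 * s + s')) := by
          gcongr
          · linarith
          · exact le_mul_of_one_le_left hs' hΛ
      _ = Λ * (25 * (s * s') + 2 * s' ^ 2) := by ring
      _ ≤ Λ ^ 2 * (15 * (s ^ 2 + s' ^ 2)) := by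
          gcongr
          · exact le_self_pow₀ hΛ two_ne_zero
          · linarith [sq_nonneg s, sq_nonneg s']
      _ = 15 * (Λ ^ 2 * (s ^ 2 + s' ^ 2)) := by ring
  rw [sub_avgN_sub_sub_avgN, map_sub L₁.Q, map_sub L₁.Q (a - b),
    show a - b - X - Y - (L₁.Q (a - b) - L₁.Q X - L₁.Q Y) - (a - b - L₁.Q (a - b)) =
      -(X - L₁.Q X) - (Y - L₁.Q Y) by abel]
  calc _ ≤ ‖X - L₁.Q X‖ + ‖Y - L₁.Q Y‖ := (norm_sub_le _ _).trans_eq (by rw [norm_neg])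
    _ ≤ (s' * ((3 + 2 * Λ) * s + s') + Λ * (s' * (20 * s + s'))) * ‖a - b‖ := by linarith
    _ ≤ _ := mul_le_mul_of_nonneg_right hcoef (norm_nonneg _)

/-- The error is quadratic in the angles `s`, `s'`: this is why only square sums matter. -/
theorem norm_step_sub_step_le (ht : ‖L₀.Q (a - b)‖ ≤ 2 * (1 + Λ) * s * ‖a - b‖)
    (hb : ‖L₀.N b‖ ≤ 10 * s * r) :
    ‖a - avgN J L α a - (b - avgN J L β b)‖ ≤ (1 + 40 * (Λ ^ 2 * (s ^ 2 + s' ^ 2))) * ‖a - b‖ := by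
  have hcoef : ((1 + Λ) * s') ^ 2 ≤ 25 * (Λ ^ 2 * (s ^ 2 + s' ^ 2)) := by
    have := h.s'_nonneg
    have := h.one_le_Λ
    have : ((1 + Λ) * s') ^ 2 ≤ ((Λ + Λ) * s') ^ 2 := by gcongr
    linarith [sq_nonneg (Λ * s), sq_nonneg (Λ * s')]
  have hκ : 0 ≤ Λ ^ 2 * (s ^ 2 + s' ^ 2) := by positivity
  have := NormalPlane.norm_le_of_tangent_close (by linarith) (by linarith)
    (h.norm_tangent_sub_le ht hb) (sq_le_mul_sq (norm_nonneg _) h.norm_Q_sub_avgN_sub_le hcoef)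
  linarith

theorem le_norm_step_sub_step (ht : ‖L₀.Q (a - b)‖ ≤ 2 * (1 + Λ) * s * ‖a - b‖)
    (hb : ‖L₀.N b‖ ≤ 10 * s * r) :
    (1 - 40 * (Λ ^ 2 * (s ^ 2 + s' ^ 2))) * ‖a - b‖ ≤ ‖a - avgN J L α a - (b - avgN J L β b)‖ := by
  have hcoef : ((3 + 2 * Λ) * s) ^ 2 ≤ 25 * (Λ ^ 2 * (s ^ 2 + s' ^ 2)) := by
    have := h.s_nonneg
    have := h.one_le_Λ
    have : ((3 + 2 * Λ) * s) ^ 2 ≤ ((3 * Λ + 2 * Λ) * s) ^ 2 := by gcongr; linarith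
    linarith [sq_nonneg (Λ * s), sq_nonneg (Λ * s')]
  have hκ : 0 ≤ Λ ^ 2 * (s ^ 2 + s' ^ 2) := by positivity
  have := NormalPlane.le_norm_of_tangent_close (by linarith) (by linarith [h.Λ_sq_mul_le])
    (h.norm_tangent_sub_le ht hb) (sq_le_mul_sq (norm_nonneg _) (h.norm_Q_apply_sub_le ht) hcoef)
  linarith

theorem norm_sub_Q_le {v : F} {B : ℝ} (hv : ‖v - L₀.Q v‖ ≤ B) {j : ι} (hj : j ∈ J)
    (hne : α j ≠ 0 ∨ β j ≠ 0) : ‖v - (L j).Q v‖ ≤ B + (s + s') * ‖v‖ := by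
  have h₁ := NormalPlane.norm_Q_sub_Q_le (h.norm_Q_sub_le j hj hne) v
  have h₂ := NormalPlane.norm_Q_sub_Q_le h.norm_ref_Q_sub_le v
  rw [norm_sub_rev] at h₁ h₂
  calc ‖v - (L j).Q v‖ = ‖(v - L₀.Q v) + (L₀.Q v - L₁.Q v) + (L₁.Q v - (L j).Q v)‖ := by
        congr 1; abel
    _ ≤ _ := norm_add₃_le.trans (by linarith)

theorem le_norm_avgQ {γ : ι → ℝ} (hγ : IsWeight J γ) (hne : ∀ j, γ j ≠ 0 → α j ≠ 0 ∨ β j ≠ 0)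
    (hv : ‖ν - L₀.Q ν‖ ≤ 2 * s * ‖ν‖) : 9 / 10 * ‖ν‖ ≤ ‖avgQ J L γ ν‖ := by
  have hsub := hγ.norm_sub_avgQ_le fun j hj hj' => h.norm_sub_Q_le hv hj (hne j hj')
  have hsmall : (3 * s + s') * ‖ν‖ ≤ 1 / 10 * ‖ν‖ :=
    mul_le_mul_of_nonneg_right (by linarith [h.s_le, h.s'_le]) (norm_nonneg ν)
  linarith [norm_sub_norm_le ν (avgQ J L γ ν)]

theorem norm_avgQ_sub_Q_le {γ : ι → ℝ} (hγ : IsWeight J γ)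
    (hne : ∀ j, γ j ≠ 0 → α j ≠ 0 ∨ β j ≠ 0) (hv : ‖ν - L₀.Q ν‖ ≤ 2 * s * ‖ν‖) :
    ‖avgQ J L γ ν - L₁.Q (avgQ J L γ ν)‖ ≤ 2 * s' * ‖avgQ J L γ ν‖ := by
  refine (hγ.norm_avgQ_sub_le h.s'_nonneg
    (fun j hj hj' => h.norm_Q_sub_le j hj (hne j hj')) ν).trans ?_
  rw [mul_comm 2, mul_assoc]
  exact mul_le_mul_of_nonneg_left (by linarith [h.le_norm_avgQ hγ hne hv, norm_nonneg ν])
    h.s'_nonneg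

theorem avgQ_sub_avgQ (ν ν' : F) : avgQ J L α ν - avgQ J L β ν' =
    avgQ J L α (ν - ν') + ∑ j ∈ J, (α j - β j) • ((L j).Q ν' - L₁.Q ν') := by
  rw [h.weight_left.sum_sub_smul h.weight_right]
  simp only [map_sub, avgQ_apply, sub_smul, Finset.sum_sub_distrib]
  abel

theorem norm_sum_sub_smul_Q_sub_le (ν' : F) : ‖∑ j ∈ J, (α j - β j) • ((L j).Q ν' - L₁.Q ν')‖ ≤
    Λ * s' * (‖a - b‖ * ‖ν'‖ / r) := by
  have hr := h.r_pos
  have hs' := h.s'_nonneg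
  have := h.norm_sum_sub_smul_le (x := fun j => (L j).Q ν' - L₁.Q ν') (B := s' * ‖ν'‖ / r)
    (by positivity) fun j hj hne => by
      rw [div_mul_cancel₀ _ hr.ne']
      exact NormalPlane.norm_Q_sub_Q_le (h.norm_Q_sub_le j hj hne) _
  refine this.trans_eq (by ring)

theorem norm_sum_sub_smul_Q_sub_le_tenth (ν' : F) :
    ‖∑ j ∈ J, (α j - β j) • ((L j).Q ν' - L₁.Q ν')‖ ≤ 1 / 10 * (‖a - b‖ * ‖ν'‖ / r) := by
  have hr := h.r_pos
  refine (h.norm_sum_sub_smul_Q_sub_le ν').trans ?_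
  gcongr
  linarith [h.Λ_mul_s'_le]

end PairData

/-- The estimates propagated through the scales for two states `(a, ν)`, `(b, ν')` with reference
plane `L`: base points near the plane, offsets nearly normal to it, and differences comparable,
with constant `A`, to the initial differences `T₀` of the base points and `H₀` of the offsets. -/
structure PairInv (L : NormalPlane F) (s r Λ A T₀ H₀ : ℝ) (a b ν ν' : F) : Prop where
  t_normal : ‖L.Q (a - b)‖ ≤ 2 * (1 + Λ) * s * ‖a - b‖
  a_normal : ‖L.N a‖ ≤ 10 * s * r
  b_normal : ‖L.N b‖ ≤ 10 * s * r
  ν_tan : ‖ν - L.Q ν‖ ≤ 2 * s * ‖ν‖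
  ν'_tan : ‖ν' - L.Q ν'‖ ≤ 2 * s * ‖ν'‖
  η_tan : ‖ν - ν' - L.Q (ν - ν')‖ ≤ 2 * (1 + Λ) * s * (‖ν - ν'‖ + ‖a - b‖ * ‖ν'‖ / r)
  t_le : ‖a - b‖ ≤ A * T₀
  le_t : T₀ ≤ A * ‖a - b‖
  η_le : ‖ν - ν'‖ ≤ H₀ + ‖a - b‖ * ‖ν'‖ / r
  le_η : H₀ ≤ A * (‖ν - ν'‖ + ‖a - b‖ * ‖ν'‖ / r)

namespace PairInv

variable {A T₀ H₀ : ℝ} (inv : PairInv L₀ s r Λ A T₀ H₀ a b ν ν')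
  (h : PairData J L α β L₀ L₁ s s' Λ r a b)
include inv h

theorem le_norm_step_sub_step :
    9 / 10 * ‖a - b‖ ≤ ‖a - avgN J L α a - (b - avgN J L β b)‖ :=
  (mul_le_mul_of_nonneg_right (by linarith [h.Λ_sq_mul_le]) (norm_nonneg _)).trans
    (h.le_norm_step_sub_step inv.t_normal inv.b_normal)

/-- The term coupling offsets to base points grows geometrically, which absorbs its errors. -/
theorem eight_mul_le : 8 * (‖a - b‖ * ‖ν'‖ / r) ≤
    ‖a - avgN J L α a - (b - avgN J L β b)‖ * ‖avgQ J L β ν'‖ / (r / 10) := by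
  have hr := h.r_pos
  have hν' := h.le_norm_avgQ h.weight_right (fun _ => Or.inr) inv.ν'_tan
  have hprod : 9 / 10 * ‖a - b‖ * (9 / 10 * ‖ν'‖) ≤ _ :=
    mul_le_mul (inv.le_norm_step_sub_step h) hν' (by positivity) (norm_nonneg _)
  rw [le_div_iff₀ (by positivity), show 8 * (‖a - b‖ * ‖ν'‖ / r) * (r / 10) =
    8 / 10 * (‖a - b‖ * ‖ν'‖) by field_simp]
  linarith [mul_nonneg (norm_nonneg (a - b)) (norm_nonneg ν')]

theorem le_norm_avgQ_sub : (1 - 200 * (Λ ^ 2 * (s ^ 2 + s' ^ 2))) * ‖ν - ν'‖ -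
    1 / 10 * (‖a - b‖ * ‖ν'‖ / r) ≤ ‖avgQ J L α (ν - ν')‖ := by
  obtain ⟨hs, hs', hΛ, hr⟩ := h.s_nonneg, h.s'_nonneg, h.one_le_Λ, h.r_pos
  set q := ‖a - b‖ * ‖ν'‖ / r
  set η := ν - ν'
  have hη : ∀ j ∈ J, α j ≠ 0 → ‖η - (L j).Q η‖ ≤ 4 * Λ * s * (‖η‖ + q) + (s + s') * ‖η‖ :=
    fun j hj hne => (h.norm_sub_Q_le inv.η_tan hj (Or.inl hne)).trans <| by
      have : 2 * (1 + Λ) * s ≤ 4 * Λ * s := mul_le_mul_of_nonneg_right (by linarith) hs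
      gcongr
  rcases le_total q ‖η‖ with hle | hle
  · have hB : ∀ j ∈ J, α j ≠ 0 → ‖η - (L j).Q η‖ ≤ 10 * Λ * (s + s') * ‖η‖ := fun j hj hne => by
      have hq : 4 * Λ * s * (‖η‖ + q) ≤ 4 * Λ * s * (2 * ‖η‖) := by gcongr; linarith
      have hone : (s + s') * ‖η‖ ≤ Λ * ((s + s') * ‖η‖) :=
        le_mul_of_one_le_left (by positivity) hΛ
      have : 0 ≤ Λ * s * ‖η‖ := by positivity
      have : 0 ≤ Λ * s' * ‖η‖ := by positivity
      linarith [hη j hj hne]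
    have hsq : (10 * Λ * (s + s')) ^ 2 * ‖η‖ ≤ 200 * (Λ ^ 2 * (s ^ 2 + s' ^ 2)) * ‖η‖ := by
      gcongr
      linarith [sq_nonneg (Λ * (s - s'))]
    have hq : 0 ≤ q := by positivity
    linarith [h.weight_left.le_norm_avgQ hB]
  · have hB : ∀ j ∈ J, α j ≠ 0 → ‖η - (L j).Q η‖ ≤ 1 / 10 * q := fun j hj hne => by
      have hq : 4 * Λ * s * (‖η‖ + q) + (s + s') * ‖η‖ ≤ 4 * Λ * s * (2 * q) + (s + s') * q := by
        gcongr
        linarith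
      have : (8 * (Λ * s) + (s + s')) * q ≤ 1 / 10 * q := by
        gcongr
        linarith [h.Λ_mul_s_le, h.s_le, h.s'_le]
      linarith [hη j hj hne]
    have : 0 ≤ Λ ^ 2 * (s ^ 2 + s' ^ 2) * ‖η‖ := by positivity
    linarith [h.weight_left.norm_sub_avgQ_le hB, norm_sub_norm_le η (avgQ J L α η)]

theorem le_norm_avgQ_sub_avgQ : (1 - 200 * (Λ ^ 2 * (s ^ 2 + s' ^ 2))) * ‖ν - ν'‖ -
    2 / 10 * (‖a - b‖ * ‖ν'‖ / r) ≤ ‖avgQ J L α ν - avgQ J L β ν'‖ := by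
  rw [h.avgQ_sub_avgQ]
  linarith [norm_le_add_norm_add (avgQ J L α (ν - ν'))
    (∑ j ∈ J, (α j - β j) • ((L j).Q ν' - L₁.Q ν')), inv.le_norm_avgQ_sub h,
    h.norm_sum_sub_smul_Q_sub_le_tenth ν']

theorem η_tan_step : ‖avgQ J L α ν - avgQ J L β ν' - L₁.Q (avgQ J L α ν - avgQ J L β ν')‖ ≤
    2 * (1 + Λ) * s' * (‖avgQ J L α ν - avgQ J L β ν'‖ +
      ‖a - avgN J L α a - (b - avgN J L β b)‖ * ‖avgQ J L β ν'‖ / (r / 10)) := by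
  obtain ⟨hs', hΛ, hr⟩ := h.s'_nonneg, h.one_le_Λ, h.r_pos
  have hq := inv.eight_mul_le h
  have hη := inv.le_norm_avgQ_sub_avgQ h
  have hκ : 200 * (Λ ^ 2 * (s ^ 2 + s' ^ 2)) * ‖ν - ν'‖ ≤ 1 / 2 * ‖ν - ν'‖ :=
    mul_le_mul_of_nonneg_right (by linarith [h.Λ_sq_mul_le]) (norm_nonneg _)
  have hq0 : 0 ≤ ‖a - b‖ * ‖ν'‖ / r := by positivity
  have hX := h.weight_left.norm_avgQ_sub_le hs'
    (fun j hj hne => h.norm_Q_sub_le j hj (Or.inl hne)) (ν - ν')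
  have hY := (L₁.norm_sub_Q_le _).trans (h.norm_sum_sub_smul_Q_sub_le ν')
  set q := ‖a - b‖ * ‖ν'‖ / r
  set q' := ‖a - avgN J L α a - (b - avgN J L β b)‖ * ‖avgQ J L β ν'‖ / (r / 10)
  set η' := avgQ J L α ν - avgQ J L β ν'
  set X := avgQ J L α (ν - ν')
  set Y := ∑ j ∈ J, (α j - β j) • ((L j).Q ν' - L₁.Q ν')
  have hXY : η' = X + Y := h.avgQ_sub_avgQ ν ν'
  have hΛq : Λ * (8 * q) ≤ Λ * q' := by gcongr
  have hΛη : 0 ≤ Λ * ‖η'‖ := by positivity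
  have hΛq0 : 0 ≤ Λ * q := by positivity
  calc ‖η' - L₁.Q η'‖ = ‖(X - L₁.Q X) + (Y - L₁.Q Y)‖ := by rw [hXY, map_add]; congr 1; abel
    _ ≤ s' * ‖ν - ν'‖ + Λ * s' * q := (norm_add_le _ _).trans (add_le_add hX hY)
    _ = s' * (‖ν - ν'‖ + Λ * q) := by ring
    _ ≤ s' * (2 * (1 + Λ) * (‖η'‖ + q')) := mul_le_mul_of_nonneg_left (by linarith) hs'
    _ = 2 * (1 + Λ) * s' * (‖η'‖ + q') := by ring

theorem norm_sub_le_mul_step : ‖a - b‖ ≤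
    (1 + 400 * (Λ ^ 2 * (s ^ 2 + s' ^ 2))) * ‖a - avgN J L α a - (b - avgN J L β b)‖ := by
  have hw := h.le_norm_step_sub_step inv.t_normal inv.b_normal
  have hκ := h.Λ_sq_mul_le
  have hκ0 : 0 ≤ Λ ^ 2 * (s ^ 2 + s' ^ 2) := by positivity
  set κ := Λ ^ 2 * (s ^ 2 + s' ^ 2)
  have hone : 1 ≤ (1 + 400 * κ) * (1 - 40 * κ) := by
    linarith [mul_nonneg hκ0 (sub_nonneg.2 hκ)]
  calc ‖a - b‖ ≤ (1 + 400 * κ) * (1 - 40 * κ) * ‖a - b‖ :=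
        le_mul_of_one_le_left (norm_nonneg _) hone
    _ = (1 + 400 * κ) * ((1 - 40 * κ) * ‖a - b‖) := by ring
    _ ≤ _ := by gcongr

theorem norm_sub_add_le_mul_step : ‖ν - ν'‖ + ‖a - b‖ * ‖ν'‖ / r ≤
    (1 + 400 * (Λ ^ 2 * (s ^ 2 + s' ^ 2))) * (‖avgQ J L α ν - avgQ J L β ν'‖ +
      ‖a - avgN J L α a - (b - avgN J L β b)‖ * ‖avgQ J L β ν'‖ / (r / 10)) := by
  have hη := inv.le_norm_avgQ_sub_avgQ h
  have hq := inv.eight_mul_le h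
  have hκ := h.Λ_sq_mul_le
  have hκ0 : 0 ≤ Λ ^ 2 * (s ^ 2 + s' ^ 2) := by positivity
  have hr := h.r_pos
  have hq0 : 0 ≤ ‖a - b‖ * ‖ν'‖ / r := by positivity
  set κ := Λ ^ 2 * (s ^ 2 + s' ^ 2)
  set q := ‖a - b‖ * ‖ν'‖ / r
  have hone : 1 ≤ (1 + 400 * κ) * (1 - 200 * κ) := by
    linarith [mul_nonneg hκ0 (sub_nonneg.2 hκ)]
  calc ‖ν - ν'‖ + q ≤ (1 + 400 * κ) * (1 - 200 * κ) * ‖ν - ν'‖ + (1 + 400 * κ) * q := by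
        gcongr
        · exact le_mul_of_one_le_left (norm_nonneg _) hone
        · exact le_mul_of_one_le_left hq0 (by linarith)
    _ = (1 + 400 * κ) * ((1 - 200 * κ) * ‖ν - ν'‖ + q) := by ring
    _ ≤ _ := mul_le_mul_of_nonneg_left (by linarith) (by positivity)

theorem t_normal_step : ‖L₁.Q (a - avgN J L α a - (b - avgN J L β b))‖ ≤
    2 * (1 + Λ) * s' * ‖a - avgN J L α a - (b - avgN J L β b)‖ := by
  have hs' : 0 ≤ (1 + Λ) * s' := mul_nonneg (by linarith [h.one_le_Λ]) h.s'_nonneg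
  have := mul_le_mul_of_nonneg_left (inv.le_norm_step_sub_step h) hs'
  have : 0 ≤ (1 + Λ) * s' * ‖a - b‖ := by positivity
  linarith [h.norm_Q_sub_avgN_sub_le]

theorem step (hA : 0 ≤ A) :
    PairInv L₁ s' (r / 10) Λ (A * (1 + 400 * Λ ^ 2 * (s ^ 2 + s' ^ 2))) T₀ H₀
      (a - avgN J L α a) (b - avgN J L β b) (avgQ J L α ν) (avgQ J L β ν') := by
  rw [mul_assoc 400]
  exact
  { t_normal := inv.t_normal_step h
    a_normal := (h.weight_left.norm_N_sub_avgN_le fun j hj hne =>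
      h.norm_N_left_sub_le j hj (Or.inl hne)).trans_eq (by ring)
    b_normal := (h.weight_right.norm_N_sub_avgN_le fun j hj hne =>
      h.norm_N_right_sub_le j hj (Or.inr hne)).trans_eq (by ring)
    ν_tan := h.norm_avgQ_sub_Q_le h.weight_left (fun _ => Or.inl) inv.ν_tan
    ν'_tan := h.norm_avgQ_sub_Q_le h.weight_right (fun _ => Or.inr) inv.ν'_tan
    η_tan := inv.η_tan_step h
    t_le := calc
      _ ≤ (1 + 400 * (Λ ^ 2 * (s ^ 2 + s' ^ 2))) * ‖a - b‖ :=
        (h.norm_step_sub_step_le inv.t_normal inv.b_normal).trans (by gcongr; norm_num)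
      _ ≤ (1 + 400 * (Λ ^ 2 * (s ^ 2 + s' ^ 2))) * (A * T₀) := by gcongr; exact inv.t_le
      _ = _ := by ring
    le_t := (inv.le_t.trans (mul_le_mul_of_nonneg_left (inv.norm_sub_le_mul_step h) hA)).trans_eq
      (by ring)
    η_le := by
      rw [h.avgQ_sub_avgQ]
      have hr := h.r_pos
      have hq0 : 0 ≤ ‖a - b‖ * ‖ν'‖ / r := by positivity
      linarith [norm_add_le (avgQ J L α (ν - ν')) (∑ j ∈ J, (α j - β j) • ((L j).Q ν' - L₁.Q ν')),
        h.weight_left.norm_avgQ_le (L := L) (ν - ν'), inv.η_le, inv.eight_mul_le h,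
        h.norm_sum_sub_smul_Q_sub_le_tenth ν']
    le_η := (inv.le_η.trans
      (mul_le_mul_of_nonneg_left (inv.norm_sub_add_le_mul_step h) hA)).trans_eq (by ring) }

end PairInv
end Step

/-! ### Partitions of unity -/

section Net

/-- A finite maximal `r`-separated subset of a compact set. -/
theorem exists_separated_net {F : Type*} [MetricSpace F] {K : Set F} (hK : IsCompact K) {r : ℝ}
    (hr : 0 < r) : ∃ X : Finset F, (∀ x ∈ X, x ∈ K) ∧
      (∀ x ∈ X, ∀ y ∈ X, x ≠ y → r ≤ dist x y) ∧ ∀ p ∈ K, ∃ x ∈ X, dist p x ≤ r := by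
  lift r to ℝ≥0 using hr.le
  have hr' : r / 2 ≠ 0 := (half_pos (NNReal.coe_pos.1 hr)).ne'
  have hfin : packingNumber r K ≠ ⊤ := by
    obtain ⟨N, -, hN, hc⟩ := exists_finite_isCover_of_isCompact hr' hK
    have hle := packingNumber_two_mul_le_externalCoveringNumber (r / 2) K
    rw [mul_div_cancel₀ _ two_ne_zero] at hle
    exact ((hle.trans hc.externalCoveringNumber_le_encard).trans_lt hN.encard_lt_top).ne
  have hX : (maximalSeparatedSet r K).Finite := by
    rw [← Set.encard_lt_top_iff, encard_maximalSeparatedSet hfin]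
    exact hfin.lt_top
  refine ⟨hX.toFinset, fun x hx => maximalSeparatedSet_subset (hX.mem_toFinset.1 hx),
    fun x hx y hy hne => ?_, fun p hp => ?_⟩
  · have := isSeparated_maximalSeparatedSet (hX.mem_toFinset.1 hx) (hX.mem_toFinset.1 hy) hne
    simp only [edist_nndist, ENNReal.coe_lt_coe] at this
    exact_mod_cast this.le
  · obtain ⟨x, hx, hpx⟩ := isCover_maximalSeparatedSet hfin hp
    refine ⟨x, hX.mem_toFinset.2 hx, ?_⟩
    simp only [mem_ofPred_eq, edist_nndist, ENNReal.coe_le_coe] at hpx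
    exact_mod_cast hpx

theorem sum_abs_div_sub_div_le {ι : Type*} {X : Finset ι} {w w' : ι → ℝ} (hw' : ∀ j, 0 ≤ w' j)
    (h : 1 / 2 ≤ ∑ j ∈ X, w j) (h' : 1 / 2 ≤ ∑ j ∈ X, w' j) :
    ∑ j ∈ X, |w j / (∑ i ∈ X, w i) - w' j / (∑ i ∈ X, w' i)| ≤ 4 * ∑ j ∈ X, |w j - w' j| := by
  set S := ∑ j ∈ X, w j
  set S' := ∑ j ∈ X, w' j
  have hS : 0 < S := by linarith
  have hS' : 0 < S' := by linarith
  have hdiff : |S' - S| ≤ ∑ j ∈ X, |w j - w' j| := by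
    rw [← Finset.sum_sub_distrib]
    exact (Finset.abs_sum_le_sum_abs _ _).trans_eq
      (Finset.sum_congr rfl fun j _ => abs_sub_comm _ _)
  have hterm (j : ι) : |w j / S - w' j / S'| ≤ |w j - w' j| / S + w' j * (|S' - S| / (S * S')) := by
    rw [show w j / S - w' j / S' = (w j - w' j) / S + w' j * ((S' - S) / (S * S')) by
      field_simp; ring]
    refine (abs_add_le _ _).trans_eq ?_
    rw [abs_div, abs_of_pos hS, abs_mul, abs_of_nonneg (hw' j), abs_div,
      abs_of_pos (mul_pos hS hS')]
  calc ∑ j ∈ X, |w j / S - w' j / S'|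
      ≤ ∑ j ∈ X, (|w j - w' j| / S + w' j * (|S' - S| / (S * S'))) :=
        Finset.sum_le_sum fun j _ => hterm j
    _ = (∑ j ∈ X, |w j - w' j|) / S + S' * (|S' - S| / (S * S')) := by
        rw [Finset.sum_add_distrib, ← Finset.sum_div, ← Finset.sum_mul]
    _ = (∑ j ∈ X, |w j - w' j| + |S' - S|) / S := by field_simp
    _ ≤ (∑ j ∈ X, |w j - w' j| + ∑ j ∈ X, |w j - w' j|) / (1 / 2) := by gcongr
    _ = 4 * ∑ j ∈ X, |w j - w' j| := by ring

variable {F : Type*} [NormedAddCommGroup F]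

/-- A bump of height `2` at `j`, supported in the ball of radius `2 * r` about `j`. -/
def tent (r : ℝ) (a j : F) : ℝ := max 0 (2 - dist a j / r)

section Tent

variable {r : ℝ} {K : Set F} {X : Finset F} {a b : F}

theorem tent_nonneg (r : ℝ) (a j : F) : 0 ≤ tent r a j := le_max_left _ _

theorem dist_lt_of_tent_ne_zero (hr : 0 < r) {j : F} (h : tent r a j ≠ 0) : dist a j < 2 * r := by
  by_contra! hc
  exact h (max_eq_left (sub_nonpos.2 ((le_div_iff₀ hr).2 hc)))

theorem abs_tent_sub_tent_le (hr : 0 < r) (a b j : F) :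
    |tent r a j - tent r b j| ≤ dist a b / r := by
  refine (abs_max_sub_max_le_max 0 _ 0 _).trans ?_
  rw [sub_sub_sub_cancel_left, ← sub_div, sub_self, abs_zero, abs_div, abs_of_pos hr, dist_comm a b]
  exact max_le (by positivity) (div_le_div_of_nonneg_right (abs_dist_sub_le _ _ _) hr.le)

theorem half_le_sum_tent (hr : 0 < r) (hX : ∀ p ∈ K, ∃ x ∈ X, dist p x ≤ r)
    (ha : ∃ p ∈ K, dist a p ≤ r / 2) : 1 / 2 ≤ ∑ j ∈ X, tent r a j := by
  obtain ⟨p, hp, hap⟩ := ha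
  obtain ⟨x, hx, hpx⟩ := hX p hp
  have hax : dist a x / r ≤ 3 / 2 := by
    rw [div_le_iff₀ hr]
    linarith [dist_triangle a p x]
  calc 1 / 2 ≤ 2 - dist a x / r := by linarith
    _ ≤ tent r a x := le_max_right _ _
    _ ≤ ∑ j ∈ X, tent r a j := Finset.single_le_sum (fun j _ => tent_nonneg r a j) hx

variable [NormedSpace ℝ F] [FiniteDimensional ℝ F]

open Classical in
theorem card_filter_dist_lt_le (hr : 0 < r) (hX : ∀ x ∈ X, ∀ y ∈ X, x ≠ y → r ≤ dist x y) (a : F) :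
    (X.filter fun x => dist a x < 2 * r).card ≤ 5 ^ Module.finrank ℝ F := by
  have hinj : Function.Injective fun x : F => r⁻¹ • (x - a) := fun x y h => by
    simpa [hr.ne'] using h
  rw [← Finset.card_image_of_injective _ hinj]
  refine Besicovitch.card_le_of_separated _ ?_ ?_
  · simp only [Finset.mem_image, Finset.mem_filter]
    rintro _ ⟨x, ⟨-, hx⟩, rfl⟩
    rw [norm_smul, norm_inv, Real.norm_of_nonneg hr.le, ← dist_eq_norm, dist_comm,
      inv_mul_le_iff₀ hr]
    linarith
  · simp only [Finset.mem_image, Finset.mem_filter]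
    rintro _ ⟨x, ⟨hx, -⟩, rfl⟩ _ ⟨y, ⟨hy, -⟩, rfl⟩ hne
    rw [← smul_sub, sub_sub_sub_cancel_right, norm_smul, norm_inv, Real.norm_of_nonneg hr.le,
      ← dist_eq_norm, le_inv_mul_iff₀ hr, mul_one]
    exact hX x hx y hy fun h => hne (by rw [h])

theorem sum_abs_tent_sub_tent_le (hr : 0 < r) (hX : ∀ x ∈ X, ∀ y ∈ X, x ≠ y → r ≤ dist x y)
    (a b : F) : ∑ j ∈ X, |tent r a j - tent r b j| ≤
      2 * 5 ^ Module.finrank ℝ F * (dist a b / r) := by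
  classical
  set Y := (X.filter fun x => dist a x < 2 * r) ∪ (X.filter fun x => dist b x < 2 * r)
  have hYX : Y ⊆ X := Finset.union_subset (Finset.filter_subset _ _) (Finset.filter_subset _ _)
  have hcard : Y.card ≤ 2 * 5 ^ Module.finrank ℝ F := by
    rw [two_mul]
    exact (Finset.card_union_le _ _).trans
      (add_le_add (card_filter_dist_lt_le hr hX a) (card_filter_dist_lt_le hr hX b))
  have hzero : ∀ j ∈ X, j ∉ Y → |tent r a j - tent r b j| = 0 := fun j hj hjY => by
    have ha : tent r a j = 0 := by
      by_contra h
      exact hjY (Finset.mem_union_left _ (Finset.mem_filter.2 ⟨hj, dist_lt_of_tent_ne_zero hr h⟩))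
    have hb : tent r b j = 0 := by
      by_contra h
      exact hjY (Finset.mem_union_right _ (Finset.mem_filter.2 ⟨hj, dist_lt_of_tent_ne_zero hr h⟩))
    rw [ha, hb, sub_zero, abs_zero]
  rw [← Finset.sum_subset hYX hzero]
  calc ∑ j ∈ Y, |tent r a j - tent r b j| ≤ Y.card • (dist a b / r) :=
        Finset.sum_le_card_nsmul _ _ _ fun j _ => abs_tent_sub_tent_le hr a b j
    _ ≤ 2 * 5 ^ Module.finrank ℝ F * (dist a b / r) := by
        rw [nsmul_eq_mul]
        gcongr
        exact_mod_cast hcard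

end Tent

/-- A partition of unity near `K` at scale `r`, indexed by points of `K`, with Lipschitz constant
`Λ / r`. -/
structure PartUnity (K : Set F) (r Λ : ℝ) (X : Finset F) (θ : F → F → ℝ) : Prop where
  mem : ∀ j ∈ X, j ∈ K
  nonneg : ∀ a j, 0 ≤ θ a j
  sum_eq_one : ∀ a, (∃ p ∈ K, dist a p ≤ r / 2) → ∑ j ∈ X, θ a j = 1
  dist_lt : ∀ a j, θ a j ≠ 0 → dist a j < 2 * r
  lip : ∀ a b, (∃ p ∈ K, dist a p ≤ r / 2) → (∃ p ∈ K, dist b p ≤ r / 2) →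
    (∑ j ∈ X, |θ a j - θ b j|) * r ≤ Λ * dist a b

theorem exists_partUnity [NormedSpace ℝ F] [FiniteDimensional ℝ F] {K : Set F} (hK : IsCompact K)
    {r : ℝ} (hr : 0 < r) : ∃ X θ, PartUnity K r (8 * 5 ^ Module.finrank ℝ F) X θ := by
  obtain ⟨X, hXK, hsep, hcov⟩ := exists_separated_net hK hr
  refine ⟨X, fun a j => tent r a j / ∑ i ∈ X, tent r a i, ⟨hXK, fun a j => ?_, fun a ha => ?_,
    fun a j h => ?_, fun a b ha hb => ?_⟩⟩
  · exact div_nonneg (tent_nonneg r a j) (Finset.sum_nonneg fun i _ => tent_nonneg r a i)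
  · rw [← Finset.sum_div, div_self]
    linarith [half_le_sum_tent hr hcov ha]
  · exact dist_lt_of_tent_ne_zero hr (left_ne_zero_of_mul h)
  · calc _ ≤ 4 * (2 * 5 ^ Module.finrank ℝ F * (dist a b / r)) * r := by
          refine mul_le_mul_of_nonneg_right ((sum_abs_div_sub_div_le (tent_nonneg r b)
            (half_le_sum_tent hr hcov ha) (half_le_sum_tent hr hcov hb)).trans ?_) hr.le
          exact mul_le_mul_of_nonneg_left (sum_abs_tent_sub_tent_le hr hsep a b) zero_le_four
      _ = 8 * 5 ^ Module.finrank ℝ F * dist a b := by field_simp; ring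

end Net

/-- The `k`-th scale `10⁻ᵏ`. -/
def rad (k : ℕ) : ℝ := (1 / 10) ^ k

theorem rad_zero : rad 0 = 1 := pow_zero _

theorem rad_succ (k : ℕ) : rad (k + 1) = rad k / 10 := by rw [rad, pow_succ, rad]; ring

theorem rad_pos (k : ℕ) : 0 < rad k := by unfold rad; positivity

theorem rad_antitone : Antitone rad := fun _ _ h =>
  pow_le_pow_of_le_one (by norm_num) (by norm_num) h

theorem rad_le_one (k : ℕ) : rad k ≤ 1 := pow_le_one₀ (by norm_num) (by norm_num)

theorem tendsto_rad : Tendsto rad atTop (𝓝 0) :=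
  tendsto_pow_atTop_nhds_zero_of_lt_one (by norm_num) (by norm_num)

section PlaneData

variable {F : Type*} [NormedAddCommGroup F] [InnerProductSpace ℝ F]

variable (F) in
/-- A choice of planes `plane k x` at all scales `rad k` and centers `x`, with bounds `b k x` on
the angles between neighbouring planes and with a partition of unity `θ k`, indexed by `X k`, at
each scale. -/
structure PlaneData where
  plane : ℕ → F → NormalPlane F
  b : ℕ → F → ℝ
  X : ℕ → Finset F
  θ : ℕ → F → F → ℝ

namespace PlaneData

/-- The averaged displacement of `a` from the planes of generation `k`. -/
def avgN (D : PlaneData F) (k : ℕ) (a : F) : F := _root_.avgN (D.X k) (D.plane k) (D.θ k a) a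

/-- The averaged normal projection of generation `k` at `a`. -/
def avgQ (D : PlaneData F) (k : ℕ) (a : F) : F →L[ℝ] F :=
  _root_.avgQ (D.X k) (D.plane k) (D.θ k a)

/-- `ν` is almost normal to the planes of generation `k` near `a`. -/
def IsNormalAt (D : PlaneData F) (E : Set F) (R δ : ℝ) (k : ℕ) (a ν : F) : Prop :=
  ∀ x ∈ E ∩ closedBall 0 R, dist x a ≤ 3 * rad k → ‖ν - (D.plane k x).Q ν‖ ≤ 2 * δ * ‖ν‖

end PlaneData

/-- The planes of `D` approximate `E` well near the points of `E ∩ closedBall 0 R`, and vary slowly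
with the point and the scale. -/
structure PlaneSys (D : PlaneData F) (E : Set F) (R δ : ℝ) : Prop where
  near_plane : ∀ k, ∀ x ∈ E ∩ closedBall 0 R, ∀ y ∈ E, dist y x ≤ 5 * rad k →
    ‖(D.plane k x).N y‖ ≤ δ * rad k
  near_set : ∀ k, ∀ x ∈ E ∩ closedBall 0 R, ∀ z, (D.plane k x).N z = 0 → dist z x ≤ 5 * rad k →
    infDist z E ≤ δ * rad k
  b_nonneg : ∀ k p, 0 ≤ D.b k p
  b_le : ∀ k p, D.b k p ≤ δ
  norm_Q_sub_le : ∀ k l, l = k ∨ l = k + 1 → ∀ x ∈ E ∩ closedBall 0 R, ∀ p ∈ E ∩ closedBall 0 R,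
    dist x p ≤ 5 * rad k → ‖(D.plane l x).Q - (D.plane k p).Q‖ ≤ D.b k p
  norm_N_sub_le : ∀ k l, l = k ∨ l = k + 1 → ∀ x ∈ E ∩ closedBall 0 R, ∀ p ∈ E ∩ closedBall 0 R,
    dist x p ≤ 5 * rad k → ∀ z, dist z p ≤ 5 * rad k →
      ‖(D.plane l x).N z - (D.plane k p).N z‖ ≤ D.b k p * rad k

/-- `a` is close to `E` at generation `k`. -/
def IsNear (E : Set F) (δ : ℝ) (k : ℕ) (a : F) : Prop := ∃ p ∈ E, dist a p ≤ 30 * δ * rad k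

/-- The standing assumptions for the construction. -/
structure Setup (D : PlaneData F) (E : Set F) (R δ Λ : ℝ) : Prop extends PlaneSys D E R δ where
  closed : IsClosed E
  part : ∀ k, PartUnity (E ∩ closedBall 0 R) (rad k) Λ (D.X k) (D.θ k)
  δ_nonneg : 0 ≤ δ
  one_le_Λ : 1 ≤ Λ
  small : 10000 * Λ ^ 2 * δ ≤ 1

namespace Setup

variable {D : PlaneData F} {E : Set F} {R δ Λ : ℝ} (h : Setup D E R δ Λ)
include h

theorem δ_le : 10000 * δ ≤ 1 := by
  have : δ ≤ Λ ^ 2 * δ := le_mul_of_one_le_left h.δ_nonneg (one_le_pow₀ h.one_le_Λ)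
  linarith [h.small]

theorem δ_rad_le (k : ℕ) : 10000 * (δ * rad k) ≤ rad k := by
  rw [← mul_assoc]
  exact mul_le_of_le_one_left (rad_pos k).le h.δ_le

theorem δ_rad_nonneg (k : ℕ) : 0 ≤ δ * rad k := mul_nonneg h.δ_nonneg (rad_pos k).le

variable {k : ℕ} {a p x ν : F}

theorem norm_le_of_dist (ha : ‖a‖ ≤ R - 1) (hp : dist a p ≤ 30 * δ * rad k) : ‖p‖ ≤ R := by
  have hap : ‖p‖ ≤ ‖a‖ + dist a p := by
    rw [dist_eq_norm]
    exact norm_le_norm_add_norm_sub a p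
  linarith [h.δ_rad_le k, rad_le_one k]

theorem exists_mem_of_isNear (ha : ‖a‖ ≤ R - 1) (hN : IsNear E δ k a) :
    ∃ p ∈ E ∩ closedBall 0 R, dist a p ≤ 30 * δ * rad k := by
  obtain ⟨p, hp, hap⟩ := hN
  exact ⟨p, ⟨hp, mem_closedBall_zero_iff.2 (h.norm_le_of_dist ha hap)⟩, hap⟩

theorem exists_mem_dist_le (ha : ‖a‖ ≤ R - 1) (hN : IsNear E δ k a) :
    ∃ p ∈ E ∩ closedBall 0 R, dist a p ≤ rad k / 2 := by
  obtain ⟨p, hp, hap⟩ := h.exists_mem_of_isNear ha hN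
  exact ⟨p, hp, by linarith [h.δ_rad_le k, rad_pos k]⟩

theorem isWeight (ha : ‖a‖ ≤ R - 1) (hN : IsNear E δ k a) : IsWeight (D.X k) (D.θ k a) where
  nonneg j _ := (h.part k).nonneg a j
  sum_eq_one := (h.part k).sum_eq_one a (h.exists_mem_dist_le ha hN)

theorem dist_center_le {j : F} (hne : D.θ k a j ≠ 0) {t : ℝ} (hp : dist a p ≤ t) :
    dist j p ≤ 2 * rad k + t := by
  linarith [(h.part k).dist_lt a j hne, dist_triangle_left j p a]

theorem norm_N_le (hN : IsNear E δ k a) (hx : x ∈ E ∩ closedBall 0 R) (hd : dist a x ≤ 4 * rad k) :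
    ‖(D.plane k x).N a‖ ≤ 31 * (δ * rad k) := by
  obtain ⟨p, hp, hap⟩ := hN
  have hpx := h.near_plane k x hx p hp (by
    linarith [dist_triangle_left p x a, rad_pos k, h.δ_rad_le k])
  have hQ := (D.plane k x).norm_Q_le (a - p)
  rw [← NormalPlane.N_sub_N, ← dist_eq_norm a] at hQ
  linarith [norm_le_norm_add_norm_sub' ((D.plane k x).N a) ((D.plane k x).N p)]

theorem norm_avgN_le (ha : ‖a‖ ≤ R - 1) (hN : IsNear E δ k a) :
    ‖D.avgN k a‖ ≤ 31 * (δ * rad k) :=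
  (h.isWeight ha hN).norm_sum_le fun j hj hne => h.norm_N_le hN ((h.part k).mem j hj)
    (by linarith [(h.part k).dist_lt a j hne, rad_pos k])

theorem norm_N_sub_avgN_le (ha : ‖a‖ ≤ R - 1) (hp : p ∈ E ∩ closedBall 0 R)
    (hap : dist a p ≤ 30 * δ * rad k) : ‖(D.plane k p).N (a - D.avgN k a)‖ ≤ δ * rad k := by
  refine (h.isWeight ha ⟨p, hp.1, hap⟩).norm_N_sub_avgN_le fun j hj hne => ?_
  have := h.δ_rad_le k
  have := rad_pos k
  refine (h.norm_N_sub_le k k (Or.inl rfl) j ((h.part k).mem j hj) p hp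
    (by linarith [h.dist_center_le hne hap]) a (by linarith)).trans ?_
  exact mul_le_mul_of_nonneg_right (h.b_le k p) (rad_pos k).le

theorem isNear_succ [FiniteDimensional ℝ F] (ha : ‖a‖ ≤ R - 1) (hN : IsNear E δ k a) :
    IsNear E δ (k + 1) (a - D.avgN k a) := by
  obtain ⟨p, hp, hap⟩ := h.exists_mem_of_isNear ha hN
  set w := a - D.avgN k a with hw
  have hproj : dist (w - (D.plane k p).N w) w ≤ δ * rad k := by
    rw [dist_eq_norm, sub_sub_cancel_left, norm_neg]
    exact h.norm_N_sub_avgN_le ha hp hap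
  have hwa : dist w a ≤ 31 * (δ * rad k) := by
    rw [dist_eq_norm, hw, sub_sub_cancel_left, norm_neg]
    exact h.norm_avgN_le ha hN
  have hnear := h.near_set k p hp _ ((D.plane k p).N_sub_N_self w) (by
    linarith [dist_triangle4 (w - (D.plane k p).N w) w a p, h.δ_rad_le k, rad_pos k])
  obtain ⟨q, hq, hqd⟩ := h.closed.exists_infDist_eq_dist ⟨p, hp.1⟩ (w - (D.plane k p).N w)
  refine ⟨q, hq, ?_⟩
  rw [rad_succ]
  linarith [dist_triangle_left w q (w - (D.plane k p).N w), h.δ_rad_nonneg k]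

theorem norm_sub_avgQ_le (ha : ‖a‖ ≤ R - 1) (hN : IsNear E δ k a)
    (hν : D.IsNormalAt E R δ k a ν) : ‖ν - D.avgQ k a ν‖ ≤ 2 * δ * ‖ν‖ :=
  (h.isWeight ha hN).norm_sub_avgQ_le fun j hj hne => hν j ((h.part k).mem j hj) <| by
    rw [dist_comm]
    linarith [(h.part k).dist_lt a j hne, rad_pos k]

theorem isNormalAt_succ (ha : ‖a‖ ≤ R - 1) (hN : IsNear E δ k a)
    (hν : D.IsNormalAt E R δ k a ν) :
    D.IsNormalAt E R δ (k + 1) (a - D.avgN k a) (D.avgQ k a ν) := by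
  intro x hx hd
  have hax : dist a x ≤ rad k := by
    have hda : dist (a - D.avgN k a) a = ‖D.avgN k a‖ := by
      rw [dist_eq_norm, sub_sub_cancel_left, norm_neg]
    rw [rad_succ] at hd
    rw [dist_comm]
    linarith [dist_triangle x (a - D.avgN k a) a, h.norm_avgN_le ha hN, h.δ_rad_le k, rad_pos k]
  have hangle := (h.isWeight ha hN).norm_avgQ_sub_le (L := D.plane k) (L' := D.plane (k + 1) x)
    h.δ_nonneg (fun j hj hne => by
      rw [norm_sub_rev]
      refine (h.norm_Q_sub_le k (k + 1) (Or.inr rfl) x hx j ((h.part k).mem j hj) ?_).trans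
        (h.b_le k j)
      rw [dist_comm]
      linarith [h.dist_center_le hne hax, rad_pos k]) ν
  have hhalf : 2 * δ * ‖ν‖ ≤ 1 / 2 * ‖ν‖ :=
    mul_le_mul_of_nonneg_right (by linarith [h.δ_le]) (norm_nonneg ν)
  have hν2 : ‖ν‖ ≤ 2 * ‖D.avgQ k a ν‖ := by
    linarith [norm_le_norm_add_norm_sub' ν (D.avgQ k a ν), h.norm_sub_avgQ_le ha hN hν]
  calc _ ≤ δ * ‖ν‖ := hangle
    _ ≤ δ * (2 * ‖D.avgQ k a ν‖) := mul_le_mul_of_nonneg_left hν2 h.δ_nonneg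
    _ = _ := by ring

end Setup
end PlaneData

/-! ### Orbits of the construction -/

section Orbit

variable {F : Type*} [NormedAddCommGroup F]

/-- The height of a state (base point, offset). The step of generation `k` only moves states of
height less than `2 * rad k`. -/
def height (z : F × F) : ℝ := max 0 (‖z.1‖ - 3) + ‖z.2‖

/-- The cut-off of generation `k`. -/
def cutoff (k : ℕ) (z : F × F) : ℝ := max 0 (min 1 (2 - height z / rad k))

theorem norm_snd_le_height (z : F × F) : ‖z.2‖ ≤ height z :=
  le_add_of_nonneg_left (le_max_left _ _)

theorem norm_fst_le_height (z : F × F) : ‖z.1‖ ≤ 3 + height z := by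
  unfold height
  linarith [le_max_right 0 (‖z.1‖ - 3), norm_nonneg z.2]

theorem norm_fst_le_of_height {k : ℕ} {z : F × F} (h : height z < 5 / 2 * rad k) :
    ‖z.1‖ ≤ 7 - 1 := by
  linarith [norm_fst_le_height z, rad_le_one k]

theorem height_eq_norm_snd {z : F × F} (h : ‖z.1‖ ≤ 3) : height z = ‖z.2‖ := by
  rw [height, max_eq_left (by linarith), zero_add]

theorem abs_height_sub_le (z w : F × F) : |height z - height w| ≤ ‖z.1 - w.1‖ + ‖z.2 - w.2‖ := by
  have hfst : |max 0 (‖z.1‖ - 3) - max 0 (‖w.1‖ - 3)| ≤ ‖z.1 - w.1‖ := by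
    refine (abs_max_sub_max_le_max 0 _ 0 _).trans ?_
    rw [sub_self, abs_zero, sub_sub_sub_cancel_right]
    exact max_le (norm_nonneg _) (abs_norm_sub_norm_le _ _)
  rw [height, height, add_sub_add_comm]
  exact (abs_add_le _ _).trans (add_le_add hfst (abs_norm_sub_norm_le _ _))

theorem cutoff_nonneg (k : ℕ) (z : F × F) : 0 ≤ cutoff k z := le_max_left _ _

theorem cutoff_le_one (k : ℕ) (z : F × F) : cutoff k z ≤ 1 :=
  max_le zero_le_one (min_le_left _ _)

theorem cutoff_eq_one {k : ℕ} {z : F × F} (h : height z ≤ rad k) : cutoff k z = 1 := by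
  have : height z / rad k ≤ 1 := (div_le_one (rad_pos k)).2 h
  rw [cutoff, min_eq_left (by linarith), max_eq_right zero_le_one]

theorem cutoff_eq_zero {k : ℕ} {z : F × F} (h : 2 * rad k ≤ height z) : cutoff k z = 0 := by
  have : 2 ≤ height z / rad k := (le_div_iff₀ (rad_pos k)).2 h
  rw [cutoff, max_eq_left ((min_le_right _ _).trans (by linarith))]

/-- The separation of two states. -/
def sep (z w : F × F) : ℝ := ‖z.1 - w.1‖ + ‖z.2 - w.2‖

theorem sep_nonneg (z w : F × F) : 0 ≤ sep z w := add_nonneg (norm_nonneg _) (norm_nonneg _)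

theorem norm_fst_sub_le_sep (z w : F × F) : ‖z.1 - w.1‖ ≤ sep z w :=
  le_add_of_nonneg_right (norm_nonneg _)

theorem abs_cutoff_sub_le (k : ℕ) (z w : F × F) :
    |cutoff k z - cutoff k w| * rad k ≤ sep z w := by
  have hr := rad_pos k
  refine le_trans ?_ (abs_height_sub_le z w)
  rw [← le_div_iff₀ hr]
  refine (abs_max_sub_max_le_max 0 _ 0 _).trans ?_
  rw [sub_self, abs_zero]
  refine max_le (by positivity) ((abs_min_sub_min_le_max 1 _ 1 _).trans ?_)
  rw [sub_self, abs_zero, sub_sub_sub_cancel_left, ← sub_div, abs_div, abs_of_pos hr,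
    abs_sub_comm]
  exact max_le (by positivity) le_rfl

/-- The point represented by a state. -/
def point (z : F × F) : F := z.1 + z.2

theorem norm_point_sub_point_le (z w : F × F) : ‖point z - point w‖ ≤ sep z w := by
  rw [point, point, add_sub_add_comm]
  exact norm_add_le _ _

variable [InnerProductSpace ℝ F]

namespace PlaneData

variable (D : PlaneData F)

/-- The step of generation `k`, which brings the base point closer to the set and the offset closer
to the normal direction. -/
def step (k : ℕ) (z : F × F) : F × F :=
  (z.1 - cutoff k z • D.avgN k z.1, z.2 - cutoff k z • (z.2 - D.avgQ k z.1 z.2))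

/-- The state reached from `z` before the step of a given generation. -/
def orbit (z : F × F) : ℕ → F × F
  | 0 => z
  | k + 1 => D.step k (orbit z k)

/-- The limit of the points represented by the orbit of `z`; this is a junk value if the orbit
does not converge. -/
def limit (z : F × F) : F := limUnder atTop fun k => point (D.orbit z k)

variable {k : ℕ} {z : F × F}

theorem step_of_height_le (h : height z ≤ rad k) :
    D.step k z = (z.1 - D.avgN k z.1, D.avgQ k z.1 z.2) := by
  simp [step, cutoff_eq_one h]

theorem step_of_le_height (h : 2 * rad k ≤ height z) : D.step k z = z := by
  simp [step, cutoff_eq_zero h]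

theorem orbit_of_le_height (h : 2 * rad k ≤ height (D.orbit z k)) (m : ℕ) :
    D.orbit z (k + m) = D.orbit z k := by
  induction m with
  | zero => rfl
  | succ m ih =>
    rw [← add_assoc, orbit, ih, step_of_le_height]
    linarith [rad_antitone (Nat.le_add_right k m)]

theorem limit_eq_of_le_height (h : 2 * rad k ≤ height (D.orbit z k)) :
    D.limit z = point (D.orbit z k) := by
  refine (tendsto_const_nhds.congr' ?_).limUnder_eq
  filter_upwards [eventually_ge_atTop k] with l hl
  obtain ⟨i, rfl⟩ := Nat.exists_eq_add_of_le hl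
  rw [D.orbit_of_le_height h]

/-- The states on which the dynamics is under control: those too high to be moved from now on, and
those close to the set with an almost normal offset. -/
def Good (E : Set F) (R δ : ℝ) (k : ℕ) (z : F × F) : Prop :=
  5 / 2 * rad k ≤ height z ∨ (IsNear E δ k z.1 ∧ D.IsNormalAt E R δ k z.1 z.2)

variable {D} {E : Set F} {δ : ℝ}

theorem Good.resolve (hG : D.Good E 7 δ k z) (h : height z < 5 / 2 * rad k) :
    IsNear E δ k z.1 ∧ D.IsNormalAt E 7 δ k z.1 z.2 := hG.resolve_left (not_le.2 h)

end PlaneData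

section Geometric

variable {X : Type*} [PseudoMetricSpace X] {u : ℕ → X} {C : ℝ}

theorem dist_le_of_dist_succ_le (hC : 0 ≤ C) (hu : ∀ k, dist (u k) (u (k + 1)) ≤ C * rad k)
    {m l : ℕ} (hml : m ≤ l) : dist (u m) (u l) ≤ 10 / 9 * C * rad m := by
  have htelescope : ∀ i, dist (u m) (u (m + i)) ≤ 10 / 9 * C * (rad m - rad (m + i)) := by
    intro i
    induction i with
    | zero => simp
    | succ i ih =>
      rw [← add_assoc, rad_succ]
      linarith [hu (m + i), dist_triangle (u m) (u (m + i)) (u (m + i + 1))]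
  obtain ⟨i, rfl⟩ := Nat.exists_eq_add_of_le hml
  refine (htelescope i).trans ?_
  have := rad_pos (m + i)
  gcongr
  linarith

theorem cauchySeq_of_dist_succ_le (hu : ∀ k, dist (u k) (u (k + 1)) ≤ C * rad k) : CauchySeq u :=
  cauchySeq_of_le_geometric (1 / 10) C (by norm_num) hu

end Geometric

namespace Setup

variable {D : PlaneData F} {E : Set F} {δ Λ : ℝ} {k : ℕ} {z : F × F} (h : Setup D E 7 δ Λ)
include h

theorem norm_step_fst_sub_le (hG : D.Good E 7 δ k z) :
    ‖(D.step k z).1 - z.1‖ ≤ 31 * (δ * rad k) := by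
  have := h.δ_rad_nonneg k
  rcases lt_or_ge (height z) (5 / 2 * rad k) with hlt | hge
  · rw [PlaneData.step, sub_sub_cancel_left, norm_neg, norm_smul,
      Real.norm_of_nonneg (cutoff_nonneg k z)]
    exact (mul_le_of_le_one_left (norm_nonneg _) (cutoff_le_one k z)).trans
      (h.norm_avgN_le (norm_fst_le_of_height hlt) (hG.resolve hlt).1)
  · rw [D.step_of_le_height (by linarith [rad_pos k]), sub_self, norm_zero]
    positivity

theorem norm_step_snd_sub_le (hG : D.Good E 7 δ k z) :
    ‖(D.step k z).2 - z.2‖ ≤ 5 * (δ * rad k) := by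
  have := h.δ_rad_nonneg k
  rcases lt_or_ge (height z) (5 / 2 * rad k) with hlt | hge
  · obtain ⟨hN, hν⟩ := hG.resolve hlt
    rw [PlaneData.step, sub_sub_cancel_left, norm_neg, norm_smul,
      Real.norm_of_nonneg (cutoff_nonneg k z)]
    calc _ ≤ ‖z.2 - D.avgQ k z.1 z.2‖ := mul_le_of_le_one_left (norm_nonneg _) (cutoff_le_one k z)
      _ ≤ 2 * δ * ‖z.2‖ := h.norm_sub_avgQ_le (norm_fst_le_of_height hlt) hN hν
      _ ≤ 2 * δ * (5 / 2 * rad k) := mul_le_mul_of_nonneg_left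
        ((norm_snd_le_height z).trans hlt.le) (by linarith [h.δ_nonneg])
      _ = _ := by ring
  · rw [D.step_of_le_height (by linarith [rad_pos k]), sub_self, norm_zero]
    positivity

theorem le_height_step (hG : D.Good E 7 δ k z) :
    height z - 36 * (δ * rad k) ≤ height (D.step k z) := by
  linarith [(abs_le.1 (abs_height_sub_le (D.step k z) z)).1, h.norm_step_fst_sub_le hG,
    h.norm_step_snd_sub_le hG]

variable [FiniteDimensional ℝ F]

theorem isNear_and_isNormalAt_step (hG : D.Good E 7 δ k z) (hz : height z ≤ rad k) :
    IsNear E δ (k + 1) (D.step k z).1 ∧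
      D.IsNormalAt E 7 δ (k + 1) (D.step k z).1 (D.step k z).2 := by
  have hlt : height z < 5 / 2 * rad k := by linarith [rad_pos k]
  obtain ⟨hN, hν⟩ := hG.resolve hlt
  have ha := norm_fst_le_of_height hlt
  rw [D.step_of_height_le hz]
  exact ⟨h.isNear_succ ha hN, h.isNormalAt_succ ha hN hν⟩

theorem good_step (hG : D.Good E 7 δ k z) : D.Good E 7 δ (k + 1) (D.step k z) := by
  rcases le_or_gt (height z) (rad k) with hle | hgt
  · exact Or.inr (h.isNear_and_isNormalAt_step hG hle)
  · left
    rw [rad_succ]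
    linarith [rad_pos k, h.le_height_step hG, h.δ_rad_le k]

theorem good_orbit (hG : D.Good E 7 δ 0 z) (k : ℕ) : D.Good E 7 δ k (D.orbit z k) := by
  induction k with
  | zero => exact hG
  | succ k ih => exact h.good_step ih

theorem dist_orbit_fst_le (hG : D.Good E 7 δ 0 z) {m l : ℕ} (hml : m ≤ l) :
    dist (D.orbit z m).1 (D.orbit z l).1 ≤ 35 * (δ * rad m) := by
  have hstep (k : ℕ) : dist (D.orbit z k).1 (D.orbit z (k + 1)).1 ≤ 31 * δ * rad k := by
    rw [dist_comm, dist_eq_norm, mul_assoc]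
    exact h.norm_step_fst_sub_le (h.good_orbit hG k)
  have := dist_le_of_dist_succ_le (u := fun k => (D.orbit z k).1) (by linarith [h.δ_nonneg])
    hstep hml
  linarith [h.δ_rad_nonneg m]

theorem dist_point_orbit_succ_le (hG : D.Good E 7 δ 0 z) (k : ℕ) :
    dist (point (D.orbit z k)) (point (D.orbit z (k + 1))) ≤ 36 * δ * rad k := by
  rw [dist_comm, dist_eq_norm]
  refine (norm_point_sub_point_le _ _).trans ((add_le_add
    (h.norm_step_fst_sub_le (h.good_orbit hG k))
    (h.norm_step_snd_sub_le (h.good_orbit hG k))).trans_eq (by ring))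

theorem tendsto_limit (hG : D.Good E 7 δ 0 z) :
    Tendsto (fun k => point (D.orbit z k)) atTop (𝓝 (D.limit z)) :=
  (cauchySeq_of_dist_succ_le (h.dist_point_orbit_succ_le hG)).tendsto_limUnder

theorem dist_point_orbit_limit_le (hG : D.Good E 7 δ 0 z) (m : ℕ) :
    dist (point (D.orbit z m)) (D.limit z) ≤ 40 * (δ * rad m) := by
  refine le_of_tendsto (tendsto_const_nhds.dist (h.tendsto_limit hG)) ?_
  filter_upwards [eventually_ge_atTop m] with l hl
  refine (dist_le_of_dist_succ_le (by linarith [h.δ_nonneg]) (h.dist_point_orbit_succ_le hG)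
    hl).trans ?_
  linarith [h.δ_rad_nonneg m]

end Setup
end Orbit

/-! ### Distortion along orbits -/

section Pair

variable {F : Type*} [NormedAddCommGroup F] [InnerProductSpace ℝ F]

/-- The state with base point on the plane `L` whose sum is `z`. -/
def NormalPlane.split (L : NormalPlane F) (z : F) : F × F := (z - L.N z, L.N z)

theorem NormalPlane.point_split (L : NormalPlane F) (z : F) : point (L.split z) = z :=
  sub_add_cancel z (L.N z)

theorem NormalPlane.Q_split_fst_sub (L : NormalPlane F) (z w : F) :
    L.Q ((L.split z).1 - (L.split w).1) = 0 := by
  rw [← L.N_sub_N, split, split, L.N_sub_N_self, L.N_sub_N_self, sub_zero]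

theorem NormalPlane.Q_split_snd (L : NormalPlane F) (z : F) :
    L.Q (L.split z).2 = (L.split z).2 := L.Q_N z

/-- The plane `L₀` is compatible with the planes of generation `0`. -/
structure Initial (D : PlaneData F) (E : Set F) (δ : ℝ) (L₀ : NormalPlane F) : Prop where
  norm_Q_sub_le : ∀ x ∈ E ∩ closedBall 0 7, ‖(D.plane 0 x).Q - L₀.Q‖ ≤ δ
  norm_N_sub_le : ∀ x ∈ E ∩ closedBall 0 7, ∀ z, dist z x ≤ 5 →
    ‖(D.plane 0 x).N z - L₀.N z‖ ≤ 10 * δ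
  isNear : ∀ a, L₀.N a = 0 → ‖a‖ ≤ 6 → IsNear E δ 0 a
  norm_N_le : ∀ x ∈ E ∩ closedBall 0 1, ‖L₀.N x‖ ≤ δ

namespace PlaneData

variable (D : PlaneData F) (L₀ : NormalPlane F) (δ Λ : ℝ) (p : F)

/-- The plane with respect to which states near `p` are measured before the step of a given
generation. -/
def refPlane : ℕ → NormalPlane F
  | 0 => L₀
  | l + 1 => D.plane l p

/-- The error bound belonging to `refPlane`. -/
def refB : ℕ → ℝ
  | 0 => δ
  | l + 1 => D.b l p

/-- A bound for the distortion accumulated near `p` before the step of generation `m`. -/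
def distortion (m : ℕ) : ℝ :=
  ∏ i ∈ Finset.range m, (1 + 400 * Λ ^ 2 * (D.refB δ p i ^ 2 + D.refB δ p (i + 1) ^ 2))

/-- The orbits of `z` and `w` are both moved by full steps, and stay together, before
generation `m`. -/
def Coupled (z w : F × F) (m : ℕ) : Prop :=
  ∀ l < m, height (D.orbit z l) ≤ rad l ∧ height (D.orbit w l) ≤ rad l ∧
    sep (D.orbit z l) (D.orbit w l) ≤ rad l / 10

/-- The orbits of `z` and `w`, seen from `p`, satisfy `PairInv` at generation `m` with
distortion `A`. -/
def OrbitInv (A : ℝ) (m : ℕ) (z w : F × F) : Prop :=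
  PairInv (D.refPlane L₀ p m) (D.refB δ p m) (rad m) Λ A ‖z.1 - w.1‖ ‖z.2 - w.2‖
    (D.orbit z m).1 (D.orbit w m).1 (D.orbit z m).2 (D.orbit w m).2

variable {D L₀ δ Λ p}

theorem distortion_nonneg (m : ℕ) : 0 ≤ D.distortion δ Λ p m :=
  Finset.prod_nonneg fun i _ => by positivity

theorem sum_sq_refB_le {B : ℝ} {m : ℕ} (hδ₀ : 0 ≤ δ) (hδ : δ ≤ 1)
    (hB : ∑ i ∈ Finset.range m, D.b i p ^ 2 ≤ B) :
    ∑ i ∈ Finset.range m, (D.refB δ p i ^ 2 + D.refB δ p (i + 1) ^ 2) ≤ 1 + 2 * B := by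
  have hsucc : ∑ i ∈ Finset.range m, D.refB δ p (i + 1) ^ 2 ≤ B := hB
  have hshift : ∑ i ∈ Finset.range m, D.refB δ p i ^ 2 ≤
      ∑ i ∈ Finset.range (m + 1), D.refB δ p i ^ 2 :=
    Finset.sum_le_sum_of_subset_of_nonneg (Finset.range_mono (Nat.le_succ m))
      fun _ _ _ => sq_nonneg _
  have hzero : D.refB δ p 0 ^ 2 ≤ 1 := pow_le_one₀ hδ₀ hδ
  rw [Finset.sum_range_succ'] at hshift
  rw [Finset.sum_add_distrib]
  linarith

theorem distortion_le {B : ℝ} {m : ℕ} (hδ₀ : 0 ≤ δ) (hδ : δ ≤ 1)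
    (hB : ∑ i ∈ Finset.range m, D.b i p ^ 2 ≤ B) :
    D.distortion δ Λ p m ≤ Real.exp (400 * Λ ^ 2 * (1 + 2 * B)) := by
  calc D.distortion δ Λ p m
      ≤ ∏ i ∈ Finset.range m,
          Real.exp (400 * Λ ^ 2 * (D.refB δ p i ^ 2 + D.refB δ p (i + 1) ^ 2)) :=
        Finset.prod_le_prod (fun i _ => by positivity) fun i _ => by
          rw [add_comm]
          exact Real.add_one_le_exp _
    _ = Real.exp (400 * Λ ^ 2 * ∑ i ∈ Finset.range m,
          (D.refB δ p i ^ 2 + D.refB δ p (i + 1) ^ 2)) := by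
        rw [← Real.exp_sum, Finset.mul_sum]
    _ ≤ _ := Real.exp_le_exp.2 <|
        mul_le_mul_of_nonneg_left (sum_sq_refB_le hδ₀ hδ hB) (by positivity)

end PlaneData

namespace Setup

variable {D : PlaneData F} {E : Set F} {δ Λ : ℝ} {L₀ : NormalPlane F} {p : F}
  (h : Setup D E 7 δ Λ)
include h

theorem refB_nonneg (l : ℕ) : 0 ≤ D.refB δ p l := by
  cases l with
  | zero => exact h.δ_nonneg
  | succ l => exact h.b_nonneg l p

theorem refB_le (l : ℕ) : D.refB δ p l ≤ δ := by
  cases l with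
  | zero => exact le_rfl
  | succ l => exact h.b_le l p

theorem refB_small (l : ℕ) : 1000 * Λ ^ 2 * D.refB δ p l ≤ 1 := by
  have hsmall := h.small
  have hle : Λ ^ 2 * D.refB δ p l ≤ Λ ^ 2 * δ :=
    mul_le_mul_of_nonneg_left (h.refB_le l) (sq_nonneg Λ)
  linarith

variable (hI : Initial D E δ L₀) (hp : p ∈ E ∩ closedBall 0 7)
include hI hp

theorem norm_refPlane_Q_sub_le (l : ℕ) :
    ‖(D.refPlane L₀ p (l + 1)).Q - (D.refPlane L₀ p l).Q‖ ≤ D.refB δ p l := by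
  cases l with
  | zero => exact hI.norm_Q_sub_le p hp
  | succ l =>
    exact h.norm_Q_sub_le l (l + 1) (Or.inr rfl) p hp p hp
      (by rw [dist_self]; linarith [rad_pos l])

theorem norm_refPlane_N_sub_le {l : ℕ} {b : F} (hb : dist b p ≤ rad l) :
    ‖(D.refPlane L₀ p (l + 1)).N b - (D.refPlane L₀ p l).N b‖ ≤
      10 * D.refB δ p l * rad l := by
  cases l with
  | zero =>
    rw [rad_zero, mul_one]
    rw [rad_zero] at hb
    exact hI.norm_N_sub_le p hp b (by linarith)
  | succ l =>
    have hr := rad_pos l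
    rw [rad_succ] at hb ⊢
    exact (h.norm_N_sub_le l (l + 1) (Or.inr rfl) p hp p hp
      (by rw [dist_self]; linarith) b (by linarith)).trans_eq (by rw [PlaneData.refB]; ring)

theorem pairData {l : ℕ} {a b : F} (ha : IsNear E δ l a) (hb : IsNear E δ l b)
    (haR : ‖a‖ ≤ 7 - 1) (hbR : ‖b‖ ≤ 7 - 1) (hab : ‖a - b‖ ≤ rad l / 10)
    (hap : dist a p ≤ 65 * (δ * rad l)) :
    PairData (D.X l) (D.plane l) (D.θ l a) (D.θ l b) (D.refPlane L₀ p l)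
      (D.refPlane L₀ p (l + 1)) (D.refB δ p l) (D.refB δ p (l + 1)) Λ (rad l) a b := by
  have hr := rad_pos l
  have hδr := h.δ_rad_le l
  have hbp : dist b p ≤ rad l := by
    rw [← dist_eq_norm] at hab
    linarith [dist_triangle_left b p a]
  have hactive : ∀ j, D.θ l a j ≠ 0 ∨ D.θ l b j ≠ 0 → dist j p ≤ 5 * rad l := by
    rintro j (hj | hj)
    · linarith [h.dist_center_le hj hap]
    · linarith [h.dist_center_le hj hbp]
  have hN : ∀ z, dist z p ≤ 5 * rad l → ∀ j ∈ D.X l, (D.θ l a j ≠ 0 ∨ D.θ l b j ≠ 0) →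
      ‖(D.plane l j).N z - (D.plane l p).N z‖ ≤ D.b l p * rad l := fun z hz j hj hne =>
    h.norm_N_sub_le l l (Or.inl rfl) j ((h.part l).mem j hj) p hp (hactive j hne) z hz
  exact
  { weight_left := h.isWeight haR ha
    weight_right := h.isWeight hbR hb
    r_pos := hr
    s_nonneg := h.refB_nonneg l
    s'_nonneg := h.refB_nonneg (l + 1)
    one_le_Λ := h.one_le_Λ
    s_small := h.refB_small l
    s'_small := h.refB_small (l + 1)
    norm_Q_sub_le := fun j hj hne =>
      h.norm_Q_sub_le l l (Or.inl rfl) j ((h.part l).mem j hj) p hp (hactive j hne)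
    norm_N_left_sub_le := hN a (by linarith)
    norm_N_right_sub_le := hN b (by linarith)
    norm_ref_Q_sub_le := h.norm_refPlane_Q_sub_le hI hp l
    norm_ref_N_sub_le := h.norm_refPlane_N_sub_le hI hp hbp
    sum_abs_sub_mul_le := by
      rw [← dist_eq_norm]
      exact (h.part l).lip a b (h.exists_mem_dist_le haR ha) (h.exists_mem_dist_le hbR hb) }

end Setup

namespace Initial

variable {D : PlaneData F} {E : Set F} {δ : ℝ} {L₀ : NormalPlane F} (hI : Initial D E δ L₀)
  (hδ : 0 ≤ δ)
include hI hδ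

theorem good (z : F) : D.Good E 7 δ 0 (L₀.split z) := by
  refine (lt_or_ge (height (L₀.split z)) (5 / 2 * rad 0)).symm.imp id fun hlt =>
    ⟨hI.isNear _ (L₀.N_sub_N_self z) (by linarith [norm_fst_le_of_height hlt]), fun x hx _ => ?_⟩
  have hnorm := norm_nonneg (L₀.split z).2
  have hQ := ((D.plane 0 x).Q - L₀.Q).le_of_opNorm_le (hI.norm_Q_sub_le x hx) (L₀.split z).2
  rw [sub_apply, L₀.Q_split_snd, norm_sub_rev] at hQ
  linarith [mul_nonneg hδ hnorm]

end Initial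

theorem PlaneData.orbitInv_zero (D : PlaneData F) (L₀ : NormalPlane F) {δ Λ : ℝ} (hδ : 0 ≤ δ)
    (hΛ : 1 ≤ Λ) (p z w : F) : D.OrbitInv L₀ δ Λ p 1 0 (L₀.split z) (L₀.split w) := by
  have hcoupling : 0 ≤ ‖(L₀.split z).1 - (L₀.split w).1‖ * ‖(L₀.split w).2‖ / rad 0 := by
    rw [rad_zero]
    positivity
  have hN (z : F) : ‖L₀.N (L₀.split z).1‖ ≤ 10 * δ * rad 0 := by
    rw [NormalPlane.split, L₀.N_sub_N_self, norm_zero, rad_zero]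
    positivity
  have hQ (z : F) : ‖(L₀.split z).2 - L₀.Q (L₀.split z).2‖ ≤ 2 * δ * ‖(L₀.split z).2‖ := by
    rw [L₀.Q_split_snd, sub_self, norm_zero]
    positivity
  exact
  { t_normal := by
      rw [orbit, orbit, refPlane, L₀.Q_split_fst_sub, norm_zero, refB]
      positivity
    a_normal := hN z
    b_normal := hN w
    ν_tan := hQ z
    ν'_tan := hQ w
    η_tan := by
      rw [orbit, orbit, refPlane, map_sub, L₀.Q_split_snd, L₀.Q_split_snd, sub_self, norm_zero,
        refB, rad_zero]
      positivity
    t_le := (one_mul _).ge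
    le_t := (one_mul _).ge
    η_le := le_add_of_nonneg_right hcoupling
    le_η := (le_add_of_nonneg_right hcoupling).trans_eq (one_mul _).symm }

theorem Setup.orbitInv_of_coupled [FiniteDimensional ℝ F] {D : PlaneData F} {E : Set F} {δ Λ : ℝ}
    {L₀ : NormalPlane F} {p : F} (h : Setup D E 7 δ Λ) (hI : Initial D E δ L₀)
    (hp : p ∈ E ∩ closedBall 0 7) {z w : F} {m : ℕ}
    (hc : D.Coupled (L₀.split z) (L₀.split w) m)
    (hap : ∀ l < m, dist (D.orbit (L₀.split z) l).1 p ≤ 65 * (δ * rad l)) :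
    D.OrbitInv L₀ δ Λ p (D.distortion δ Λ p m) m (L₀.split z) (L₀.split w) := by
  induction m with
  | zero => exact D.orbitInv_zero L₀ h.δ_nonneg h.one_le_Λ p z w
  | succ m ih =>
    have inv := ih (fun l hl => hc l (hl.trans m.lt_succ_self))
      fun l hl => hap l (hl.trans m.lt_succ_self)
    obtain ⟨hz, hw, hsep⟩ := hc m m.lt_succ_self
    have hz' : height (D.orbit (L₀.split z) m) < 5 / 2 * rad m := by linarith [rad_pos m]
    have hw' : height (D.orbit (L₀.split w) m) < 5 / 2 * rad m := by linarith [rad_pos m]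
    have hnz := ((h.good_orbit (hI.good h.δ_nonneg z) m).resolve hz').1
    have hnw := ((h.good_orbit (hI.good h.δ_nonneg w) m).resolve hw').1
    have step := inv.step (h.pairData hI hp hnz hnw (norm_fst_le_of_height hz')
      (norm_fst_le_of_height hw') ((norm_fst_sub_le_sep _ _).trans hsep)
      (hap m m.lt_succ_self)) (PlaneData.distortion_nonneg m)
    rw [PlaneData.OrbitInv, PlaneData.distortion, Finset.prod_range_succ, rad_succ,
      PlaneData.orbit, PlaneData.orbit, D.step_of_height_le hz,
      D.step_of_height_le hw]
    exact step

end Pair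

theorem mul_div_le_of_le_mul {x y r C : ℝ} (hr : 0 < r) (hx : 0 ≤ x) (hy : y ≤ C * r) :
    x * y / r ≤ C * x := by
  rw [div_le_iff₀ hr]
  exact (mul_le_mul_of_nonneg_left hy hx).trans_eq (by ring)

section Coupled

variable {F : Type*} [NormedAddCommGroup F] [InnerProductSpace ℝ F]

theorem NormalPlane.norm_add_norm_le_of_almost_orthogonal (L : NormalPlane F) {t η : F} {κ : ℝ}
    (hκ₀ : 0 ≤ κ) (hκ : 16 * κ ≤ 1) (ht : ‖L.Q t‖ ≤ κ * ‖t‖)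
    (hη : ‖η - L.Q η‖ ≤ κ * (‖t‖ + ‖η‖)) : ‖t‖ + ‖η‖ ≤ 2 * ‖t + η‖ := by
  have hinner : -(κ * (‖t‖ + ‖η‖) ^ 2) ≤ inner ℝ t η := by
    have hsplit : inner ℝ t η = inner ℝ (L.Q t) η + inner ℝ t (η - L.Q η) := by
      rw [inner_sub_right, L.inner_Q_left, add_sub_cancel]
    have hQ : ‖L.Q t‖ * ‖η‖ ≤ κ * ‖t‖ * ‖η‖ := mul_le_mul_of_nonneg_right ht (norm_nonneg η)
    have hsub : ‖t‖ * ‖η - L.Q η‖ ≤ ‖t‖ * (κ * (‖t‖ + ‖η‖)) :=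
      mul_le_mul_of_nonneg_left hη (norm_nonneg t)
    linarith [(abs_le.1 (abs_real_inner_le_norm (L.Q t) η)).1, mul_nonneg hκ₀ (sq_nonneg ‖η‖),
      (abs_le.1 (abs_real_inner_le_norm t (η - L.Q η))).1]
  refine le_of_sq_le_sq ?_ (by positivity)
  have hsmall : 16 * κ * (‖t‖ + ‖η‖) ^ 2 ≤ 1 * (‖t‖ + ‖η‖) ^ 2 :=
    mul_le_mul_of_nonneg_right hκ (sq_nonneg _)
  linarith [norm_add_sq_real t η, two_mul_le_add_sq ‖t‖ ‖η‖, sq_nonneg ‖t‖, sq_nonneg ‖η‖]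

theorem norm_smul_sub_smul_le {χ χ' : ℝ} (h₀ : 0 ≤ χ) (h₁ : χ ≤ 1) (f f' : F) :
    ‖χ • f - χ' • f'‖ ≤ ‖f - f'‖ + |χ - χ'| * ‖f'‖ := by
  have hsplit : χ • f - χ' • f' = χ • (f - f') + (χ - χ') • f' := by
    rw [smul_sub, sub_smul]
    abel
  rw [hsplit, ← Real.norm_eq_abs, ← norm_smul (χ - χ')]
  refine (norm_add_le _ _).trans (add_le_add_left ?_ _)
  rw [norm_smul, Real.norm_of_nonneg h₀]
  exact mul_le_of_le_one_left (norm_nonneg _) h₁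

theorem norm_cutoff_smul_sub_le (k : ℕ) (z w : F × F) {f f' : F} {B : ℝ} (hB : 0 ≤ B)
    (hf' : ‖f'‖ ≤ B * rad k) :
    ‖cutoff k z • f - cutoff k w • f'‖ ≤ ‖f - f'‖ + B * sep z w :=
  calc _ ≤ ‖f - f'‖ + |cutoff k z - cutoff k w| * ‖f'‖ :=
        norm_smul_sub_smul_le (cutoff_nonneg k z) (cutoff_le_one k z) f f'
    _ ≤ ‖f - f'‖ + |cutoff k z - cutoff k w| * (B * rad k) := by gcongr
    _ = ‖f - f'‖ + B * (|cutoff k z - cutoff k w| * rad k) := by ring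
    _ ≤ _ := by gcongr; exact abs_cutoff_sub_le k z w

namespace PairInv

variable {ι : Type*} {J : Finset ι} {L : ι → NormalPlane F} {α β : ι → ℝ} {L₀ L₁ : NormalPlane F}
  {s s' Λ r A A' T₀ H₀ δ : ℝ} {a b ν ν' : F}

section Data

variable (inv : PairInv L₀ s r Λ A T₀ H₀ a b ν ν') (h : PairData J L α β L₀ L₁ s s' Λ r a b)
  (hs : s ≤ δ) (hs' : s' ≤ δ)
include inv h hs hs'

theorem norm_avgN_sub_avgN_le :
    ‖avgN J L α a - avgN J L β b‖ ≤ 7 * (Λ * δ) * ‖a - b‖ := by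
  have hΛ := h.one_le_Λ
  have hδ := h.s_nonneg.trans hs
  have hsum := h.norm_sum_sub_smul_le h.s'_nonneg h.norm_N_right_sub_le
  rw [h.weight_left.sum_sub_smul h.weight_right] at hsum
  have havg : ‖avgQ J L α (a - b)‖ ≤ ((3 + 2 * Λ) * s + s') * ‖a - b‖ := by
    rw [avgQ_apply]
    refine h.weight_left.norm_sum_le fun j hj hne => ?_
    linarith [norm_le_norm_add_norm_sub' ((L j).Q (a - b)) (L₁.Q (a - b)),
      NormalPlane.norm_Q_sub_Q_le (h.norm_Q_sub_le j hj (Or.inl hne)) (a - b),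
      h.norm_Q_apply_sub_le inv.t_normal]
  have hsplit : avgN J L α a - avgN J L β b =
      avgQ J L α (a - b) + ∑ j ∈ J, (α j - β j) • (L j).N b := by
    have := sub_avgN_sub_sub_avgN (J := J) (L := L) (α := α) (β := β) a b
    rw [← sub_eq_zero] at this ⊢
    rw [← neg_eq_zero, ← this]
    abel
  rw [hsplit]
  refine (norm_add_le _ _).trans ((add_le_add havg hsum).trans ?_)
  calc _ = ((3 + 2 * Λ) * s + s' + Λ * s') * ‖a - b‖ := by ring
    _ ≤ ((3 * Λ + 2 * Λ) * δ + Λ * δ + Λ * δ) * ‖a - b‖ := by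
        have hs₀ := h.s_nonneg
        gcongr
        · linarith
        · exact hs'.trans (le_mul_of_one_le_left hδ hΛ)
    _ = _ := by ring

theorem norm_sub_avgQ_sub_le (hν' : ‖ν'‖ ≤ 5 / 2 * r) :
    ‖(ν - avgQ J L α ν) - (ν' - avgQ J L β ν')‖ ≤ 18 * (Λ * δ) * (‖a - b‖ + ‖ν - ν'‖) := by
  have hr := h.r_pos
  have hΛ := h.one_le_Λ
  have hδ := h.s_nonneg.trans hs
  have hs₀ := h.s_nonneg
  have hq : ‖a - b‖ * ‖ν'‖ / r ≤ 5 / 2 * ‖a - b‖ := mul_div_le_of_le_mul hr (norm_nonneg _) hν'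
  have havg := h.weight_left.norm_sub_avgQ_le fun j hj hne =>
    h.norm_sub_Q_le inv.η_tan hj (Or.inl hne)
  rw [sub_sub_sub_comm, h.avgQ_sub_avgQ, ← sub_sub]
  refine (norm_sub_le _ _).trans ((add_le_add havg (h.norm_sum_sub_smul_Q_sub_le ν')).trans ?_)
  calc _ ≤ 2 * (Λ + Λ) * δ * (‖ν - ν'‖ + 5 / 2 * ‖a - b‖) + (Λ * δ + Λ * δ) * ‖ν - ν'‖ +
        Λ * δ * (5 / 2 * ‖a - b‖) := by
        gcongr
        · exact hs.trans (le_mul_of_one_le_left hδ hΛ)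
        · exact hs'.trans (le_mul_of_one_le_left hδ hΛ)
    _ ≤ _ := by
        have : 0 ≤ Λ * δ * ‖a - b‖ := by positivity
        have : 0 ≤ Λ * δ * ‖ν - ν'‖ := by positivity
        linarith

end Data

variable (inv : PairInv L₀ s r Λ A T₀ H₀ a b ν ν')
include inv

theorem mono (hA : A ≤ A') (hr : 0 ≤ r) (hT : 0 ≤ T₀) :
    PairInv L₀ s r Λ A' T₀ H₀ a b ν ν' where
  __ := inv
  t_le := inv.t_le.trans (mul_le_mul_of_nonneg_right hA hT)
  le_t := inv.le_t.trans (mul_le_mul_of_nonneg_right hA (norm_nonneg _))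
  le_η := inv.le_η.trans (mul_le_mul_of_nonneg_right hA (by positivity))

variable (hr : 0 < r) (hν' : ‖ν'‖ ≤ 10 * r)
include hr hν'

theorem initial_sep_le (hA : 0 ≤ A) : T₀ + H₀ ≤ 11 * A * (‖a - b‖ + ‖ν - ν'‖) := by
  have hq := mul_div_le_of_le_mul hr (norm_nonneg (a - b)) hν'
  have hH : H₀ ≤ A * (‖ν - ν'‖ + 10 * ‖a - b‖) :=
    inv.le_η.trans (mul_le_mul_of_nonneg_left (add_le_add_right hq _) hA)
  linarith [inv.le_t, mul_nonneg hA (norm_nonneg (ν - ν'))]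

theorem sep_le_initial (hA : 1 ≤ A) (hH : 0 ≤ H₀) :
    ‖a - b‖ + ‖ν - ν'‖ ≤ 11 * A * (T₀ + H₀) := by
  linarith [inv.t_le, inv.η_le, mul_div_le_of_le_mul hr (norm_nonneg (a - b)) hν',
    le_mul_of_one_le_left hH hA]

theorem sep_le_norm_add (hs : 0 ≤ s) (hΛ : 1 ≤ Λ) (hsmall : 1000 * Λ ^ 2 * s ≤ 1) :
    ‖a - b‖ + ‖ν - ν'‖ ≤ 2 * ‖(a - b) + (ν - ν')‖ := by
  have hΛs : (1 + Λ) * s ≤ 2 * (Λ ^ 2 * s) := by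
    rw [← mul_assoc]
    exact mul_le_mul_of_nonneg_right (by linarith [le_self_pow₀ hΛ two_ne_zero]) hs
  have hκ : 0 ≤ 2 * (1 + Λ) * s := by positivity
  refine L₀.norm_add_norm_le_of_almost_orthogonal (κ := 10 * (2 * (1 + Λ) * s)) (by linarith)
    (by linarith) (inv.t_normal.trans ?_) (inv.η_tan.trans ?_)
  · exact mul_le_mul_of_nonneg_right (by linarith) (norm_nonneg _)
  · calc _ ≤ 2 * (1 + Λ) * s * (‖ν - ν'‖ + 10 * ‖a - b‖) := by
          gcongr
          exact mul_div_le_of_le_mul hr (norm_nonneg (a - b)) hν'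
      _ ≤ _ := by linarith [mul_nonneg hκ (norm_nonneg (ν - ν'))]

end PairInv

namespace Setup

variable {D : PlaneData F} {E : Set F} {δ Λ A T₀ H₀ : ℝ} {L₀ : NormalPlane F} {p : F} {m : ℕ}
  (h : Setup D E 7 δ Λ)
include h

theorem norm_step_sub_step_le (hI : Initial D E δ L₀) (hp : p ∈ E ∩ closedBall 0 7) {z w : F × F}
    (inv : PairInv (D.refPlane L₀ p m) (D.refB δ p m) (rad m) Λ A T₀ H₀ z.1 w.1 z.2 w.2)
    (hz : height z < 5 / 2 * rad m) (hw : height w < 5 / 2 * rad m) (hzG : D.Good E 7 δ m z)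
    (hwG : D.Good E 7 δ m w) (hsep : sep z w ≤ rad m / 10)
    (hzp : dist z.1 p ≤ 65 * (δ * rad m)) :
    ‖point (D.step m z) - point (D.step m w) - (point z - point w)‖ ≤ sep z w / 8 := by
  have hδ := h.δ_nonneg
  have hΛ := h.one_le_Λ
  obtain ⟨hnz, -⟩ := hzG.resolve hz
  obtain ⟨hnw, hνw⟩ := hwG.resolve hw
  have hzR := norm_fst_le_of_height hz
  have hwR := norm_fst_le_of_height hw
  have hw2 : ‖w.2‖ ≤ 5 / 2 * rad m := (norm_snd_le_height w).trans hw.le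
  have hd := h.pairData hI hp hnz hnw hzR hwR ((norm_fst_sub_le_sep _ _).trans hsep) hzp
  have hbase : ‖D.avgN m z.1 - D.avgN m w.1‖ ≤ 7 * (Λ * δ) * sep z w :=
    (inv.norm_avgN_sub_avgN_le hd (h.refB_le m) (h.refB_le (m + 1))).trans <| by
      gcongr
      exact norm_fst_sub_le_sep z w
  have hoffset : ‖(z.2 - D.avgQ m z.1 z.2) - (w.2 - D.avgQ m w.1 w.2)‖ ≤ 18 * (Λ * δ) * sep z w :=
    inv.norm_sub_avgQ_sub_le hd (h.refB_le m) (h.refB_le (m + 1)) hw2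
  have hcutN := norm_cutoff_smul_sub_le m z w (f := D.avgN m z.1) (B := 31 * δ) (by positivity)
    ((h.norm_avgN_le hwR hnw).trans_eq (by ring))
  have hcutQ := norm_cutoff_smul_sub_le m z w (f := z.2 - D.avgQ m z.1 z.2) (B := 5 * δ)
    (by positivity) ((h.norm_sub_avgQ_le hwR hnw hνw).trans
      ((mul_le_mul_of_nonneg_left hw2 (by positivity)).trans_eq (by ring)))
  have hsplit : point (D.step m z) - point (D.step m w) - (point z - point w) =
      -(cutoff m z • D.avgN m z.1 - cutoff m w • D.avgN m w.1) -
      (cutoff m z • (z.2 - D.avgQ m z.1 z.2) - cutoff m w • (w.2 - D.avgQ m w.1 w.2)) := by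
    simp only [PlaneData.step, point]
    abel
  have hsmall : (25 * (Λ * δ) + 36 * δ) * sep z w ≤ 1 / 8 * sep z w := by
    have : Λ * δ ≤ Λ ^ 2 * δ := by gcongr; exact le_self_pow₀ hΛ two_ne_zero
    exact mul_le_mul_of_nonneg_right (by linarith [h.small, h.δ_le])
      (add_nonneg (norm_nonneg _) (norm_nonneg _))
  rw [hsplit]
  refine (norm_sub_le _ _).trans ?_
  rw [norm_neg]
  linarith

end Setup

end Coupled

section Bilipschitz

variable {F : Type*} [NormedAddCommGroup F] [InnerProductSpace ℝ F]

theorem NormalPlane.sep_split_le (L : NormalPlane F) (z w : F) :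
    sep (L.split z) (L.split w) ≤ 2 * ‖point (L.split z) - point (L.split w)‖ := by
  rw [point, point, add_sub_add_comm]
  refine L.norm_add_norm_le_of_almost_orthogonal le_rfl (by norm_num) ?_ ?_
  · rw [L.Q_split_fst_sub, norm_zero, zero_mul]
  · rw [map_sub, L.Q_split_snd, L.Q_split_snd, sub_self, norm_zero, zero_mul]

namespace Setup

variable {D : PlaneData F} {E : Set F} {δ Λ A : ℝ} {L₀ : NormalPlane F} {p z w : F} {m : ℕ}
  (h : Setup D E 7 δ Λ)
include h

theorem norm_snd_step_le {z : F × F} (hG : D.Good E 7 δ m z) (hz : height z ≤ rad m) :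
    ‖(D.step m z).2‖ ≤ ‖z.2‖ := by
  have hlt : height z < 5 / 2 * rad m := by linarith [rad_pos m]
  rw [D.step_of_height_le hz]
  exact (h.isWeight (norm_fst_le_of_height hlt) (hG.resolve hlt).1).norm_avgQ_le z.2

variable [FiniteDimensional ℝ F]

theorem exists_dist_orbit_le {z : F × F} (hG : D.Good E 7 δ 0 z)
    (hN : IsNear E δ m (D.orbit z m).1) (hR : ‖(D.orbit z m).1‖ ≤ 7 - 1) :
    ∃ p ∈ E ∩ closedBall 0 7, ∀ l ≤ m, dist (D.orbit z l).1 p ≤ 65 * (δ * rad l) := by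
  obtain ⟨p, hp, hd⟩ := h.exists_mem_of_isNear hR hN
  refine ⟨p, hp, fun l hl => ?_⟩
  linarith [dist_triangle (D.orbit z l).1 (D.orbit z m).1 p, h.dist_orbit_fst_le hG hl,
    mul_le_mul_of_nonneg_left (rad_antitone hl) h.δ_nonneg]

theorem exists_shadow (hE : (0 : F) ∈ E) {z : F × F} (hG : D.Good E 7 δ 0 z)
    (hz : ∀ l < m, height (D.orbit z l) ≤ rad l) :
    ∃ p ∈ E ∩ closedBall 0 7, (∀ l < m, dist (D.orbit z l).1 p ≤ 65 * (δ * rad l)) ∧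
      (height (D.orbit z m) < 5 / 2 * rad m → dist (D.orbit z m).1 p ≤ 65 * (δ * rad m)) := by
  suffices hnear : IsNear E δ m (D.orbit z m).1 ∧ ‖(D.orbit z m).1‖ ≤ 7 - 1 ∨
      m = 0 ∧ 5 / 2 * rad m ≤ height (D.orbit z m) by
    rcases hnear with ⟨hN, hR⟩ | ⟨rfl, hge⟩
    · obtain ⟨p, hp, hd⟩ := h.exists_dist_orbit_le hG hN hR
      exact ⟨p, hp, fun l hl => hd l hl.le, fun _ => hd m le_rfl⟩
    · exact ⟨0, ⟨hE, mem_closedBall_self (by norm_num)⟩, fun l hl => absurd hl l.not_lt_zero,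
        fun hlt => absurd hge (not_le.2 hlt)⟩
  cases m with
  | zero =>
    exact (lt_or_ge (height (D.orbit z 0)) (5 / 2 * rad 0)).imp
      (fun hlt => ⟨(hG.resolve hlt).1, norm_fst_le_of_height hlt⟩) fun hge => ⟨rfl, hge⟩
  | succ m =>
    have hm := hz m m.lt_succ_self
    have hGm := h.good_orbit hG m
    refine Or.inl ⟨(h.isNear_and_isNormalAt_step hGm hm).1, ?_⟩
    rw [PlaneData.orbit]
    linarith [h.norm_step_fst_sub_le hGm, norm_fst_le_height (D.orbit z m), h.δ_rad_le m,
      norm_le_norm_add_norm_sub' (D.step m (D.orbit z m)).1 (D.orbit z m).1, rad_le_one m]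

variable (hI : Initial D E δ L₀)
include hI

theorem exists_orbitInv (hE : (0 : F) ∈ E)
    (hdist : ∀ p ∈ E ∩ closedBall 0 7, ∀ m, D.distortion δ Λ p m ≤ A)
    (hc : D.Coupled (L₀.split z) (L₀.split w) m) :
    ∃ p ∈ E ∩ closedBall 0 7, D.OrbitInv L₀ δ Λ p A m (L₀.split z) (L₀.split w) ∧
      (height (D.orbit (L₀.split z) m) < 5 / 2 * rad m →
        dist (D.orbit (L₀.split z) m).1 p ≤ 65 * (δ * rad m)) := by
  obtain ⟨p, hp, hlt, hm⟩ :=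
    h.exists_shadow hE (hI.good h.δ_nonneg z) fun l hl => (hc l hl).1
  exact ⟨p, hp, (h.orbitInv_of_coupled hI hp hc hlt).mono (hdist p hp m) (rad_pos m).le
    (norm_nonneg _), hm⟩

theorem norm_orbit_snd_le_of_coupled (hc : D.Coupled (L₀.split z) (L₀.split w) (m + 1)) :
    ‖(D.orbit (L₀.split w) (m + 1)).2‖ ≤ 10 * rad (m + 1) := by
  obtain ⟨-, hw, -⟩ := hc m m.lt_succ_self
  rw [rad_succ, PlaneData.orbit]
  linarith [h.norm_snd_step_le (h.good_orbit (hI.good h.δ_nonneg w) m) hw,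
    norm_snd_le_height (D.orbit (L₀.split w) m)]

variable (hc : D.Coupled (L₀.split z) (L₀.split w) m)
  (inv : D.OrbitInv L₀ δ Λ p A m (L₀.split z) (L₀.split w))
include hc inv

theorem sep_split_le_sep_orbit (hA : 1 ≤ A) : sep (L₀.split z) (L₀.split w) ≤
    11 * A * sep (D.orbit (L₀.split z) m) (D.orbit (L₀.split w) m) := by
  cases m with
  | zero => exact le_mul_of_one_le_left (sep_nonneg _ _) (by linarith)
  | succ m =>
    exact inv.initial_sep_le (rad_pos _) (h.norm_orbit_snd_le_of_coupled hI hc) (by linarith)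

theorem sep_orbit_le_sep_split (hA : 1 ≤ A) :
    sep (D.orbit (L₀.split z) m) (D.orbit (L₀.split w) m) ≤
      11 * A * sep (L₀.split z) (L₀.split w) := by
  cases m with
  | zero => exact le_mul_of_one_le_left (sep_nonneg _ _) (by linarith)
  | succ m =>
    exact inv.sep_le_initial (rad_pos _) (h.norm_orbit_snd_le_of_coupled hI hc) hA
      (norm_nonneg _)

theorem sep_orbit_le_norm_point_sub :
    sep (D.orbit (L₀.split z) m) (D.orbit (L₀.split w) m) ≤
      2 * ‖point (D.orbit (L₀.split z) m) - point (D.orbit (L₀.split w) m)‖ := by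
  cases m with
  | zero => exact L₀.sep_split_le z w
  | succ m =>
    rw [point, point, add_sub_add_comm]
    exact inv.sep_le_norm_add (rad_pos _) (h.norm_orbit_snd_le_of_coupled hI hc)
      (h.refB_nonneg _) h.one_le_Λ (h.refB_small _)

end Setup

theorem PlaneData.coupled_succ {D : PlaneData F} {z w : F × F} {m : ℕ} (hc : D.Coupled z w m)
    (hz : height (D.orbit z m) ≤ rad m) (hw : height (D.orbit w m) ≤ rad m)
    (hsep : sep (D.orbit z m) (D.orbit w m) ≤ rad m / 10) : D.Coupled z w (m + 1) := by
  intro l hl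
  rcases Nat.lt_succ_iff_lt_or_eq.1 hl with hl | rfl
  · exact hc l hl
  · exact ⟨hz, hw, hsep⟩

namespace Setup

variable [FiniteDimensional ℝ F] {D : PlaneData F} {E : Set F} {δ Λ A : ℝ} {L₀ : NormalPlane F}
  {p z w : F} {m : ℕ} (h : Setup D E 7 δ Λ) (hI : Initial D E δ L₀)
include h hI

theorem exists_coupled_not_succ (hE : (0 : F) ∈ E) (hA : 1 ≤ A)
    (hdist : ∀ p ∈ E ∩ closedBall 0 7, ∀ m, D.distortion δ Λ p m ≤ A) (hzw : z ≠ w) :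
    ∃ m, D.Coupled (L₀.split z) (L₀.split w) m ∧ ¬ D.Coupled (L₀.split z) (L₀.split w) (m + 1) := by
  by_contra! hsucc
  have hc (m : ℕ) : D.Coupled (L₀.split z) (L₀.split w) m := by
    induction m with
    | zero => exact fun l hl => absurd hl l.not_lt_zero
    | succ m ih => exact hsucc m ih
  have hlim : Tendsto (fun m => 11 * A * (rad m / 10)) atTop (𝓝 0) := by
    simpa using (tendsto_rad.div_const 10).const_mul (11 * A)
  have hsep : sep (L₀.split z) (L₀.split w) ≤ 0 := ge_of_tendsto' hlim fun m => by
    obtain ⟨p, -, inv, -⟩ := h.exists_orbitInv hI hE hdist (hc m)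
    exact (h.sep_split_le_sep_orbit hI (hc m) inv hA).trans
      (mul_le_mul_of_nonneg_left (hc (m + 1) m m.lt_succ_self).2.2 (by linarith))
  have hnorm := norm_point_sub_point_le (L₀.split z) (L₀.split w)
  rw [L₀.point_split, L₀.point_split] at hnorm
  linarith [norm_pos_iff.2 (sub_ne_zero.2 hzw)]

omit hI in
theorem limit_eq_of_le_height {z : F × F} (hG : D.Good E 7 δ 0 z)
    (hz : 9 / 10 * rad m ≤ height (D.orbit z m)) :
    D.limit z = point (D.step m (D.orbit z m)) := by
  refine D.limit_eq_of_le_height (k := m + 1) ?_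
  rw [rad_succ, PlaneData.orbit]
  linarith [h.le_height_step (h.good_orbit hG m), h.δ_rad_le m, rad_pos m]

theorem norm_limit_sub_limit_sub_le (hp : p ∈ E ∩ closedBall 0 7)
    (hc : D.Coupled (L₀.split z) (L₀.split w) m)
    (hc' : ¬ D.Coupled (L₀.split z) (L₀.split w) (m + 1))
    (inv : D.OrbitInv L₀ δ Λ p A m (L₀.split z) (L₀.split w))
    (hzp : height (D.orbit (L₀.split z) m) < 5 / 2 * rad m →
      dist (D.orbit (L₀.split z) m).1 p ≤ 65 * (δ * rad m)) :
    ‖(D.limit (L₀.split z) - D.limit (L₀.split w)) -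
        (point (D.orbit (L₀.split z) m) - point (D.orbit (L₀.split w) m))‖ ≤
      sep (D.orbit (L₀.split z) m) (D.orbit (L₀.split w) m) / 8 := by
  have hGz := hI.good h.δ_nonneg z
  have hGw := hI.good h.δ_nonneg w
  have hr := rad_pos m
  rcases lt_or_ge (rad m / 10) (sep (D.orbit (L₀.split z) m) (D.orbit (L₀.split w) m))
    with hfar | hclose
  · have hlimz := h.dist_point_orbit_limit_le hGz m
    have hlimw := h.dist_point_orbit_limit_le hGw m
    rw [dist_comm, dist_eq_norm] at hlimz hlimw
    rw [sub_sub_sub_comm]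
    linarith [norm_sub_le (D.limit (L₀.split z) - point (D.orbit (L₀.split z) m))
      (D.limit (L₀.split w) - point (D.orbit (L₀.split w) m)), h.δ_rad_le m]
  · obtain ⟨hle, hge⟩ := abs_le.1 ((abs_height_sub_le (D.orbit (L₀.split z) m)
      (D.orbit (L₀.split w) m)).trans hclose)
    by_cases hfrozen : 2 * rad m ≤ height (D.orbit (L₀.split z) m) ∧
        2 * rad m ≤ height (D.orbit (L₀.split w) m)
    · rw [D.limit_eq_of_le_height hfrozen.1, D.limit_eq_of_le_height hfrozen.2, sub_self, norm_zero]
      exact div_nonneg (sep_nonneg _ _) (by norm_num)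
    · have hmove : height (D.orbit (L₀.split z) m) < 5 / 2 * rad m ∧
          height (D.orbit (L₀.split w) m) < 5 / 2 * rad m := by
        rcases not_and_or.1 hfrozen with hlt | hlt <;> constructor <;> linarith
      have hhigh : 9 / 10 * rad m ≤ height (D.orbit (L₀.split z) m) ∧
          9 / 10 * rad m ≤ height (D.orbit (L₀.split w) m) := by
        by_contra hlow
        refine hc' (D.coupled_succ hc ?_ ?_ hclose) <;>
          rcases not_and_or.1 hlow with hlt | hlt <;> linarith
      rw [h.limit_eq_of_le_height hGz hhigh.1, h.limit_eq_of_le_height hGw hhigh.2]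
      exact h.norm_step_sub_step_le hI hp inv hmove.1 hmove.2 (h.good_orbit hGz m)
        (h.good_orbit hGw m) hclose (hzp hmove.1)

theorem limit_bilipschitz (hE : (0 : F) ∈ E) (hA : 1 ≤ A)
    (hdist : ∀ p ∈ E ∩ closedBall 0 7, ∀ m, D.distortion δ Λ p m ≤ A) (z w : F) :
    dist (D.limit (L₀.split z)) (D.limit (L₀.split w)) ≤ 44 * A * dist z w ∧
      dist z w ≤ 44 * A * dist (D.limit (L₀.split z)) (D.limit (L₀.split w)) := by
  rcases eq_or_ne z w with rfl | hzw
  · simp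
  obtain ⟨m, hc, hc'⟩ := h.exists_coupled_not_succ hI hE hA hdist hzw
  obtain ⟨p, hp, inv, hzp⟩ := h.exists_orbitInv hI hE hdist hc
  have hle := h.sep_split_le_sep_orbit hI hc inv hA
  have hge := h.sep_orbit_le_sep_split hI hc inv hA
  have horth := h.sep_orbit_le_norm_point_sub hI hc inv
  have hlim := h.norm_limit_sub_limit_sub_le hI hp hc hc' inv hzp
  have hpoint := norm_point_sub_point_le (D.orbit (L₀.split z) m) (D.orbit (L₀.split w) m)
  have hsplit := L₀.sep_split_le z w
  have hnorm := norm_point_sub_point_le (L₀.split z) (L₀.split w)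
  rw [L₀.point_split, L₀.point_split, ← dist_eq_norm] at hsplit hnorm
  rw [dist_eq_norm (D.limit _)]
  set ℓ := D.limit (L₀.split z) - D.limit (L₀.split w)
  set q := point (D.orbit (L₀.split z) m) - point (D.orbit (L₀.split w) m)
  set σ := sep (D.orbit (L₀.split z) m) (D.orbit (L₀.split w) m)
  have hupper : ‖ℓ‖ ≤ 2 * σ := by
    linarith [norm_le_norm_add_norm_sub' ℓ q, norm_nonneg q]
  have hlower : σ ≤ 4 * ‖ℓ‖ := by
    linarith [norm_le_norm_add_norm_sub ℓ q, norm_nonneg ℓ]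
  constructor
  · have hσ : σ ≤ 11 * A * (2 * dist z w) := hge.trans (by gcongr)
    calc ‖ℓ‖ ≤ 2 * (11 * A * (2 * dist z w)) := hupper.trans (by gcongr)
      _ = _ := by ring
  · calc dist z w ≤ 11 * A * (4 * ‖ℓ‖) := hnorm.trans (hle.trans (by gcongr))
      _ = _ := by ring

end Setup

end Bilipschitz

/-! ### The parametrization -/

section Param

variable {F : Type*} [NormedAddCommGroup F] [InnerProductSpace ℝ F]
variable {D : PlaneData F} {E : Set F} {δ Λ A : ℝ} {L₀ : NormalPlane F} {m : ℕ}

theorem PlaneData.orbit_snd_eq_zero (D : PlaneData F) {z : F × F} (hz : z.2 = 0) (k : ℕ) :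
    (D.orbit z k).2 = 0 := by
  induction k with
  | zero => exact hz
  | succ k ih => rw [orbit, step, ih, map_zero, sub_zero, smul_zero, sub_zero]

namespace Setup

variable (h : Setup D E 7 δ Λ)
include h

theorem norm_snd_le_two_mul_norm_step_snd {z : F × F} (hG : D.Good E 7 δ m z)
    (hz : height z ≤ rad m) : ‖z.2‖ ≤ 2 * ‖(D.step m z).2‖ := by
  have hlt : height z < 5 / 2 * rad m := by linarith [rad_pos m]
  obtain ⟨hN, hν⟩ := hG.resolve hlt
  have hδ : 2 * δ * ‖z.2‖ ≤ 1 / 2 * ‖z.2‖ :=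
    mul_le_mul_of_nonneg_right (by linarith [h.δ_le]) (norm_nonneg _)
  rw [D.step_of_height_le hz]
  linarith [h.norm_sub_avgQ_le (norm_fst_le_of_height hlt) hN hν,
    norm_le_norm_add_norm_sub' z.2 (D.avgQ m z.1 z.2)]

theorem norm_Q_le_of_point_near {a p x ν : F} (hp : p ∈ E ∩ closedBall 0 7) (hx : x ∈ E)
    (hap : dist a p ≤ 3 * (δ * rad m)) (hax : dist (a + ν) x ≤ 4 * (δ * rad m))
    (hν : ‖ν‖ ≤ rad m) : ‖(D.plane m p).Q ν‖ ≤ 9 * (δ * rad m) := by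
  have hr := rad_pos m
  rw [dist_eq_norm] at hap hax
  have hxp : dist x p ≤ 5 * rad m := by
    have hsplit : x - p = (a - p) + ν - (a + ν - x) := by abel
    rw [dist_eq_norm, hsplit]
    linarith [norm_sub_le ((a - p) + ν) (a + ν - x), norm_add_le (a - p) ν, h.δ_rad_le m]
  have hNx := h.near_plane m p hp x hx hxp
  have hNp := h.near_plane m p hp p hp.1 (by rw [dist_self]; positivity)
  have hsplit : ν = (a + ν - x) - (a - p) + (x - p) := by abel
  rw [hsplit, map_add, map_sub, ← (D.plane m p).N_sub_N (z := x)]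
  refine (norm_add_le _ _).trans ?_
  linarith [norm_sub_le ((D.plane m p).Q (a + ν - x)) ((D.plane m p).Q (a - p)),
    norm_sub_le ((D.plane m p).N x) ((D.plane m p).N p), (D.plane m p).norm_Q_le (a + ν - x),
    (D.plane m p).norm_Q_le (a - p)]

variable [FiniteDimensional ℝ F]

theorem height_step_le {x : F} {z : F × F} (hx : x ∈ E) (hx1 : ‖x‖ < 1) (hG : D.Good E 7 δ m z)
    (hz : height z ≤ rad m) (hd : dist (point (D.step m z)) x ≤ 40 * (δ * rad (m + 1))) :
    height (D.step m z) ≤ rad (m + 1) := by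
  obtain ⟨⟨p, hpE, hap⟩, hnormal⟩ := h.isNear_and_isNormalAt_step hG hz
  have hνr : ‖(D.step m z).2‖ ≤ rad m :=
    (h.norm_snd_step_le hG hz).trans ((norm_snd_le_height z).trans hz)
  set a := (D.step m z).1 with ha
  set ν := (D.step m z).2 with hν
  rw [point, ← ha, ← hν] at hd
  have hr := rad_pos m
  have hr1 := rad_le_one m
  have hδr := h.δ_rad_le m
  rw [rad_succ] at *
  have ha3 : ‖a‖ ≤ 3 := by
    rw [dist_eq_norm] at hd
    linarith [norm_sub_le (a + ν) ν, norm_le_norm_add_norm_sub' (a + ν) x,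
      congrArg norm (add_sub_cancel_right a ν)]
  have hp : p ∈ E ∩ closedBall 0 7 := ⟨hpE, mem_closedBall_zero_iff.2 <| by
    rw [dist_eq_norm] at hap
    linarith [norm_le_norm_add_norm_sub a p]⟩
  have hQm := h.norm_Q_le_of_point_near hp hx (by linarith) (by linarith) hνr
  have hQ := hnormal p hp (by rw [dist_comm, rad_succ]; linarith)
  have hangle := NormalPlane.norm_Q_sub_Q_le ((h.norm_Q_sub_le m (m + 1) (Or.inr rfl) p hp p hp
    (by rw [dist_self]; positivity)).trans (h.b_le m p)) ν
  rw [height_eq_norm_snd ha3]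
  have hδν : 3 * δ * ‖ν‖ ≤ 1 / 10 * ‖ν‖ :=
    mul_le_mul_of_nonneg_right (by linarith [h.δ_le]) (norm_nonneg _)
  linarith [norm_le_norm_add_norm_sub' ν ((D.plane (m + 1) p).Q ν),
    norm_le_norm_add_norm_sub' ((D.plane (m + 1) p).Q ν) ((D.plane m p).Q ν)]

theorem snd_eq_zero_of_height_orbit_le {z : F × F} (hG : D.Good E 7 δ 0 z)
    (hz : ∀ k, height (D.orbit z k) ≤ rad k) : z.2 = 0 := by
  have hdecay (k : ℕ) : ‖z.2‖ ≤ 2 ^ k * ‖(D.orbit z k).2‖ := by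
    induction k with
    | zero => rw [pow_zero, one_mul, PlaneData.orbit]
    | succ k ih =>
      rw [pow_succ, mul_assoc, PlaneData.orbit]
      exact ih.trans (mul_le_mul_of_nonneg_left
        (h.norm_snd_le_two_mul_norm_step_snd (h.good_orbit hG k) (hz k)) (by positivity))
  refine norm_le_zero_iff.1 (ge_of_tendsto' (tendsto_pow_atTop_nhds_zero_of_lt_one
    (r := (1 / 5 : ℝ)) (by norm_num) (by norm_num)) fun k => (hdecay k).trans ?_)
  calc (2 : ℝ) ^ k * ‖(D.orbit z k).2‖ ≤ 2 ^ k * rad k := by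
        gcongr
        exact (norm_snd_le_height _).trans (hz k)
    _ = _ := by rw [rad, ← mul_pow]; norm_num

variable (hI : Initial D E δ L₀) {z : F}
include hI

theorem limit_mem (hz : L₀.N z = 0) (hlim : ‖D.limit (L₀.split z)‖ < 1) :
    D.limit (L₀.split z) ∈ E := by
  have hG := hI.good h.δ_nonneg z
  have hsnd := D.orbit_snd_eq_zero (z := L₀.split z) hz
  have hpoint (k : ℕ) : point (D.orbit (L₀.split z) k) = (D.orbit (L₀.split z) k).1 := by
    rw [point, hsnd, add_zero]
  have hnear (k : ℕ) : IsNear E δ k (D.orbit (L₀.split z) k).1 := by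
    refine ((h.good_orbit hG k).resolve ?_).1
    rw [height_eq_norm_snd, hsnd, norm_zero]
    · linarith [rad_pos k]
    · have hd := h.dist_point_orbit_limit_le hG k
      rw [hpoint, dist_eq_norm] at hd
      linarith [norm_le_norm_add_norm_sub' (D.orbit (L₀.split z) k).1 (D.limit (L₀.split z)),
        h.δ_rad_le k, rad_le_one k]
  choose p hp hpd using hnear
  have hlimit := h.tendsto_limit hG
  simp only [hpoint] at hlimit
  refine h.closed.mem_of_tendsto (hlimit.congr_dist (squeeze_zero (fun _ => dist_nonneg) hpd ?_))
    (Eventually.of_forall hp)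
  simpa using tendsto_rad.const_mul (30 * δ)

theorem height_split_le (hlim : D.limit (L₀.split z) ∈ E) (hlim1 : ‖D.limit (L₀.split z)‖ < 1) :
    height (L₀.split z) ≤ rad 0 := by
  have hd := h.dist_point_orbit_limit_le (hI.good h.δ_nonneg z) 0
  rw [PlaneData.orbit, L₀.point_split, rad_zero, mul_one, dist_eq_norm] at hd
  set x := D.limit (L₀.split z)
  have hδ := h.δ_le
  have hNz : ‖L₀.N z‖ ≤ 41 * δ := by
    linarith [hI.norm_N_le x ⟨hlim, mem_closedBall_zero_iff.2 hlim1.le⟩,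
      norm_le_norm_add_norm_sub' (L₀.N z) (L₀.N x), congrArg norm (L₀.N_sub_N (z := z) (w := x)),
      L₀.norm_Q_le (z - x)]
  rw [height_eq_norm_snd, rad_zero, NormalPlane.split]
  · linarith
  · rw [NormalPlane.split]
    linarith [norm_sub_le z (L₀.N z), norm_le_norm_add_norm_sub' z x]

theorem N_eq_zero_of_limit_mem (hlim : D.limit (L₀.split z) ∈ E)
    (hlim1 : ‖D.limit (L₀.split z)‖ < 1) : L₀.N z = 0 := by
  have hG := hI.good h.δ_nonneg z
  refine h.snd_eq_zero_of_height_orbit_le hG fun k => ?_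
  induction k with
  | zero => exact h.height_split_le hI hlim hlim1
  | succ k ih =>
    exact h.height_step_le hlim hlim1 (h.good_orbit hG k) ih
      (h.dist_point_orbit_limit_le hG (k + 1))

theorem limit_split_surjective (hcont : Continuous fun z => D.limit (L₀.split z)) :
    Function.Surjective fun z => D.limit (L₀.split z) := by
  intro y
  obtain ⟨x, -, hx⟩ := exists_eq_of_dist_le (F := fun z => D.limit (L₀.split z)) (c := y) (ρ := 1)
    (s := 40 * δ) (y := y) hcont.continuousOn (fun x _ => by
      have := h.dist_point_orbit_limit_le (hI.good h.δ_nonneg x) 0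
      rwa [PlaneData.orbit, L₀.point_split, rad_zero, mul_one, dist_comm] at this)
    (by rw [dist_self]; linarith [h.δ_le]) one_pos
  exact ⟨x, hx⟩

theorem exists_bilipschitz_param (hE : (0 : F) ∈ E) (hA : 1 ≤ A)
    (hdist : ∀ p ∈ E ∩ closedBall 0 7, ∀ m, D.distortion δ Λ p m ≤ A) :
    ∃ g : F → F, Function.Bijective g ∧ E ∩ ball 0 1 = g '' {z | L₀.N z = 0} ∩ ball 0 1 ∧
      ∀ x y, dist (g x) (g y) ≤ 44 * A * dist x y ∧ dist x y ≤ 44 * A * dist (g x) (g y) := by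
  have hbi := h.limit_bilipschitz hI hE hA hdist
  have hcont : Continuous fun z => D.limit (L₀.split z) :=
    (LipschitzWith.of_dist_le_mul (K := (44 * A).toNNReal) fun x y => by
      rw [Real.coe_toNNReal _ (by linarith)]
      exact (hbi x y).1).continuous
  have hsurj := h.limit_split_surjective hI hcont
  refine ⟨fun z => D.limit (L₀.split z), ⟨fun x y hxy => ?_, hsurj⟩, ?_, hbi⟩
  · have := (hbi x y).2
    rw [show D.limit _ = D.limit _ from hxy, dist_self, mul_zero] at this
    exact dist_le_zero.1 this
  · ext x
    rw [mem_inter_iff, mem_inter_iff, mem_ball_zero_iff]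
    refine and_congr_left fun hx1 => ⟨fun hx => ?_, ?_⟩
    · obtain ⟨z, rfl⟩ := hsurj x
      exact ⟨z, h.N_eq_zero_of_limit_mem hI hx hx1, rfl⟩
    · rintro ⟨z, hz, rfl⟩
      exact h.limit_mem hI hz hx1

end Setup

end Param

section Frame

variable {F : Type*} [NormedAddCommGroup F] [InnerProductSpace ℝ F]
  {ι : Type*} [Fintype ι] {u f : ι → F}

theorem sum_abs_le_card_mul_norm_sum (hu : Orthonormal ℝ u) (l : ι → ℝ) :
    ∑ i, |l i| ≤ Fintype.card ι * ‖∑ i, l i • u i‖ := by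
  have h : ∀ i, |l i| ≤ ‖∑ i, l i • u i‖ := fun i => by
    have h1 := abs_real_inner_le_norm (u i) (∑ i, l i • u i)
    rwa [hu.inner_right_fintype, hu.1 i, one_mul] at h1
  calc ∑ i, |l i| ≤ ∑ _i : ι, ‖∑ i, l i • u i‖ := Finset.sum_le_sum fun i _ => h i
    _ = _ := by simp

theorem sum_abs_le_of_near_orthonormal (hu : Orthonormal ℝ u)
    (hf : ∀ i, 2 * Fintype.card ι * ‖f i - u i‖ ≤ 1) (l : ι → ℝ) :
    ∑ i, |l i| ≤ 2 * Fintype.card ι * ‖∑ i, l i • f i‖ := by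
  have horth := sum_abs_le_card_mul_norm_sum hu l
  have htri : ‖∑ i, l i • u i‖ ≤ ‖∑ i, l i • f i‖ + ‖∑ i, l i • (f i - u i)‖ := by
    simp only [smul_sub, Finset.sum_sub_distrib]
    exact norm_le_insert _ _
  have herr : 2 * Fintype.card ι * ‖∑ i, l i • (f i - u i)‖ ≤ ∑ i, |l i| := by
    calc 2 * Fintype.card ι * ‖∑ i, l i • (f i - u i)‖
        ≤ 2 * Fintype.card ι * ∑ i, |l i| * ‖f i - u i‖ := by
          gcongr
          exact norm_sum_le_of_le _ fun i _ => (norm_smul _ _).le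
      _ = ∑ i, |l i| * (2 * Fintype.card ι * ‖f i - u i‖) := by
          rw [Finset.mul_sum]
          exact Finset.sum_congr rfl fun i _ => by ring
      _ ≤ ∑ i, |l i| := Finset.sum_le_sum fun i _ => mul_le_of_le_one_right (abs_nonneg _) (hf i)
  have hcard : (0 : ℝ) ≤ Fintype.card ι := Nat.cast_nonneg _
  linarith [mul_le_mul_of_nonneg_left htri hcard]

theorem exists_coeff_of_near_orthonormal [FiniteDimensional ℝ F] (hu : Orthonormal ℝ u)
    (hf : ∀ i, 2 * Fintype.card ι * ‖f i - u i‖ ≤ 1) {W : Submodule ℝ F}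
    (hW : Module.finrank ℝ W = Fintype.card ι) (hfW : ∀ i, f i ∈ W) {v : F} (hv : v ∈ W) :
    ∃ l : ι → ℝ, v = ∑ i, l i • f i ∧ ∑ i, |l i| ≤ 2 * Fintype.card ι * ‖v‖ := by
  have hli : LinearIndependent ℝ f := by
    refine Fintype.linearIndependent_iff.2 fun l hl i => ?_
    have hsum := sum_abs_le_of_near_orthonormal hu hf l
    rw [hl, norm_zero, mul_zero] at hsum
    exact abs_nonpos_iff.1
      ((Finset.single_le_sum (fun j _ => abs_nonneg (l j)) (Finset.mem_univ i)).trans hsum)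
  have hspan : Submodule.span ℝ (Set.range f) = W :=
    Submodule.eq_of_le_of_finrank_eq (Submodule.span_le.2 (Set.range_subset_iff.2 hfW))
      (by rw [finrank_span_eq_card hli, hW])
  rw [← hspan, Submodule.mem_span_range_iff_exists_fun] at hv
  obtain ⟨l, rfl⟩ := hv
  exact ⟨l, rfl, sum_abs_le_of_near_orthonormal hu hf l⟩

end Frame

namespace NormalPlane

variable {F : Type*} [NormedAddCommGroup F] [InnerProductSpace ℝ F]

/-- The linear subspace parallel to the plane `L`. -/
def direction (L : NormalPlane F) : Submodule ℝ F := LinearMap.ker (L.Q : F →ₗ[ℝ] F)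

/-- The dimension of the plane `L`. -/
def dim (L : NormalPlane F) : ℕ := Module.finrank ℝ L.direction

theorem mem_direction {L : NormalPlane F} {v : F} : v ∈ L.direction ↔ L.Q v = 0 := Iff.rfl

variable {L M : NormalPlane F} {κ : ℝ}

theorem norm_Q_le_one (L : NormalPlane F) : ‖L.Q‖ ≤ 1 :=
  L.Q.opNorm_le_bound zero_le_one fun x => by rw [one_mul]; exact L.norm_Q_le x

theorem norm_Q_sub_Q_le_of_tilt (hκ : 0 ≤ κ) (hM : ∀ x, ‖M.Q (x - L.Q x)‖ ≤ κ * ‖x‖)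
    (hL : ∀ x, ‖L.Q (x - M.Q x)‖ ≤ κ * ‖x‖) : ‖L.Q - M.Q‖ ≤ 2 * κ := by
  refine ContinuousLinearMap.opNorm_le_bound _ (by positivity) fun x => ?_
  -- `L.Q - M.Q ∘ L.Q` is the adjoint of `L.Q - L.Q ∘ M.Q`.
  have hadj : ‖L.Q x - M.Q (L.Q x)‖ ≤ κ * ‖x‖ := by
    set v := L.Q x - M.Q (L.Q x) with hv
    have hMv : M.Q v = 0 := by rw [hv, map_sub, M.Q_Q, sub_self]
    have hLv : ‖L.Q v‖ ≤ κ * ‖v‖ := by simpa only [hMv, sub_zero] using hL v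
    have hsq : ‖v‖ ^ 2 ≤ ‖x‖ * (κ * ‖v‖) := calc
      ‖v‖ ^ 2 = inner ℝ x (L.Q v) := by
        rw [← real_inner_self_eq_norm_sq]
        conv_lhs => rw [hv]
        rw [inner_sub_left, M.inner_Q_left, hMv, inner_zero_right, sub_zero, L.inner_Q_left]
      _ ≤ ‖x‖ * ‖L.Q v‖ := real_inner_le_norm _ _
      _ ≤ ‖x‖ * (κ * ‖v‖) := by gcongr
    rcases (norm_nonneg v).eq_or_lt with h0 | h0
    · rw [← h0]; positivity
    · nlinarith
  calc ‖(L.Q - M.Q) x‖ = ‖(L.Q x - M.Q (L.Q x)) - M.Q (x - L.Q x)‖ := by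
        rw [map_sub, sub_apply]; congr 1; abel
    _ ≤ κ * ‖x‖ + κ * ‖x‖ := norm_sub_le_of_le hadj (hM x)
    _ = 2 * κ * ‖x‖ := by ring

theorem norm_N_sub_N_le (hQ : ‖L.Q - M.Q‖ ≤ κ) (z y : F) :
    ‖L.N z - M.N z‖ ≤ κ * ‖z - y‖ + (‖L.N y‖ + ‖M.N y‖) := by
  have hsplit : L.N z - M.N z = (L.Q (z - y) - M.Q (z - y)) + (L.N y - M.N y) := by
    rw [← N_sub_N, ← N_sub_N]; abel
  rw [hsplit]
  exact norm_add_le_of_le (norm_Q_sub_Q_le hQ _) (norm_sub_le _ _)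

section Frame

variable {ι : Type*} [Fintype ι] {u y : ι → F} {y₀ : F} {ρ τ b : ℝ}

theorem norm_Q_sub_le_of_norm_N_le {z w : F} (hz : ‖L.N z‖ ≤ b * ρ) (hw : ‖L.N w‖ ≤ b * ρ) :
    ‖L.Q (z - w)‖ ≤ 2 * b * ρ := by
  rw [← N_sub_N]
  linarith [norm_sub_le (L.N z) (L.N w)]

variable [FiniteDimensional ℝ F]

theorem norm_Q_sub_Q_apply_le_of_frame (hd : L.dim = Fintype.card ι) (hu : Orthonormal ℝ u)
    (hρ : 0 < ρ) (hy : ∀ i, ‖y i - y₀ - ρ • u i‖ ≤ ρ * τ)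
    (hτ : 2 * Fintype.card ι * (τ + 2 * b) ≤ 1) (hL₀ : ‖L.N y₀‖ ≤ b * ρ)
    (hL : ∀ i, ‖L.N (y i)‖ ≤ b * ρ) (hM₀ : ‖M.N y₀‖ ≤ b * ρ) (hM : ∀ i, ‖M.N (y i)‖ ≤ b * ρ)
    (x : F) : ‖M.Q (x - L.Q x)‖ ≤ 8 * b * Fintype.card ι * ‖x‖ := by
  have hLy i : ‖L.Q (y i - y₀)‖ ≤ 2 * b * ρ := norm_Q_sub_le_of_norm_N_le (hL i) hL₀
  have hMy i : ‖M.Q (y i - y₀)‖ ≤ 2 * b * ρ := norm_Q_sub_le_of_norm_N_le (hM i) hM₀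
  set f : ι → F := fun i => ρ⁻¹ • (y i - y₀ - L.Q (y i - y₀)) with hf
  have hfu i : ‖f i - u i‖ ≤ τ + 2 * b := by
    have : f i - u i = ρ⁻¹ • ((y i - y₀ - ρ • u i) - L.Q (y i - y₀)) := by
      simp only [hf, smul_sub, smul_smul, inv_mul_cancel₀ hρ.ne', one_smul]; abel
    rw [this, norm_smul, norm_inv, Real.norm_of_nonneg hρ.le, inv_mul_le_iff₀ hρ]
    linarith [norm_sub_le (y i - y₀ - ρ • u i) (L.Q (y i - y₀)), hy i, hLy i]
  have hMf i : ‖M.Q (f i)‖ ≤ 4 * b := by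
    simp only [hf]
    rw [map_smul, map_sub M.Q, norm_smul, norm_inv, Real.norm_of_nonneg hρ.le, inv_mul_le_iff₀ hρ]
    linarith [norm_sub_le (M.Q (y i - y₀)) (M.Q (L.Q (y i - y₀))), M.norm_Q_le (L.Q (y i - y₀)),
      hLy i, hMy i]
  have hb : 0 ≤ b := nonneg_of_mul_nonneg_left ((norm_nonneg _).trans hL₀) hρ
  obtain ⟨l, hxl, hl⟩ := exists_coeff_of_near_orthonormal hu
    (fun i => (mul_le_mul_of_nonneg_left (hfu i) (by positivity)).trans hτ) hd
    (fun i => mem_direction.2 (by simp [hf, L.Q_Q])) (v := x - L.Q x)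
    (mem_direction.2 (by simp [L.Q_Q]))
  calc ‖M.Q (x - L.Q x)‖ = ‖∑ i, M.Q (l i • f i)‖ := by rw [hxl, map_sum]
    _ ≤ ∑ i, |l i| * (4 * b) := norm_sum_le_of_le _ fun i _ => by
        rw [map_smul, norm_smul, Real.norm_eq_abs]
        exact mul_le_mul_of_nonneg_left (hMf i) (abs_nonneg _)
    _ = (∑ i, |l i|) * (4 * b) := by rw [Finset.sum_mul]
    _ ≤ (2 * Fintype.card ι * ‖x‖) * (4 * b) := by
        gcongr
        exact hl.trans (mul_le_mul_of_nonneg_left (L.norm_sub_Q_le x) (by positivity))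
    _ = _ := by ring

theorem norm_Q_sub_Q_le_of_frame (hdL : L.dim = Fintype.card ι) (hdM : M.dim = Fintype.card ι)
    (hu : Orthonormal ℝ u) (hρ : 0 < ρ) (hy : ∀ i, ‖y i - y₀ - ρ • u i‖ ≤ ρ * τ)
    (hτ : 2 * Fintype.card ι * (τ + 2 * b) ≤ 1) (hL₀ : ‖L.N y₀‖ ≤ b * ρ)
    (hL : ∀ i, ‖L.N (y i)‖ ≤ b * ρ) (hM₀ : ‖M.N y₀‖ ≤ b * ρ) (hM : ∀ i, ‖M.N (y i)‖ ≤ b * ρ) :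
    ‖L.Q - M.Q‖ ≤ 16 * b * Fintype.card ι := by
  have hb : 0 ≤ b := nonneg_of_mul_nonneg_left ((norm_nonneg _).trans hL₀) hρ
  refine (norm_Q_sub_Q_le_of_tilt (by positivity)
    (norm_Q_sub_Q_apply_le_of_frame hdL hu hρ hy hτ hL₀ hL hM₀ hM)
    (norm_Q_sub_Q_apply_le_of_frame hdM hu hρ hy hτ hM₀ hM hL₀ hL)).trans_eq (by ring)

end Frame

theorem exists_orthonormal [FiniteDimensional ℝ F] (L : NormalPlane F) :
    ∃ u : Fin L.dim → F, Orthonormal ℝ u ∧ ∀ i, L.Q (u i) = 0 :=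
  let e := stdOrthonormalBasis ℝ L.direction
  ⟨fun i => e i, e.orthonormal.comp_linearIsometry L.direction.subtypeₗᵢ, fun i => (e i).2⟩

end NormalPlane

theorem rad_le_ten_mul_rad {k l : ℕ} (hl : l = k ∨ l = k + 1) : rad k ≤ 10 * rad l := by
  have := rad_pos k
  rcases hl with rfl | rfl
  · linarith
  · rw [rad_succ]; linarith

/-! ### Reifenberg flat sets -/

section Flat

variable {F : Type*} [NormedAddCommGroup F] [InnerProductSpace ℝ F] {d : ℕ}

/-- Near its points of norm less than `10`, at all scales `10 * rad k`, the closed set `E` is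
bilaterally `ε`-close to the `d`-plane `P k x` through `x`. -/
structure Flat (E : Set F) (d : ℕ) (ε : ℝ) (P : ℕ → F → NormalPlane F) : Prop where
  closed : IsClosed E
  zero_mem : (0 : F) ∈ E
  nonneg : 0 ≤ ε
  small : 320 * d * ε ≤ 1
  dim_pos : 0 < d
  through : ∀ k, ∀ x ∈ E ∩ ball 0 10, (P k x).N x = 0
  dim_eq : ∀ k, ∀ x ∈ E ∩ ball 0 10, (P k x).dim = d
  near_plane : ∀ k, ∀ x ∈ E ∩ ball 0 10, ∀ y ∈ E, dist y x < 10 * rad k →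
    ‖(P k x).N y‖ ≤ 10 * (ε * rad k)
  near_set : ∀ k, ∀ x ∈ E ∩ ball 0 10, ∀ z, (P k x).N z = 0 → dist z x < 10 * rad k →
    infDist z E ≤ 10 * (ε * rad k)

namespace Flat

variable {E : Set F} {ε : ℝ} {P : ℕ → F → NormalPlane F} (h : Flat E d ε P)
include h

theorem one_le_dim : (1 : ℝ) ≤ d := mod_cast h.dim_pos

theorem eps_le : 320 * ε ≤ 1 := by
  nlinarith [h.small, h.one_le_dim, h.nonneg]

theorem eps_mul_rad_le (k : ℕ) : 0 ≤ ε * rad k ∧ ε * rad k ≤ d * ε * rad k := by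
  have hr : 0 ≤ ε * rad k := mul_nonneg h.nonneg (rad_pos k).le
  exact ⟨hr, by rw [mul_assoc]; exact le_mul_of_one_le_left hr h.one_le_dim⟩

variable {k l : ℕ} {x p : F}

/-- Neighbouring approximating planes are compared through the points of `E` near both. -/
theorem norm_N_le_of_dist (hl : l = k ∨ l = k + 1) (hx : x ∈ E ∩ ball 0 10)
    (hp : p ∈ E ∩ ball 0 10) (hxp : dist x p ≤ 9 * rad k) :
    ∀ w ∈ E, dist w x ≤ 9 / 10 * rad l → ∃ y ∈ E, dist y w ≤ 0 * rad l ∧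
      ‖(P l x).N y‖ ≤ 100 * ε * rad l ∧ ‖(P k p).N y‖ ≤ 100 * ε * rad l := by
  intro w hwE hwx
  have hrl := rad_pos l
  have hlk : rad l ≤ rad k := rad_antitone (by omega)
  refine ⟨w, hwE, by simp, ?_, ?_⟩
  · refine (h.near_plane l x hx w hwE (by linarith)).trans ?_
    linarith [mul_nonneg h.nonneg hrl.le]
  · refine (h.near_plane k p hp w hwE (by linarith [dist_triangle w x p])).trans ?_
    linarith [mul_le_mul_of_nonneg_left (rad_le_ten_mul_rad hl) h.nonneg]

variable [FiniteDimensional ℝ F]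

theorem exists_mem_near_frame (hx : x ∈ E ∩ ball 0 10) {v : F} (hv : (P k x).Q v = 0)
    (hv1 : ‖v‖ = 1) :
    ∃ w ∈ E, dist w x ≤ 9 / 10 * rad k ∧
      dist w (x + (rad k / 2) • v) ≤ 10 * (ε * rad k) := by
  have hr := rad_pos k
  have hz : dist (x + (rad k / 2) • v) x = rad k / 2 := by
    rw [dist_eq_norm, add_sub_cancel_left, norm_smul, hv1, mul_one,
      Real.norm_of_nonneg (by positivity)]
  obtain ⟨w, hwE, hwd⟩ := h.closed.exists_infDist_eq_dist ⟨x, hx.1⟩ (x + (rad k / 2) • v)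
  have hnear := h.near_set k x hx (x + (rad k / 2) • v)
    (by rw [NormalPlane.N_add, h.through k x hx, map_smul, hv, smul_zero, add_zero])
    (by rw [hz]; linarith)
  rw [hwd, dist_comm] at hnear
  have htri := dist_triangle w (x + (rad k / 2) • v) x
  exact ⟨w, hwE, by nlinarith [h.eps_le], hnear⟩

variable {L M : NormalPlane F} {κ B : ℝ}

theorem norm_Q_sub_Q_le_of_small (hx : x ∈ E ∩ ball 0 10) (hL : L.dim = d) (hM : M.dim = d)
    (hκ : 32 * d * κ ≤ 1) (hB : 32 * d * B ≤ 1)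
    (hw : ∀ w ∈ E, dist w x ≤ 9 / 10 * rad k → ∃ y ∈ E, dist y w ≤ κ * rad k ∧
      ‖L.N y‖ ≤ B * rad k ∧ ‖M.N y‖ ≤ B * rad k) :
    ‖L.Q - M.Q‖ ≤ 32 * d * B := by
  have hr := rad_pos k
  obtain ⟨y₀, -, hy₀x, hL₀, hM₀⟩ := hw x hx.1 (by rw [dist_self]; positivity)
  obtain ⟨u, hu, huK⟩ := (P k x).exists_orthonormal
  choose w hwE hwx hwu using fun i => h.exists_mem_near_frame hx (huK i) (hu.1 i)
  choose y _ hyw hLy hMy using fun i => hw (w i) (hwE i) (hwx i)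
  have hcard : Fintype.card (Fin (P k x).dim) = d := by rw [Fintype.card_fin, h.dim_eq k x hx]
  have hframe := NormalPlane.norm_Q_sub_Q_le_of_frame (ρ := rad k / 2) (τ := 20 * ε + 4 * κ)
    (b := 2 * B) (y := y) (y₀ := y₀) (hL.trans hcard.symm) (hM.trans hcard.symm) hu
    (by positivity) (fun i => ?_) (by rw [hcard]; linarith [h.small]) (by linarith)
    (fun i => by linarith [hLy i]) (by linarith) (fun i => by linarith [hMy i])
  · rw [hcard] at hframe
    linarith
  · have hsplit : y i - y₀ - (rad k / 2) • u i =
        (y i - (x + (rad k / 2) • u i)) - (y₀ - x) := by abel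
    rw [hsplit]
    refine (norm_sub_le _ _).trans ?_
    rw [← dist_eq_norm, ← dist_eq_norm]
    linarith [dist_triangle (y i) (w i) (x + (rad k / 2) • u i), hyw i, hwu i]

theorem norm_Q_sub_Q_le (hx : x ∈ E ∩ ball 0 10) (hL : L.dim = d) (hM : M.dim = d)
    (hκ : 32 * d * κ ≤ 1)
    (hw : ∀ w ∈ E, dist w x ≤ 9 / 10 * rad k → ∃ y ∈ E, dist y w ≤ κ * rad k ∧
      ‖L.N y‖ ≤ B * rad k ∧ ‖M.N y‖ ≤ B * rad k) :
    ‖L.Q - M.Q‖ ≤ 64 * d * B := by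
  rcases le_or_gt (32 * d * B) 1 with hB | hB
  · have := h.norm_Q_sub_Q_le_of_small hx hL hM hκ hB hw
    linarith [(norm_nonneg _).trans this]
  · linarith [norm_sub_le L.Q M.Q, L.norm_Q_le_one, M.norm_Q_le_one]

theorem norm_N_sub_N_le (hx : x ∈ E ∩ ball 0 10) (hL : L.dim = d) (hM : M.dim = d)
    (hκ : 32 * d * κ ≤ 1)
    (hw : ∀ w ∈ E, dist w x ≤ 9 / 10 * rad k → ∃ y ∈ E, dist y w ≤ κ * rad k ∧
      ‖L.N y‖ ≤ B * rad k ∧ ‖M.N y‖ ≤ B * rad k) (z : F) :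
    ‖L.N z - M.N z‖ ≤ 64 * d * B * (dist z x + rad k) := by
  have hr := rad_pos k
  have hd := h.one_le_dim
  obtain ⟨y₀, -, hy₀x, hL₀, hM₀⟩ := hw x hx.1 (by rw [dist_self]; positivity)
  have hB : 0 ≤ B := nonneg_of_mul_nonneg_left ((norm_nonneg _).trans hL₀) hr
  have hBr : B * rad k ≤ d * (B * rad k) := le_mul_of_one_le_left (by positivity) hd
  have hκ1 : 32 * κ ≤ 1 := by nlinarith
  have hzy : ‖z - y₀‖ ≤ dist z x + 1 / 32 * rad k := by
    rw [← dist_eq_norm]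
    nlinarith [dist_triangle_right z y₀ x]
  calc ‖L.N z - M.N z‖ ≤ 64 * d * B * ‖z - y₀‖ + (‖L.N y₀‖ + ‖M.N y₀‖) :=
        NormalPlane.norm_N_sub_N_le (h.norm_Q_sub_Q_le hx hL hM hκ hw) z y₀
    _ ≤ 64 * d * B * (dist z x + 1 / 32 * rad k) + (B * rad k + B * rad k) := by gcongr
    _ ≤ 64 * d * B * (dist z x + rad k) := by linarith [mul_nonneg hB hr.le]

theorem norm_Q_sub_Q_le_of_dist (hl : l = k ∨ l = k + 1) (hx : x ∈ E ∩ ball 0 10)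
    (hp : p ∈ E ∩ ball 0 10) (hxp : dist x p ≤ 9 * rad k) :
    ‖(P l x).Q - (P k p).Q‖ ≤ 6400 * d * ε :=
  (h.norm_Q_sub_Q_le hx (h.dim_eq l x hx) (h.dim_eq k p hp) (by simp)
    (h.norm_N_le_of_dist hl hx hp hxp)).trans_eq (by ring)

theorem norm_N_sub_N_le_of_dist (hl : l = k ∨ l = k + 1) (hx : x ∈ E ∩ ball 0 10)
    (hp : p ∈ E ∩ ball 0 10) (hxp : dist x p ≤ 9 * rad k) (z : F) :
    ‖(P l x).N z - (P k p).N z‖ ≤ 6400 * d * ε * (dist z x + rad k) := by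
  have hlk : rad l ≤ rad k := rad_antitone (by omega)
  have hdε : 0 ≤ 6400 * d * ε := by have := h.nonneg; positivity
  calc ‖(P l x).N z - (P k p).N z‖ ≤ 64 * d * (100 * ε) * (dist z x + rad l) :=
        h.norm_N_sub_N_le hx (h.dim_eq l x hx) (h.dim_eq k p hp) (by simp)
          (h.norm_N_le_of_dist hl hx hp hxp) z
    _ = 6400 * d * ε * (dist z x + rad l) := by ring
    _ ≤ 6400 * d * ε * (dist z x + rad k) := by gcongr

end Flat
end Flat

/-! ### Lower Ahlfors regularity -/

section LowerRegularity

variable {F : Type*} [NormedAddCommGroup F] [InnerProductSpace ℝ F]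

/-- The image of `a` under the `i` averaged steps of the generations from `k` on, without the
cutoff. -/
def PlaneData.push (D : PlaneData F) (k : ℕ) : ℕ → F → F
  | 0, a => a
  | i + 1, a => D.push k i a - D.avgN (k + i) (D.push k i a)

namespace Setup

variable {D : PlaneData F} {E : Set F} {R δ Λ : ℝ} (h : Setup D E R δ Λ)
include h

theorem continuousOn_avgN (k : ℕ) :
    ContinuousOn (D.avgN k) {a | ‖a‖ ≤ R - 1 ∧ IsNear E δ k a} := by
  have hr := rad_pos k
  have hΛ := h.one_le_Λ
  refine continuousOn_finsetSum _ fun j hj => ContinuousOn.smul ?_ ?_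
  · refine LipschitzOnWith.continuousOn (K := (Λ / rad k).toNNReal)
      (LipschitzOnWith.of_dist_le_mul fun a ha b hb => ?_)
    rw [Real.coe_toNNReal _ (by positivity), div_mul_eq_mul_div, le_div_iff₀ hr]
    refine le_trans ?_ ((h.part k).lip a b (h.exists_mem_dist_le ha.1 ha.2)
      (h.exists_mem_dist_le hb.1 hb.2))
    gcongr
    exact Finset.single_le_sum (f := fun j => |D.θ k a j - D.θ k b j|)
      (fun _ _ => abs_nonneg _) hj
  · unfold NormalPlane.N
    fun_prop

variable {k i : ℕ} {a w : F}

theorem norm_push_le_of_dist (ha : ‖a‖ ≤ R - 11 / 10)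
    (hd : dist (D.push k i a) a ≤ 40 * δ * (rad k - rad (k + i))) : ‖D.push k i a‖ ≤ R - 1 := by
  have hpush : ‖D.push k i a‖ ≤ ‖a‖ + dist (D.push k i a) a := by
    rw [dist_eq_norm, norm_sub_rev]
    exact norm_le_norm_add_norm_sub a _
  linarith [h.δ_rad_le k, h.δ_rad_nonneg (k + i), rad_le_one k]

variable [FiniteDimensional ℝ F]

theorem isNear_push_and_dist_le (ha : ‖a‖ ≤ R - 11 / 10) (hN : IsNear E δ k a) (i : ℕ) :
    IsNear E δ (k + i) (D.push k i a) ∧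
      dist (D.push k i a) a ≤ 40 * δ * (rad k - rad (k + i)) := by
  induction i with
  | zero => exact ⟨hN, by simp [PlaneData.push]⟩
  | succ i ih =>
    obtain ⟨hnear, hdist⟩ := ih
    have hR := h.norm_push_le_of_dist ha hdist
    refine ⟨h.isNear_succ hR hnear, ?_⟩
    have hstep : dist (D.push k (i + 1) a) (D.push k i a) ≤ 31 * (δ * rad (k + i)) := by
      rw [dist_eq_norm, PlaneData.push, sub_sub_cancel_left, norm_neg]
      exact h.norm_avgN_le hR hnear
    rw [← add_assoc, rad_succ]
    linarith [dist_triangle (D.push k (i + 1) a) (D.push k i a) a, h.δ_rad_nonneg (k + i)]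

theorem continuousOn_push (k i : ℕ) :
    ContinuousOn (D.push k i) {a | ‖a‖ ≤ R - 11 / 10 ∧ IsNear E δ k a} := by
  induction i with
  | zero => exact continuousOn_id
  | succ i ih =>
    refine ih.sub ((h.continuousOn_avgN (k + i)).comp ih fun a ha => ?_)
    obtain ⟨hnear, hdist⟩ := h.isNear_push_and_dist_le ha.1 ha.2 i
    exact ⟨h.norm_push_le_of_dist ha.1 hdist, hnear⟩

variable (hw : w ∈ E ∩ closedBall 0 (R - 19 / 10)) (hthrough : (D.plane k w).N w = 0)
include hw hthrough

theorem isNear_add_direction (t : (D.plane k w).direction) (ht : ‖t‖ ≤ 3 / 4 * rad k) :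
    ‖w + t‖ ≤ R - 11 / 10 ∧ IsNear E δ k (w + t) := by
  have hw' := mem_closedBall_zero_iff.1 hw.2
  have hδr := h.δ_rad_nonneg k
  constructor
  · linarith [norm_add_le w t, rad_le_one k, Submodule.coe_norm t]
  · obtain ⟨p, hp, hpd⟩ := h.closed.exists_infDist_eq_dist ⟨w, hw.1⟩ (w + t)
    have hnear := h.near_set k w ⟨hw.1, mem_closedBall_zero_iff.2 (by linarith)⟩ (w + t)
      (by rw [NormalPlane.N_add, hthrough, NormalPlane.mem_direction.1 t.2, add_zero])
      (by rw [dist_eq_norm, add_sub_cancel_left]; linarith [Submodule.coe_norm t, rad_pos k])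
    exact ⟨p, hp, by linarith⟩

/-- The projected push is continuous and close to the identity, so it covers by Brouwer. -/
theorem exists_push_proj_eq (i : ℕ) {s : (D.plane k w).direction} (hs : ‖s‖ < rad k / 2) :
    ∃ t : (D.plane k w).direction, ‖t‖ ≤ 3 / 4 * rad k ∧
      (D.plane k w).direction.orthogonalProjectionOnto (D.push k i (w + t) - w) = s := by
  have hr := rad_pos k
  have hstart (t) (ht : t ∈ closedBall (0 : (D.plane k w).direction) (3 / 4 * rad k)) :=
    h.isNear_add_direction hw hthrough t (mem_closedBall_zero_iff.1 ht)
  set T := (D.plane k w).direction.orthogonalProjectionOnto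
  have hclose : ∀ t ∈ closedBall (0 : (D.plane k w).direction) (3 / 4 * rad k),
      dist (T (D.push k i (w + t) - w)) t ≤ rad k / 250 := fun t ht => by
    have hpush := (h.isNear_push_and_dist_le (hstart t ht).1 (hstart t ht).2 i).2
    have hT : dist (T (D.push k i (w + t) - w)) t ≤ dist (D.push k i (w + t)) (w + t) := calc
      _ = ‖T (D.push k i (w + t) - (w + t))‖ := by
        rw [dist_eq_norm, ← sub_sub, map_sub T _ (t : F),
          Submodule.orthogonalProjectionOnto_mem_subspace_eq_self]
      _ ≤ _ := by
        rw [dist_eq_norm]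
        exact Submodule.norm_orthogonalProjectionOnto_apply_le _ _
    linarith [h.δ_rad_nonneg (k + i), h.δ_rad_le k]
  obtain ⟨t, ht, hts⟩ := exists_eq_of_dist_le (F := fun t => T (D.push k i (w + t) - w))
    (T.continuous.comp_continuousOn (((h.continuousOn_push k i).comp
      (by fun_prop) hstart).sub continuousOn_const)) hclose (y := s)
    (by rw [dist_zero_right]; linarith) (by positivity)
  exact ⟨t, mem_closedBall_zero_iff.1 ht, hts⟩

theorem exists_proj_eq {s : (D.plane k w).direction} (hs : ‖s‖ < rad k / 2) :
    ∃ y ∈ E ∩ closedBall w (rad k),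
      (D.plane k w).direction.orthogonalProjectionOnto (y - w) = s := by
  set T := (D.plane k w).direction.orthogonalProjectionOnto
  have hcl : IsClosed ((fun y => T (y - w)) '' (E ∩ closedBall w (rad k))) :=
    (((isCompact_closedBall w (rad k)).inter_left h.closed).image (by fun_prop)).isClosed
  refine hcl.closure_subset (Metric.mem_closure_iff.2 fun e he => ?_)
  obtain ⟨i, hi⟩ := ((tendsto_rad.comp (tendsto_add_atTop_nat k)).eventually
    (gt_mem_nhds he)).exists
  rw [Function.comp_apply, add_comm] at hi
  obtain ⟨t, ht, hts⟩ := h.exists_push_proj_eq hw hthrough i hs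
  obtain ⟨hR, hnear⟩ := h.isNear_add_direction hw hthrough t ht
  obtain ⟨⟨p, hp, hdp⟩, hpush⟩ := h.isNear_push_and_dist_le hR hnear i
  have hδr := h.δ_rad_le (k + i)
  have hrad := rad_antitone (Nat.le_add_right k i)
  refine ⟨T (p - w), ⟨p, ⟨hp, ?_⟩, rfl⟩, ?_⟩
  · have hwt : dist (w + t) w ≤ 3 / 4 * rad k := by
      rwa [dist_eq_norm, add_sub_cancel_left, ← Submodule.coe_norm]
    rw [dist_comm] at hdp
    rw [mem_closedBall]
    linarith [dist_triangle4 p (D.push k i (w + t)) (w + t) w, h.δ_rad_nonneg (k + i),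
      h.δ_rad_le k]
  · rw [← hts, dist_eq_norm, ← map_sub, sub_sub_sub_cancel_right]
    refine (Submodule.norm_orthogonalProjectionOnto_apply_le _ _).trans_lt ?_
    rw [← dist_eq_norm]
    linarith [rad_pos (k + i)]

end Setup

theorem PlaneSys.exists_setup [FiniteDimensional ℝ F] {D : PlaneData F} {E : Set F} {R δ : ℝ}
    (h : PlaneSys D E R δ) (hE : IsClosed E) (hδ : 0 ≤ δ)
    (hs : 10000 * (8 * 5 ^ Module.finrank ℝ F) ^ 2 * δ ≤ 1) :
    ∃ X θ, Setup { D with X := X, θ := θ } E R δ (8 * 5 ^ Module.finrank ℝ F) := by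
  have hK : IsCompact (E ∩ closedBall 0 R) := (isCompact_closedBall 0 R).inter_left hE
  choose X θ hX using fun k => exists_partUnity hK (rad_pos k)
  have hpow : (1 : ℝ) ≤ 5 ^ Module.finrank ℝ F := one_le_pow₀ (by norm_num)
  exact ⟨X, θ, ⟨⟨h.near_plane, h.near_set, h.b_nonneg, h.b_le, h.norm_Q_sub_le, h.norm_N_sub_le⟩,
    hE, hX, hδ, by linarith, hs⟩⟩

theorem Flat.planeSys [FiniteDimensional ℝ F] {E : Set F} {d : ℕ} {ε : ℝ}
    {P : ℕ → F → NormalPlane F} (h : Flat E d ε P) (X : ℕ → Finset F) (θ : ℕ → F → F → ℝ) :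
    PlaneSys ⟨P, fun _ _ => 100000 * d * ε, X, θ⟩ E 9 (100000 * d * ε) := by
  have hdε : ε ≤ d * ε := le_mul_of_one_le_left h.nonneg h.one_le_dim
  have hdε0 : 0 ≤ d * ε := h.nonneg.trans hdε
  have hmem {x : F} (hx : x ∈ E ∩ closedBall 0 9) : x ∈ E ∩ ball 0 10 :=
    ⟨hx.1, closedBall_subset_ball (by norm_num) hx.2⟩
  have hle (k) : 10 * (ε * rad k) ≤ 100000 * d * ε * rad k := by
    linarith [mul_le_mul_of_nonneg_right hdε (rad_pos k).le, mul_nonneg hdε0 (rad_pos k).le]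
  constructor
  case near_plane =>
    intro k x hx y hy hyx
    exact (h.near_plane k x (hmem hx) y hy (by linarith [rad_pos k])).trans (hle k)
  case near_set =>
    intro k x hx z hz hzx
    exact (h.near_set k x (hmem hx) z hz (by linarith [rad_pos k])).trans (hle k)
  case b_nonneg => exact fun _ _ => by dsimp only; linarith
  case b_le => exact fun _ _ => le_rfl
  case norm_Q_sub_le =>
    intro k l hl x hx p hp hxp
    refine (h.norm_Q_sub_Q_le_of_dist hl (hmem hx) (hmem hp) (by linarith [rad_pos k])).trans ?_
    linarith
  case norm_N_sub_le =>
    intro k l hl x hx p hp hxp z hz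
    refine (h.norm_N_sub_N_le_of_dist hl (hmem hx) (hmem hp) (by linarith [rad_pos k]) z).trans ?_
    have hzx : dist z x ≤ 10 * rad k := by linarith [dist_triangle_right z x p]
    dsimp only
    linarith [mul_le_mul_of_nonneg_left hzx hdε0, mul_nonneg hdε0 (rad_pos k).le]

theorem norm_toLp_le_card_mul {ι : Type*} [Fintype ι] (s : ι → ℝ) :
    ‖WithLp.toLp 2 s‖ ≤ Fintype.card ι * ‖s‖ := by
  refine le_of_sq_le_sq ?_ (by positivity)
  rw [EuclideanSpace.real_norm_sq_eq]
  calc ∑ i, s i ^ 2 ≤ ∑ _i : ι, ‖s‖ ^ 2 := Finset.sum_le_sum fun i _ =>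
        sq_le_sq.2 ((norm_le_pi_norm s i).trans (le_abs_self _))
    _ = Fintype.card ι * ‖s‖ ^ 2 := by simp
    _ ≤ Fintype.card ι ^ 2 * ‖s‖ ^ 2 := by
        gcongr
        exact_mod_cast Nat.le_self_pow two_ne_zero _
    _ = (Fintype.card ι * ‖s‖) ^ 2 := by ring

theorem ofReal_pow_le_hausdorffMeasure {X : Type*} [MetricSpace X] [MeasurableSpace X]
    [BorelSpace X] {ι : Type*} [Fintype ι] [Nonempty ι] {f : X → EuclideanSpace ℝ ι}
    (hf : LipschitzWith 1 f) {A : Set X} {ρ : ℝ} (hρ : 0 < ρ) (hA : ball 0 ρ ⊆ f '' A) :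
    ENNReal.ofReal ((2 * (ρ / Fintype.card ι)) ^ Fintype.card ι) ≤ μH[Fintype.card ι] A := by
  have hcard : (0 : ℝ) < Fintype.card ι := mod_cast Fintype.card_pos
  have hg : LipschitzWith 1 fun x => WithLp.ofLp (f x) := by
    simpa only [one_mul, Function.comp_def] using (PiLp.lipschitzWith_ofLp 2 fun _ : ι => ℝ).comp hf
  have hsub : ball (0 : ι → ℝ) (ρ / Fintype.card ι) ⊆ (fun x => WithLp.ofLp (f x)) '' A := by
    intro s hs
    rw [mem_ball_zero_iff, lt_div_iff₀ hcard] at hs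
    obtain ⟨x, hx, hxs⟩ := hA (mem_ball_zero_iff.2
      ((norm_toLp_le_card_mul s).trans_lt (by linarith)))
    exact ⟨x, hx, congrArg WithLp.ofLp hxs⟩
  calc ENNReal.ofReal ((2 * (ρ / Fintype.card ι)) ^ Fintype.card ι)
      = μH[Fintype.card ι] (ball (0 : ι → ℝ) (ρ / Fintype.card ι)) := by
        rw [hausdorffMeasure_pi_real, Real.volume_pi_ball _ (by positivity)]
    _ ≤ μH[Fintype.card ι] ((fun x => WithLp.ofLp (f x)) '' A) := measure_mono hsub
    _ ≤ μH[Fintype.card ι] A := by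
        simpa only [ENNReal.coe_one, ENNReal.one_rpow, one_mul] using
          hg.hausdorffMeasure_image_le hcard.le A

theorem Flat.ofReal_pow_le_hausdorffMeasure [FiniteDimensional ℝ F] [MeasurableSpace F]
    [BorelSpace F] {E : Set F} {d : ℕ} {ε : ℝ} {P : ℕ → F → NormalPlane F} (h : Flat E d ε P)
    (hs : 10000 * (8 * 5 ^ Module.finrank ℝ F) ^ 2 * (100000 * d * ε) ≤ 1) (k : ℕ) {w : F}
    (hw : w ∈ E ∩ closedBall 0 (71 / 10)) :
    ENNReal.ofReal ((rad k / d) ^ d) ≤ μH[d] (E ∩ closedBall w (rad k)) := by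
  have hε := h.nonneg
  have hd := h.dim_pos
  have hw10 : w ∈ E ∩ ball 0 10 := ⟨hw.1, closedBall_subset_ball (by norm_num) hw.2⟩
  obtain ⟨X, θ, hS⟩ := (h.planeSys (fun _ => ∅) 0).exists_setup h.closed (by positivity) hs
  obtain rfl : Module.finrank ℝ (P k w).direction = d := h.dim_eq k w hw10
  have : Nonempty (Fin (Module.finrank ℝ (P k w).direction)) := ⟨⟨0, hd⟩⟩
  set T := (P k w).direction.orthogonalProjectionOnto
  let e := (stdOrthonormalBasis ℝ (P k w).direction).repr
  have hf : LipschitzWith 1 fun y => e (T (y - w)) := LipschitzWith.of_dist_le_mul fun x y => by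
    rw [e.dist_map, dist_eq_norm, ← map_sub, sub_sub_sub_cancel_right, NNReal.coe_one, one_mul,
      dist_eq_norm]
    exact Submodule.norm_orthogonalProjectionOnto_apply_le _ _
  have hcover : ball 0 (rad k / 2) ⊆ (fun y => e (T (y - w))) '' (E ∩ closedBall w (rad k)) := by
    intro s hs
    obtain ⟨y, hy, hys⟩ := hS.exists_proj_eq (k := k)
      ⟨hw.1, closedBall_subset_closedBall (by norm_num) hw.2⟩ (h.through k w hw10)
      (s := e.symm s) (by rwa [e.symm.norm_map, ← mem_ball_zero_iff])
    exact ⟨y, hy, by rw [← e.apply_symm_apply s, ← hys]⟩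
  have hmain := _root_.ofReal_pow_le_hausdorffMeasure hf (half_pos (rad_pos k)) hcover
  rw [Fintype.card_fin] at hmain
  convert hmain using 3
  ring

end LowerRegularity

theorem exists_mem_le_of_setLIntegral_lt {α : Type*} [MeasurableSpace α] {μ : Measure α} {S : Set α}
    (hS : MeasurableSet S) {f : α → ℝ≥0∞} {t : ℝ≥0∞} (hlt : ∫⁻ y in S, f y ∂μ < t * μ S) :
    ∃ y ∈ S, f y ≤ t := by
  by_contra! hc
  refine hlt.not_ge ?_
  rw [← setLIntegral_const]
  exact setLIntegral_mono' hS fun y hy => (hc y hy).le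

/-! ### Planes controlled by Jones numbers -/

section ClosePlane

variable {F : Type*} [NormedAddCommGroup F] [InnerProductSpace ℝ F]

/-- `L` is an `η`-perturbation at scale `r` of the plane `S`, which is meant to pass through `x`. -/
structure IsClosePlane (S : NormalPlane F) (x : F) (r η : ℝ) (L : NormalPlane F) : Prop where
  dim_eq : L.dim = S.dim
  norm_Q_sub_le : ‖L.Q - S.Q‖ ≤ η
  norm_N_le : ‖L.N x‖ ≤ η * r

theorem IsClosePlane.norm_N_sub_N_le {S L : NormalPlane F} {x : F} {r η : ℝ}
    (h : IsClosePlane S x r η L) (hS : S.N x = 0) (z : F) :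
    ‖L.N z - S.N z‖ ≤ η * (dist z x + r) := by
  have hN := NormalPlane.norm_N_sub_N_le h.norm_Q_sub_le z x
  rw [hS, norm_zero, add_zero] at hN
  rw [dist_eq_norm]
  linarith [h.norm_N_le]

theorem NormalPlane.continuous_N (L : NormalPlane F) : Continuous L.N :=
  L.Q.continuous.comp (continuous_id.sub continuous_const)

variable [MeasurableSpace F] [BorelSpace F] {E : Set F} {d : ℕ} {x p : F} {r s η : ℝ}
  {L : NormalPlane F}

/-- The integral over `E ∩ ball x r` of the distance to the plane `L`. It is what the Jones number
`β₁(x, r)` minimizes over `L`, before normalization. -/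
def l1Dist (E : Set F) (d : ℕ) (x : F) (r : ℝ) (L : NormalPlane F) : ℝ≥0∞ :=
  ∫⁻ y in E ∩ ball x r, ENNReal.ofReal ‖L.N y‖ ∂μH[(d : ℝ)]

theorem l1Dist_mono (h : r + dist x p ≤ s) : l1Dist E d x r L ≤ l1Dist E d p s L :=
  lintegral_mono_set (inter_subset_inter_right _ (ball_subset_ball' h))

/-- Among the `η`-perturbations of `S`, the plane `L` minimizes the `L¹` distance to
`E ∩ ball x (10 * r)` up to an error which is small compared to the scale. -/
structure IsAlmostMinPlane (E : Set F) (d : ℕ) (S : NormalPlane F) (x : F) (r η : ℝ)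
    (L : NormalPlane F) : Prop extends IsClosePlane S x r η L where
  l1Dist_le : ∀ L', IsClosePlane S x r η L' →
    l1Dist E d x (10 * r) L ≤ l1Dist E d x (10 * r) L' + ENNReal.ofReal (r * r ^ (d + 1))

theorem exists_isAlmostMinPlane (E : Set F) (d : ℕ) {S : NormalPlane F} (hS : S.N x = 0)
    (hη : 0 ≤ η) (hr : 0 < r) : ∃ L, IsAlmostMinPlane E d S x r η L := by
  have hSS : IsClosePlane S x r η S :=
    ⟨rfl, by simpa using hη, by simpa [hS] using mul_nonneg hη hr.le⟩
  let I : {L // IsClosePlane S x r η L} → ℝ≥0∞ := fun L => l1Dist E d x (10 * r) L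
  rcases eq_or_ne (⨅ L, I L) ⊤ with htop | hne
  · refine ⟨S, hSS, fun L' h' => ?_⟩
    have hL' : l1Dist E d x (10 * r) L' = ⊤ := iInf_eq_top.1 htop ⟨L', h'⟩
    simp [hL']
  · have hlt : ⨅ L, I L < (⨅ L, I L) + ENNReal.ofReal (r * r ^ (d + 1)) :=
      ENNReal.lt_add_right hne (by simp only [ne_eq, ENNReal.ofReal_eq_zero, not_le]; positivity)
    obtain ⟨⟨L, hL⟩, hq⟩ := iInf_lt_iff.1 hlt
    exact ⟨L, hL, fun L' h' => hq.le.trans (by gcongr; exact iInf_le I ⟨L', h'⟩)⟩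

theorem exists_mem_norm_N_le_of_l1Dist_add_lt {M : NormalPlane F} {S : Set F}
    (hS : MeasurableSet S) (hSx : S ⊆ E ∩ ball x r) {t : ℝ} (ht : 0 ≤ t)
    (hlt : l1Dist E d x r L + l1Dist E d x r M < ENNReal.ofReal t * μH[(d : ℝ)] S) :
    ∃ y ∈ S, ‖L.N y‖ ≤ t ∧ ‖M.N y‖ ≤ t := by
  have hint : ∫⁻ y in S, (ENNReal.ofReal ‖L.N y‖ + ENNReal.ofReal ‖M.N y‖) ∂μH[(d : ℝ)] ≤
      l1Dist E d x r L + l1Dist E d x r M := by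
    rw [lintegral_add_left L.continuous_N.norm.measurable.ennreal_ofReal]
    exact add_le_add (lintegral_mono_set hSx) (lintegral_mono_set hSx)
  obtain ⟨y, hyS, hy⟩ := exists_mem_le_of_setLIntegral_lt hS (hint.trans_lt hlt)
  rw [← ENNReal.ofReal_add (norm_nonneg _) (norm_nonneg _), ENNReal.ofReal_le_ofReal_iff ht] at hy
  exact ⟨y, hyS, by linarith [norm_nonneg (M.N y)], by linarith [norm_nonneg (L.N y)]⟩

end ClosePlane

/-- The factor lost when Chebyshev's inequality turns the `L¹` distance to a plane into a pointwise
distance at `rad (32 * d)`-dense points, given the lower regularity bound `(r / d) ^ d` for the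
measure of a ball. -/
def chebConst (d : ℕ) : ℝ := 3 * (d / rad (32 * d)) ^ d

/-- The ratio between the variation of almost minimizing planes and the Jones numbers. -/
def betaConst (d : ℕ) : ℝ := 10000 * d * (chebConst d * 1000 ^ (d + 1))

theorem rad_add (k l : ℕ) : rad (k + l) = rad k * rad l := pow_add _ _ _

theorem chebConst_nonneg (d : ℕ) : 0 ≤ chebConst d := by
  have := rad_pos (32 * d)
  unfold chebConst
  positivity

theorem betaConst_nonneg (d : ℕ) : 0 ≤ betaConst d := by
  have := chebConst_nonneg d
  unfold betaConst
  positivity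

theorem mul_rad_le_one (d : ℕ) : 32 * d * rad (32 * d) ≤ 1 := by
  have hlt : ((32 * d : ℕ) : ℝ) ≤ 10 ^ (32 * d) := mod_cast (Nat.lt_pow_self (by norm_num)).le
  rw [rad, one_div, inv_pow, ← div_eq_mul_inv, div_le_one (by positivity)]
  exact_mod_cast hlt

theorem chebConst_mul_rad_pow {d : ℕ} (hd : 0 < d) (l : ℕ) (B : ℝ) :
    chebConst d * B * rad l * (rad (32 * d + l) / d) ^ d = 3 * (B * rad l ^ (d + 1)) := by
  have := rad_pos (32 * d)
  rw [chebConst, rad_add, div_pow, div_pow, mul_pow]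
  field_simp
  ring

theorem mul_rad_pow_le {d k l : ℕ} (hl : l = k ∨ l = k + 1) {B : ℝ} (hB : 0 ≤ B) :
    B * (100 * rad k) ^ (d + 1) ≤ B * 1000 ^ (d + 1) * rad l ^ (d + 1) := by
  have := rad_pos k
  rw [mul_assoc, ← mul_pow]
  exact mul_le_mul_of_nonneg_left
    (pow_le_pow_left₀ (by positivity) (by linarith [rad_le_ten_mul_rad hl]) _) hB

theorem mem_ball_ten {F : Type*} [SeminormedAddCommGroup F] {E : Set F} {x : F}
    (hx : x ∈ E ∩ closedBall 0 7) : x ∈ E ∩ ball 0 10 :=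
  inter_subset_inter_right _ (closedBall_subset_ball (by norm_num)) hx

namespace Flat

variable {F : Type*} [NormedAddCommGroup F] [InnerProductSpace ℝ F] [FiniteDimensional ℝ F]
  [MeasurableSpace F] [BorelSpace F] {E : Set F} {d : ℕ} {ε : ℝ} {P : ℕ → F → NormalPlane F}
  (h : Flat E d ε P) (hs : 10000 * (8 * 5 ^ Module.finrank ℝ F) ^ 2 * (100000 * d * ε) ≤ 1)
  {k l : ℕ} {x p w : F} {B : ℝ} {L M : NormalPlane F}

include h hs

theorem exists_mem_norm_N_le (hl : 2 ≤ l) (hx : x ∈ E ∩ closedBall 0 7) (hB : 0 < B)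
    (hL : l1Dist E d x (rad l) L ≤ ENNReal.ofReal (B * rad l ^ (d + 1)))
    (hM : l1Dist E d x (rad l) M ≤ ENNReal.ofReal (B * rad l ^ (d + 1)))
    (hw : w ∈ E) (hwx : dist w x ≤ 9 / 10 * rad l) :
    ∃ y ∈ E, dist y w ≤ rad (32 * d) * rad l ∧ ‖L.N y‖ ≤ chebConst d * B * rad l ∧
      ‖M.N y‖ ≤ chebConst d * B * rad l := by
  have hr := rad_pos l
  have hC := chebConst_nonneg d
  have hr2 : rad l ≤ 1 / 100 := (rad_antitone hl).trans (by norm_num [rad])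
  have hrκ : rad (32 * d + l) ≤ 1 / 32 * rad l := by
    rw [rad_add]
    gcongr
    nlinarith [mul_rad_le_one d, h.one_le_dim, rad_pos (32 * d)]
  have hw7 : w ∈ closedBall (0 : F) (71 / 10) := by
    have := dist_triangle w x 0
    have := mem_closedBall.1 hx.2
    exact mem_closedBall.2 (by linarith)
  set S := E ∩ closedBall w (rad (32 * d + l))
  have hSx : S ⊆ E ∩ ball x (rad l) :=
    inter_subset_inter_right _ (closedBall_subset_ball' (by linarith))
  have hlt : l1Dist E d x (rad l) L + l1Dist E d x (rad l) M <
      ENNReal.ofReal (chebConst d * B * rad l) * μH[(d : ℝ)] S := calc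
    _ ≤ ENNReal.ofReal (2 * (B * rad l ^ (d + 1))) := by
      rw [two_mul, ENNReal.ofReal_add (by positivity) (by positivity)]
      exact add_le_add hL hM
    _ < ENNReal.ofReal (3 * (B * rad l ^ (d + 1))) :=
      (ENNReal.ofReal_lt_ofReal_iff (by positivity)).2 (by gcongr; norm_num)
    _ ≤ _ := by
      rw [← chebConst_mul_rad_pow h.dim_pos, ENNReal.ofReal_mul (by positivity)]
      gcongr
      exact h.ofReal_pow_le_hausdorffMeasure hs _ ⟨hw, hw7⟩
  obtain ⟨y, ⟨hyE, hyw⟩, hy⟩ := exists_mem_norm_N_le_of_l1Dist_add_lt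
    (h.closed.measurableSet.inter isClosed_closedBall.measurableSet) hSx (by positivity) hlt
  exact ⟨y, hyE, by rwa [← rad_add], hy⟩

theorem isClosePlane_of_l1Dist_le (hl : 2 ≤ l) (hx : x ∈ E ∩ closedBall 0 7) (hL : L.dim = d)
    (hB : 0 < B) (hI : l1Dist E d x (rad l) L ≤ ENNReal.ofReal (B * rad l ^ (d + 1)))
    (hBε : chebConst d * B ≤ 10 * ε) :
    IsClosePlane (P l x) x (rad l) (640 * d * ε) L := by
  have hr := rad_pos l
  have hx10 := mem_ball_ten hx
  have hw : ∀ w ∈ E, dist w x ≤ 9 / 10 * rad l → ∃ y ∈ E, dist y w ≤ rad (32 * d) * rad l ∧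
      ‖L.N y‖ ≤ 10 * ε * rad l ∧ ‖(P l x).N y‖ ≤ 10 * ε * rad l := fun w hw hwx => by
    obtain ⟨y, hy, hyw, hLy, -⟩ := h.exists_mem_norm_N_le hs hl hx hB hI hI hw hwx
    have hyx : dist y x < 10 * rad l := by
      have : rad (32 * d) * rad l ≤ 1 * rad l := by gcongr; exact rad_le_one _
      linarith [dist_triangle y w x]
    refine ⟨y, hy, hyw, hLy.trans (by gcongr), (h.near_plane l x hx10 y hy hyx).trans_eq ?_⟩
    ring
  have hdim := h.dim_eq l x hx10
  have hN := h.norm_N_sub_N_le hx10 hL hdim (mul_rad_le_one d) hw x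
  rw [h.through l x hx10, sub_zero, dist_self, zero_add] at hN
  refine ⟨hL.trans hdim.symm, ?_, by linarith⟩
  linarith [h.norm_Q_sub_Q_le hx10 hL hdim (mul_rad_le_one d) hw]

theorem l1Dist_le_of_isAlmostMinPlane (hk : 2 ≤ k) (hl : l = k ∨ l = k + 1)
    (hx : x ∈ E ∩ closedBall 0 7) (hxp : dist x p ≤ 5 * rad k) (hkB : rad k ≤ B) (hM : M.dim = d)
    (hI : l1Dist E d p (100 * rad k) M ≤ ENNReal.ofReal (B * (100 * rad k) ^ (d + 1)))
    (hBε : chebConst d * (B * 1000 ^ (d + 1)) ≤ 10 * ε)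
    (hL : IsAlmostMinPlane E d (P l x) x (rad l) (640 * d * ε) L) :
    l1Dist E d x (10 * rad l) L ≤ ENNReal.ofReal (2 * (B * (100 * rad k) ^ (d + 1))) := by
  have hrk := rad_pos k
  have hrl := rad_pos l
  have hB : 0 < B := hrk.trans_le hkB
  have hlk : rad l ≤ rad k := rad_antitone (by omega)
  have hM' : l1Dist E d x (10 * rad l) M ≤ ENNReal.ofReal (B * (100 * rad k) ^ (d + 1)) :=
    (l1Dist_mono (by linarith)).trans hI
  have hclose : IsClosePlane (P l x) x (rad l) (640 * d * ε) M := by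
    refine h.isClosePlane_of_l1Dist_le hs (by omega) hx hM (by positivity) ?_ hBε
    refine (l1Dist_mono (by rw [dist_self]; linarith)).trans
      (hM'.trans (ENNReal.ofReal_le_ofReal ?_))
    exact mul_rad_pow_le hl hB.le
  have hrad : rad l * rad l ^ (d + 1) ≤ B * (100 * rad k) ^ (d + 1) := by
    gcongr <;> linarith
  calc l1Dist E d x (10 * rad l) L
      ≤ l1Dist E d x (10 * rad l) M + ENNReal.ofReal (rad l * rad l ^ (d + 1)) :=
        hL.l1Dist_le M hclose
    _ ≤ ENNReal.ofReal (B * (100 * rad k) ^ (d + 1)) +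
        ENNReal.ofReal (B * (100 * rad k) ^ (d + 1)) :=
      add_le_add hM' (ENNReal.ofReal_le_ofReal hrad)
    _ = ENNReal.ofReal (2 * (B * (100 * rad k) ^ (d + 1))) := by
      rw [two_mul, ENNReal.ofReal_add (by positivity) (by positivity)]

end Flat

section Coherence

variable {F : Type*} [NormedAddCommGroup F] [InnerProductSpace ℝ F]

/-- The planes `L` and `M` differ by at most `B` at scale `r` near `p`. -/
structure AreClose (L M : NormalPlane F) (p : F) (r B : ℝ) : Prop where
  norm_Q_sub_le : ‖L.Q - M.Q‖ ≤ B
  norm_N_sub_le : ∀ z, dist z p ≤ 5 * r → ‖L.N z - M.N z‖ ≤ B * r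

theorem AreClose.min {L M : NormalPlane F} {p : F} {r B B' : ℝ} (hr : 0 ≤ r)
    (h : AreClose L M p r B) (h' : AreClose L M p r B') : AreClose L M p r (min B B') where
  norm_Q_sub_le := le_min h.norm_Q_sub_le h'.norm_Q_sub_le
  norm_N_sub_le z hz := by
    rw [min_mul_of_nonneg _ _ hr]
    exact le_min (h.norm_N_sub_le z hz) (h'.norm_N_sub_le z hz)

end Coherence

section PlaneBound

variable {F : Type*} {d : ℕ} {δ : ℝ} {β : ℕ → F → ℝ}

/-- The bound for the variation of the almost minimizing planes of generation `k` near `p`, in terms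
of the Jones numbers `β` two generations earlier. The minimum keeps the bound small also where the
Jones numbers are large. -/
def planeBound (d : ℕ) (δ : ℝ) (β : ℕ → F → ℝ) : ℕ → F → ℝ
  | 0, _ | 1, _ => δ
  | k + 2, p => min δ (betaConst d * (β k p + rad (k + 2)))

theorem planeBound_nonneg (hδ : 0 ≤ δ) (hβ : ∀ k p, 0 ≤ β k p) (k : ℕ) (p : F) :
    0 ≤ planeBound d δ β k p := by
  match k with
  | 0 | 1 => exact hδ
  | k + 2 =>
    exact le_min hδ (mul_nonneg (betaConst_nonneg d) (add_nonneg (hβ k p) (rad_pos _).le))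

theorem planeBound_le (k : ℕ) (p : F) : planeBound d δ β k p ≤ δ := by
  match k with
  | 0 | 1 => exact le_rfl
  | k + 2 => exact min_le_left _ _

theorem planeBound_add_two_le (k : ℕ) (p : F) :
    planeBound d δ β (k + 2) p ≤ betaConst d * (β k p + rad (k + 2)) := min_le_right _ _

end PlaneBound

namespace Flat

variable {F : Type*} [NormedAddCommGroup F] [InnerProductSpace ℝ F] [MeasurableSpace F]
  [BorelSpace F] {E : Set F} {d : ℕ} {ε : ℝ} {P A : ℕ → F → NormalPlane F}
  (h : Flat E d ε P) (hA : ∀ k, ∀ x ∈ E ∩ closedBall 0 7,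
    IsAlmostMinPlane E d (P k x) x (rad k) (640 * d * ε) (A k x))
  {k l : ℕ} {x p : F}
include h hA

theorem norm_N_sub_N_le_of_isAlmostMinPlane (hx : x ∈ E ∩ closedBall 0 7) {z : F}
    (hz : dist z x ≤ 5 * rad k) :
    ‖(A k x).N z - (P k x).N z‖ ≤ 3840 * (d * ε * rad k) := by
  have := h.nonneg
  calc ‖(A k x).N z - (P k x).N z‖ ≤ 640 * d * ε * (dist z x + rad k) :=
        (hA k x hx).norm_N_sub_N_le (h.through k x (mem_ball_ten hx)) z
    _ ≤ 640 * d * ε * (5 * rad k + rad k) := by gcongr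
    _ = 3840 * (d * ε * rad k) := by ring

theorem norm_N_le_of_isAlmostMinPlane (hx : x ∈ E ∩ closedBall 0 7) {y : F} (hy : y ∈ E)
    (hyx : dist y x ≤ 5 * rad k) : ‖(A k x).N y‖ ≤ 100000 * d * ε * rad k := by
  have hcmp := h.norm_N_sub_N_le_of_isAlmostMinPlane hA hx hyx
  have hP := h.near_plane k x (mem_ball_ten hx) y hy (by linarith [rad_pos k])
  have htri := norm_le_norm_add_norm_sub' ((A k x).N y) ((P k x).N y)
  linarith [h.eps_mul_rad_le k]

theorem infDist_le_of_isAlmostMinPlane (hx : x ∈ E ∩ closedBall 0 7) {z : F}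
    (hz : (A k x).N z = 0) (hzx : dist z x ≤ 5 * rad k) :
    infDist z E ≤ 100000 * d * ε * rad k := by
  have hr := rad_pos k
  have hx10 := mem_ball_ten hx
  have hcmp := h.norm_N_sub_N_le_of_isAlmostMinPlane hA hx hzx
  rw [hz, zero_sub, norm_neg] at hcmp
  set L := P k x
  have hdist : dist (z - L.N z) x ≤ dist z x := by
    have hN : L.N z = L.Q (z - x) := by
      rw [← L.N_sub_N, h.through k x hx10, sub_zero]
    rw [dist_eq_norm, dist_eq_norm, hN, sub_right_comm]
    exact L.norm_sub_Q_le _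
  have hset := h.near_set k x hx10 (z - L.N z) (L.N_sub_N_self z) (by linarith)
  have htri := infDist_le_infDist_add_dist (s := E) (x := z) (y := z - L.N z)
  rw [dist_self_sub_right] at htri
  linarith [h.eps_mul_rad_le k]

variable [FiniteDimensional ℝ F]

section L1Dist

variable {B : ℝ} {M : NormalPlane F}
  (hs : 10000 * (8 * 5 ^ Module.finrank ℝ F) ^ 2 * (100000 * d * ε) ≤ 1) (hk : 2 ≤ k)
  (hl : l = k ∨ l = k + 1) (hx : x ∈ E ∩ closedBall 0 7) (hp : p ∈ E ∩ closedBall 0 7)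
  (hxp : dist x p ≤ 5 * rad k) (hkB : rad k ≤ B) (hM : M.dim = d)
  (hI : l1Dist E d p (100 * rad k) M ≤ ENNReal.ofReal (B * (100 * rad k) ^ (d + 1)))
  (hBε : chebConst d * (B * 1000 ^ (d + 1)) ≤ 10 * ε)
include hs hk hl hx hp hxp hkB hM hI hBε

theorem exists_mem_norm_N_le_of_isAlmostMinPlane {w : F} (hw : w ∈ E)
    (hwx : dist w x ≤ 9 / 10 * rad l) :
    ∃ y ∈ E, dist y w ≤ rad (32 * d) * rad l ∧
      ‖(A l x).N y‖ ≤ chebConst d * (2 * (B * 1000 ^ (d + 1))) * rad l ∧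
      ‖(A k p).N y‖ ≤ chebConst d * (2 * (B * 1000 ^ (d + 1))) * rad l := by
  have hrl := rad_pos l
  have hB : 0 < B := (rad_pos k).trans_le hkB
  have hlk : rad l ≤ rad k := rad_antitone (by omega)
  have hJ : ENNReal.ofReal (2 * (B * (100 * rad k) ^ (d + 1))) ≤
      ENNReal.ofReal (2 * (B * 1000 ^ (d + 1)) * rad l ^ (d + 1)) := by
    refine ENNReal.ofReal_le_ofReal ?_
    linarith [mul_rad_pow_le (d := d) hl hB.le]
  have hAx := h.l1Dist_le_of_isAlmostMinPlane hs hk hl hx hxp hkB hM hI hBε (hA l x hx)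
  have hAp := h.l1Dist_le_of_isAlmostMinPlane hs hk (Or.inl rfl) hp
    (by rw [dist_self]; linarith) hkB hM hI hBε (hA k p hp)
  exact h.exists_mem_norm_N_le hs (by omega) hx (by positivity)
    ((l1Dist_mono (by rw [dist_self]; linarith)).trans (hAx.trans hJ))
    ((l1Dist_mono (by linarith)).trans (hAp.trans hJ)) hw hwx

theorem areClose_of_l1Dist_le : AreClose (A l x) (A k p) p (rad k) (betaConst d * B) := by
  have hrk := rad_pos k
  have hB : 0 < B := hrk.trans_le hkB
  have hC := chebConst_nonneg d
  have hlk : rad l ≤ rad k := rad_antitone (by omega)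
  have hdim : ∀ j, ∀ y ∈ E ∩ closedBall 0 7, (A j y).dim = d := fun j y hy =>
    (hA j y hy).dim_eq.trans (h.dim_eq j y (mem_ball_ten hy))
  have hw := fun w => h.exists_mem_norm_N_le_of_isAlmostMinPlane hA hs hk hl hx hp hxp hkB hM hI
    hBε (w := w)
  set B' := chebConst d * (2 * (B * 1000 ^ (d + 1)))
  have hconst : 64 * d * B' * 12 ≤ betaConst d * B := by
    have : 0 ≤ d * (chebConst d * (B * 1000 ^ (d + 1))) := by positivity
    rw [betaConst]
    linarith
  have hx10 := mem_ball_ten hx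
  constructor
  · have := h.norm_Q_sub_Q_le hx10 (hdim l x hx) (hdim k p hp) (mul_rad_le_one d) hw
    linarith [(norm_nonneg _).trans this]
  · intro z hz
    calc ‖(A l x).N z - (A k p).N z‖ ≤ 64 * d * B' * (dist z x + rad l) :=
          h.norm_N_sub_N_le hx10 (hdim l x hx) (hdim k p hp) (mul_rad_le_one d) hw z
      _ ≤ 64 * d * B' * (12 * rad k) := by
          gcongr
          linarith [dist_triangle_right z x p]
      _ ≤ betaConst d * B * rad k := by rw [← mul_assoc]; gcongr

end L1Dist

theorem areClose_of_dist_le (hl : l = k ∨ l = k + 1) (hx : x ∈ E ∩ closedBall 0 7)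
    (hp : p ∈ E ∩ closedBall 0 7) (hxp : dist x p ≤ 5 * rad k) :
    AreClose (A l x) (A k p) p (rad k) (100000 * d * ε) := by
  have hr := rad_pos k
  have hε := h.nonneg
  have hlk : rad l ≤ rad k := rad_antitone (by omega)
  have hxp9 : dist x p ≤ 9 * rad k := by linarith
  constructor
  · have hQ := h.norm_Q_sub_Q_le_of_dist hl (mem_ball_ten hx) (mem_ball_ten hp) hxp9
    have hx' := (hA l x hx).norm_Q_sub_le
    have hp' := (hA k p hp).norm_Q_sub_le
    rw [← dist_eq_norm] at hQ hx' hp' ⊢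
    have hdε : 0 ≤ d * ε := by positivity
    linarith [dist_triangle4_right (A l x).Q (A k p).Q (P l x).Q (P k p).Q]
  · intro z hz
    have hN := h.norm_N_sub_N_le_of_dist hl (mem_ball_ten hx) (mem_ball_ten hp) hxp9 z
    have hx' := (hA l x hx).norm_N_sub_N_le (h.through l x (mem_ball_ten hx)) z
    have hp' := (hA k p hp).norm_N_sub_N_le (h.through k p (mem_ball_ten hp)) z
    have hz' : dist z x ≤ 10 * rad k := by linarith [dist_triangle_right z x p]
    have hN₁ : ‖(P l x).N z - (P k p).N z‖ ≤ 6400 * d * ε * (11 * rad k) :=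
      hN.trans (by gcongr; linarith)
    have hx₁ : ‖(A l x).N z - (P l x).N z‖ ≤ 640 * d * ε * (11 * rad k) :=
      hx'.trans (by gcongr; linarith)
    have hp₁ : ‖(A k p).N z - (P k p).N z‖ ≤ 640 * d * ε * (6 * rad k) :=
      hp'.trans (by gcongr; linarith)
    rw [← dist_eq_norm] at hN₁ hx₁ hp₁ ⊢
    have : 0 ≤ d * ε * rad k := by positivity
    linarith [dist_triangle4_right ((A l x).N z) ((A k p).N z) ((P l x).N z) ((P k p).N z)]

theorem areClose_planeBound {β : ℕ → F → ℝ}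
    (hs : 10000 * (8 * 5 ^ Module.finrank ℝ F) ^ 2 * (100000 * d * ε) ≤ 1)
    (hβ₀ : ∀ k p, 0 ≤ β k p)
    (hβ : ∀ k, ∀ p ∈ E ∩ closedBall 0 7, ∀ η > 0, ∃ M : NormalPlane F, M.dim = d ∧
      l1Dist E d p (rad k) M ≤ ENNReal.ofReal ((β k p + η) * rad k ^ (d + 1)))
    (hl : l = k ∨ l = k + 1) (hx : x ∈ E ∩ closedBall 0 7) (hp : p ∈ E ∩ closedBall 0 7)
    (hxp : dist x p ≤ 5 * rad k) :
    AreClose (A l x) (A k p) p (rad k) (planeBound d (100000 * d * ε) β k p) := by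
  have hcoarse := h.areClose_of_dist_le hA hl hx hp hxp
  match k with
  | 0 | 1 => exact hcoarse
  | k + 2 =>
    have hr := rad_pos (k + 2)
    have hrk : rad k = 100 * rad (k + 2) := by rw [rad_succ, rad_succ]; ring
    set B := β k p + rad (k + 2)
    have hB : rad (k + 2) ≤ B := le_add_of_nonneg_left (hβ₀ k p)
    change AreClose _ _ _ _ (min _ (betaConst d * B))
    rcases le_or_gt (chebConst d * (B * 1000 ^ (d + 1))) (10 * ε) with hBε | hBε
    · obtain ⟨M, hM, hI⟩ := hβ k p hp _ hr
      rw [hrk] at hI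
      exact hcoarse.min hr.le (h.areClose_of_l1Dist_le hA hs (by omega) hl hx hp hxp hB hM hI hBε)
    · have hδ : 100000 * d * ε ≤ betaConst d * B := by
        rw [betaConst]
        linarith [mul_le_mul_of_nonneg_left hBε.le (by positivity : (0 : ℝ) ≤ 10000 * d)]
      rwa [min_eq_left hδ]

theorem initial (b : ℕ → F → ℝ) (X : ℕ → Finset F) (θ : ℕ → F → F → ℝ) :
    Initial ⟨A, b, X, θ⟩ E (100000 * d * ε) (P 0 0) := by
  have h0 : (0 : F) ∈ E ∩ ball 0 10 := ⟨h.zero_mem, by simp⟩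
  have hε := h.eps_mul_rad_le 0
  rw [rad_zero, mul_one, mul_one] at hε
  have hdist : ∀ {x : F}, x ∈ E ∩ closedBall 0 7 → dist x 0 ≤ 9 * rad 0 := fun hx => by
    have := mem_closedBall.1 hx.2
    rw [rad_zero]
    linarith
  refine ⟨fun x hx => ?_, fun x hx z hz => ?_, fun a ha ha6 => ?_, fun x hx => ?_⟩
  · have hQ := h.norm_Q_sub_Q_le_of_dist (Or.inl rfl) (mem_ball_ten hx) h0 (hdist hx)
    have hx' := (hA 0 x hx).norm_Q_sub_le
    linarith [norm_sub_le_norm_sub_add_norm_sub (A 0 x).Q (P 0 x).Q (P 0 0).Q]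
  · have hN := h.norm_N_sub_N_le_of_dist (Or.inl rfl) (mem_ball_ten hx) h0 (hdist hx) z
    have hx' := h.norm_N_sub_N_le_of_isAlmostMinPlane hA (k := 0) hx (by rwa [rad_zero, mul_one])
    have hz' := mul_le_mul_of_nonneg_left (by linarith : dist z x + 1 ≤ 6) (hε.1.trans hε.2)
    rw [rad_zero] at hN hx'
    linarith [norm_sub_le_norm_sub_add_norm_sub ((A 0 x).N z) ((P 0 x).N z) ((P 0 0).N z)]
  · have hset := h.near_set 0 0 h0 a ha (by rw [dist_zero_right, rad_zero]; linarith)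
    obtain ⟨p, hp, hap⟩ := h.closed.exists_infDist_eq_dist ⟨0, h.zero_mem⟩ a
    rw [hap, rad_zero] at hset
    exact ⟨p, hp, by rw [rad_zero]; linarith⟩
  · have hx1 := mem_closedBall.1 hx.2
    have hN := h.near_plane 0 0 h0 x hx.1 (by rw [rad_zero]; linarith)
    rw [rad_zero] at hN
    linarith

end Flat

theorem Flat.exists_planeSys {F : Type*} [NormedAddCommGroup F] [InnerProductSpace ℝ F]
    [FiniteDimensional ℝ F] [MeasurableSpace F] [BorelSpace F] {E : Set F} {d : ℕ} {ε : ℝ}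
    {P : ℕ → F → NormalPlane F} (h : Flat E d ε P)
    (hs : 10000 * (8 * 5 ^ Module.finrank ℝ F) ^ 2 * (100000 * d * ε) ≤ 1) {β : ℕ → F → ℝ}
    (hβ₀ : ∀ k p, 0 ≤ β k p)
    (hβ : ∀ k, ∀ p ∈ E ∩ closedBall 0 7, ∀ η > 0, ∃ M : NormalPlane F, M.dim = d ∧
      l1Dist E d p (rad k) M ≤ ENNReal.ofReal ((β k p + η) * rad k ^ (d + 1))) :
    ∃ A : ℕ → F → NormalPlane F, ∀ X θ,
      PlaneSys ⟨A, planeBound d (100000 * d * ε) β, X, θ⟩ E 7 (100000 * d * ε) ∧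
      Initial ⟨A, planeBound d (100000 * d * ε) β, X, θ⟩ E (100000 * d * ε) (P 0 0) := by
  have hε := h.nonneg
  have hmin : ∀ k x, ∃ L, x ∈ E ∩ closedBall 0 7 →
      IsAlmostMinPlane E d (P k x) x (rad k) (640 * d * ε) L := fun k x => by
    by_cases hx : x ∈ E ∩ closedBall 0 7
    · obtain ⟨L, hL⟩ := exists_isAlmostMinPlane E d (h.through k x (mem_ball_ten hx))
        (by positivity : 0 ≤ 640 * d * ε) (rad_pos k)
      exact ⟨L, fun _ => hL⟩
    · exact ⟨P k x, fun hx' => absurd hx' hx⟩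
  choose A hA using hmin
  have hclose := fun k l (hl : l = k ∨ l = k + 1) x hx p hp (hxp : dist x p ≤ 5 * rad k) =>
    h.areClose_planeBound hA hs hβ₀ hβ hl hx hp hxp
  refine ⟨A, fun X θ => ⟨?_, h.initial hA _ X θ⟩⟩
  exact
    { near_plane := fun k x hx y hy => h.norm_N_le_of_isAlmostMinPlane hA hx hy
      near_set := fun k x hx z hz => h.infDist_le_of_isAlmostMinPlane hA hx hz
      b_nonneg := planeBound_nonneg (by positivity) hβ₀
      b_le := planeBound_le
      norm_Q_sub_le := fun k l hl x hx p hp hxp => (hclose k l hl x hx p hp hxp).norm_Q_sub_le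
      norm_N_sub_le := fun k l hl x hx p hp hxp => (hclose k l hl x hx p hp hxp).norm_N_sub_le }

theorem exists_normalPlane {F : Type*} [NormedAddCommGroup F] [InnerProductSpace ℝ F]
    {A : AffineSubspace ℝ F} [A.direction.HasOrthogonalProjection] (hA : (A : Set F).Nonempty) :
    ∃ L : NormalPlane F, L.direction = A.direction ∧ {z | L.N z = 0} = A ∧
      ∀ y, infDist y A = ‖L.N y‖ := by
  obtain ⟨c, hc⟩ := hA
  let L : NormalPlane F := ⟨A.directionᗮ.starProjection, c,
    A.directionᗮ.isSymmetricProjection_starProjection⟩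
  have hdir : L.direction = A.direction :=
    (A.directionᗮ.ker_starProjection).trans A.direction.orthogonal_orthogonal
  have hmem : ∀ z, L.N z = 0 ↔ z ∈ A := fun z => by
    rw [NormalPlane.N, ← L.mem_direction, hdir]
    exact AffineSubspace.vsub_right_mem_direction_iff_mem hc z
  refine ⟨L, hdir, Set.ext hmem, fun y => le_antisymm ?_ ((le_infDist ⟨c, hc⟩).2 fun z hz => ?_)⟩
  · refine (infDist_le_dist_of_mem ((hmem _).1 (L.N_sub_N_self y))).trans_eq ?_
    rw [dist_self_sub_right]
  · rw [← sub_zero (L.N y), ← (hmem z).2 hz, L.N_sub_N, dist_eq_norm]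
    exact L.norm_Q_le _

theorem sum_rad_le (m : ℕ) : ∑ i ∈ Finset.range m, rad i ≤ 2 * (1 - rad m) := by
  induction m with
  | zero => simp [rad_zero]
  | succ m ih => rw [Finset.sum_range_succ, rad_succ]; linarith [rad_pos m]

theorem mul_add_rad_sq_le (c β : ℝ) (i : ℕ) :
    (c * (β + rad (i + 2))) ^ 2 ≤ 2 * c ^ 2 * (β ^ 2 + rad i) := by
  have hsq : rad (i + 2) ^ 2 ≤ rad i := by
    nlinarith [rad_le_one (i + 2), rad_antitone (Nat.le_add_right i 2), rad_pos (i + 2)]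
  have hadd : (β + rad (i + 2)) ^ 2 ≤ 2 * (β ^ 2 + rad i) := by
    nlinarith [sq_nonneg (β - rad (i + 2))]
  rw [mul_pow]
  nlinarith [sq_nonneg c]

theorem sum_planeBound_sq_le {F : Type*} {d : ℕ} {δ M : ℝ} {β : ℕ → F → ℝ} (hδ₀ : 0 ≤ δ)
    (hδ : δ ≤ 1) (hβ₀ : ∀ k p, 0 ≤ β k p) {p : F}
    (hβ : ∀ m, ∑ i ∈ Finset.range m, β i p ^ 2 ≤ M) (m : ℕ) :
    ∑ i ∈ Finset.range m, planeBound d δ β i p ^ 2 ≤ 2 + 2 * betaConst d ^ 2 * (M + 2) := by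
  set b := fun i => planeBound d δ β i p
  have hb : ∀ i, 0 ≤ b i := fun i => planeBound_nonneg hδ₀ hβ₀ i p
  have hb1 : ∀ i, b i ^ 2 ≤ 1 := fun i =>
    pow_le_one₀ (hb i) ((planeBound_le i p).trans hδ)
  calc ∑ i ∈ Finset.range m, b i ^ 2 ≤ ∑ i ∈ Finset.range (m + 2), b i ^ 2 :=
        Finset.sum_le_sum_of_subset_of_nonneg (by simp) fun _ _ _ => sq_nonneg _
    _ = ∑ i ∈ Finset.range m, b (i + 2) ^ 2 + b 1 ^ 2 + b 0 ^ 2 := by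
        rw [Finset.sum_range_succ', Finset.sum_range_succ']
    _ ≤ ∑ i ∈ Finset.range m, 2 * betaConst d ^ 2 * (β i p ^ 2 + rad i) + 1 + 1 := by
        gcongr with i
        · exact (pow_le_pow_left₀ (hb _) (planeBound_add_two_le i p) 2).trans
            (mul_add_rad_sq_le _ _ i)
        · exact hb1 1
        · exact hb1 0
    _ = 2 + 2 * betaConst d ^ 2 *
        (∑ i ∈ Finset.range m, β i p ^ 2 + ∑ i ∈ Finset.range m, rad i) := by
        rw [← Finset.mul_sum, Finset.sum_add_distrib]; ring
    _ ≤ 2 + 2 * betaConst d ^ 2 * (M + 2) := by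
        gcongr
        · exact hβ m
        · linarith [sum_rad_le m, rad_pos m]

/-- An admissible flatness constant for sets of dimension `d` in a space of dimension `N`. -/
def flatConst (N d : ℕ) : ℝ := 1 / (10 ^ 10 * (8 * 5 ^ N) ^ 2 * d)

/-- The bi-Lipschitz constant of the parametrization of a set of dimension `d` in a space of
dimension `N` whose Jones numbers have square sum at most `M`. -/
def lipConst (N d : ℕ) (M : ℝ) : ℝ :=
  44 * Real.exp (400 * (8 * 5 ^ N) ^ 2 * (1 + 2 * (2 + 2 * betaConst d ^ 2 * (M + 2))))

theorem flatConst_pos (N : ℕ) {d : ℕ} (hd : 0 < d) : 0 < flatConst N d := by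
  unfold flatConst
  positivity

theorem mul_flatConst (N : ℕ) {d : ℕ} (hd : 0 < d) :
    10 ^ 10 * (8 * 5 ^ N) ^ 2 * (d * flatConst N d) = 1 := by
  rw [flatConst]
  field_simp

theorem mul_flatConst_le (N : ℕ) {d : ℕ} (hd : 0 < d) : 10 ^ 10 * (d * flatConst N d) ≤ 1 := by
  have hN : (1 : ℝ) ≤ (8 * 5 ^ N) ^ 2 :=
    one_le_pow₀ (by linarith [one_le_pow₀ (M₀ := ℝ) (n := N) (a := 5) (by norm_num)])
  have := flatConst_pos N hd
  calc 10 ^ 10 * (d * flatConst N d) ≤ 10 ^ 10 * (8 * 5 ^ N) ^ 2 * (d * flatConst N d) := by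
        gcongr
        exact le_mul_of_one_le_right (by positivity) hN
    _ = 1 := mul_flatConst N hd

theorem one_le_lipConst (N d : ℕ) {M : ℝ} (hM : 0 ≤ M) : 1 ≤ lipConst N d M := by
  have : 1 ≤ Real.exp (400 * (8 * 5 ^ N) ^ 2 * (1 + 2 * (2 + 2 * betaConst d ^ 2 * (M + 2)))) :=
    Real.one_le_exp (by positivity)
  rw [lipConst]
  linarith

theorem Flat.exists_bilipschitz_param {F : Type*} [NormedAddCommGroup F] [InnerProductSpace ℝ F]
    [FiniteDimensional ℝ F] [MeasurableSpace F] [BorelSpace F] {E : Set F} {d : ℕ}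
    {P : ℕ → F → NormalPlane F} (h : Flat E d (flatConst (Module.finrank ℝ F) d) P)
    {β : ℕ → F → ℝ} (hβ₀ : ∀ k p, 0 ≤ β k p)
    (hβ : ∀ k, ∀ p ∈ E ∩ closedBall 0 7, ∀ η > 0, ∃ M : NormalPlane F, M.dim = d ∧
      l1Dist E d p (rad k) M ≤ ENNReal.ofReal ((β k p + η) * rad k ^ (d + 1)))
    {M : ℝ} (hM : 0 ≤ M)
    (hsum : ∀ p ∈ E ∩ closedBall 0 7, ∀ m, ∑ i ∈ Finset.range m, β i p ^ 2 ≤ M) :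
    ∃ g : F → F, Function.Bijective g ∧
      E ∩ ball 0 1 = g '' {z | (P 0 0).N z = 0} ∩ ball 0 1 ∧
      ∀ x y, dist (g x) (g y) ≤ lipConst (Module.finrank ℝ F) d M * dist x y ∧
        dist x y ≤ lipConst (Module.finrank ℝ F) d M * dist (g x) (g y) := by
  have hε := h.nonneg
  have hδ := mul_flatConst (Module.finrank ℝ F) h.dim_pos
  have hδ1 := mul_flatConst_le (Module.finrank ℝ F) h.dim_pos
  have hs : 10000 * (8 * 5 ^ Module.finrank ℝ F) ^ 2 *
      (100000 * d * flatConst (Module.finrank ℝ F) d) ≤ 1 := by linarith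
  set δ := 100000 * d * flatConst (Module.finrank ℝ F) d
  have hδ₀ : 0 ≤ δ := by positivity
  obtain ⟨A, hA⟩ := h.exists_planeSys hs hβ₀ hβ
  obtain ⟨X, θ, hS⟩ := (hA (fun _ => ∅) 0).1.exists_setup h.closed hδ₀ hs
  refine hS.exists_bilipschitz_param (hA X θ).2 h.zero_mem (Real.one_le_exp (by positivity))
    fun p hp m => PlaneData.distortion_le hδ₀ (by linarith) ?_
  exact sum_planeBound_sq_le hδ₀ (by linarith) hβ₀ (hsum p hp) m

theorem IsAffinePlane.exists_normalPlane {n d : ℕ} {P : Set (V n)} (hP : IsAffinePlane n d P) :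
    ∃ L : NormalPlane (V n), L.dim = d ∧ {z | L.N z = 0} = P ∧ ∀ y, infDist y P = ‖L.N y‖ := by
  obtain ⟨A, rfl, hdim, hne⟩ := hP
  obtain ⟨L, hL, h⟩ := _root_.exists_normalPlane hne
  exact ⟨L, by rw [NormalPlane.dim, hL, hdim], h⟩

section Beta

variable {n d : ℕ} {E : Set (V n)} {M : ℝ}

theorem exists_l1Dist_le_of_beta1_lt {x : V n} {r t : ℝ} (hr : 0 < r) (ht : 0 ≤ t)
    (h : beta1 n d E x r < ENNReal.ofReal t) :
    ∃ L : NormalPlane (V n), L.dim = d ∧ l1Dist E d x r L ≤ ENNReal.ofReal (t * r ^ (d + 1)) := by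
  simp only [beta1, iInf_lt_iff] at h
  obtain ⟨P, ⟨hP, -⟩, hlt⟩ := h
  obtain ⟨L, hL, -, hdist⟩ := hP.exists_normalPlane
  have hle := (ENNReal.div_le_iff (by simpa using pow_pos hr d) ENNReal.ofReal_ne_top).1 hlt.le
  refine ⟨L, hL, ?_⟩
  calc l1Dist E d x r L
      = ∫⁻ y in E ∩ ball x r, ENNReal.ofReal r * ENNReal.ofReal (infDist y P / r) ∂μH[(d : ℝ)] := by
        simp only [l1Dist, hdist, ← ENNReal.ofReal_mul hr.le, mul_div_cancel₀ _ hr.ne']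
    _ = ENNReal.ofReal r * ∫⁻ y in E ∩ ball x r, ENNReal.ofReal (infDist y P / r) ∂μH[(d : ℝ)] :=
        lintegral_const_mul' _ _ ENNReal.ofReal_ne_top
    _ ≤ ENNReal.ofReal r * (ENNReal.ofReal t * ENNReal.ofReal (r ^ d)) := by gcongr
    _ = ENNReal.ofReal (t * r ^ (d + 1)) := by
        rw [← ENNReal.ofReal_mul ht, ← ENNReal.ofReal_mul hr.le]
        ring_nf

theorem rad_eq_zpow (k : ℕ) : rad k = (10 : ℝ) ^ (-(k : ℤ)) := by
  rw [zpow_neg, zpow_natCast, rad, one_div, inv_pow]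

theorem ne_top_of_tsum_sq_le {f : ℕ → ℝ≥0∞} (hf : ∑' k, f k ^ 2 ≤ ENNReal.ofReal M) (k : ℕ) :
    f k ≠ ⊤ := fun htop => by
  simpa [htop] using (ENNReal.le_tsum k).trans hf

theorem sum_toReal_sq_le {f : ℕ → ℝ≥0∞} (hf : ∑' k, f k ^ 2 ≤ ENNReal.ofReal M) (m : ℕ) :
    ∑ i ∈ Finset.range m, (f i).toReal ^ 2 ≤ max M 0 := by
  have hle := ENNReal.toReal_mono ENNReal.ofReal_ne_top
    ((ENNReal.sum_le_tsum (Finset.range m)).trans hf)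
  rw [ENNReal.toReal_ofReal',
    ENNReal.toReal_sum fun i _ => ENNReal.pow_ne_top (ne_top_of_tsum_sq_le hf i)] at hle
  simpa only [ENNReal.toReal_pow] using hle

theorem exists_l1Dist_le_toReal_beta1_add {x : V n} {r η : ℝ} (hr : 0 < r)
    (hfin : beta1 n d E x r ≠ ⊤) (hη : 0 < η) :
    ∃ L : NormalPlane (V n), L.dim = d ∧
      l1Dist E d x r L ≤ ENNReal.ofReal (((beta1 n d E x r).toReal + η) * r ^ (d + 1)) := by
  refine exists_l1Dist_le_of_beta1_lt hr (by positivity) ?_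
  rw [ENNReal.ofReal_add ENNReal.toReal_nonneg hη.le, ENNReal.ofReal_toReal hfin]
  exact ENNReal.lt_add_right hfin (by simpa using hη)

end Beta

theorem exists_flat {n d : ℕ} {E : Set (V n)} {ε : ℝ} {P : V n → ℝ → Set (V n)}
    (hE : IsClosed E) (h0 : (0 : V n) ∈ E) (hd : 0 < d) (hε : 0 ≤ ε) (hdε : 320 * d * ε ≤ 1)
    (hP : ∀ x ∈ E ∩ ball (0 : V n) 10, ∀ r : ℝ, 0 < r → r ≤ 10 →
      IsAffinePlane n d (P x r) ∧ x ∈ P x r ∧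
      (∀ y ∈ E ∩ ball x r, infDist y (P x r) ≤ ε * r) ∧
      (∀ y ∈ P x r ∩ ball x r, infDist y E ≤ ε * r)) :
    ∃ L : ℕ → V n → NormalPlane (V n), Flat E d ε L ∧ {z | (L 0 0).N z = 0} = P 0 10 := by
  have hrad : ∀ k, 0 < 10 * rad k ∧ 10 * rad k ≤ 10 := fun k =>
    ⟨by linarith [rad_pos k], by linarith [rad_le_one k]⟩
  have hscale : ∀ k, ε * (10 * rad k) = 10 * (ε * rad k) := fun k => by ring
  have hplane : ∀ k x, ∃ L : NormalPlane (V n), x ∈ E ∩ ball 0 10 → L.dim = d ∧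
      {z | L.N z = 0} = P x (10 * rad k) ∧ ∀ y, infDist y (P x (10 * rad k)) = ‖L.N y‖ := by
    intro k x
    by_cases hx : x ∈ E ∩ ball 0 10
    · obtain ⟨L, hL⟩ := (hP x hx _ (hrad k).1 (hrad k).2).1.exists_normalPlane
      exact ⟨L, fun _ => hL⟩
    · exact ⟨Classical.arbitrary _, fun h => absurd h hx⟩
  choose L hL using hplane
  have hmem : ∀ k, ∀ x ∈ E ∩ ball 0 10, ∀ z, (L k x).N z = 0 ↔ z ∈ P x (10 * rad k) :=
    fun k x hx z => Set.ext_iff.1 (hL k x hx).2.1 z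
  refine ⟨L, ⟨hE, h0, hε, hdε, hd, fun k x hx => ?_, fun k x hx => (hL k x hx).1,
    fun k x hx y hy hyx => ?_, fun k x hx z hz hzx => ?_⟩, ?_⟩
  · exact (hmem k x hx x).2 (hP x hx _ (hrad k).1 (hrad k).2).2.1
  · rw [← (hL k x hx).2.2, ← hscale]
    exact (hP x hx _ (hrad k).1 (hrad k).2).2.2.1 y ⟨hy, hyx⟩
  · rw [← hscale]
    exact (hP x hx _ (hrad k).1 (hrad k).2).2.2.2 z ⟨(hmem k x hx z).1 hz, hzx⟩
  · simpa [rad_zero] using (hL 0 0 ⟨h0, mem_ball_self (by norm_num)⟩).2.1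

/-- **Theorem 1.18**: if `J₁(x) = Σ_k β₁(x,10^{-k})² ≤ M` on `E ∩ B(0,10)`,
the Reifenberg parameterization is bi-Lipschitz, with a constant depending
only on `n`, `d`, `M`. -/
theorem thm_1_18 (n d : ℕ) (hd : 0 < d) (hdn : d < n) :
    ∃ ε : ℝ, 0 < ε ∧
    ∀ M : ℝ, ∃ C : ℝ, 1 ≤ C ∧
      ∀ E : Set (V n), IsClosed E → (0 : V n) ∈ E →
      ∀ P : V n → ℝ → Set (V n),
      (∀ x ∈ E ∩ ball (0 : V n) 10, ∀ r : ℝ, 0 < r → r ≤ 10 →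
        IsAffinePlane n d (P x r) ∧ x ∈ P x r ∧
        (∀ y ∈ E ∩ ball x r, infDist y (P x r) ≤ ε * r) ∧
        (∀ y ∈ P x r ∩ ball x r, infDist y E ≤ ε * r)) →
      -- `J₁(x) ≤ M` on `E ∩ B(0,10)`
      (∀ x ∈ E ∩ ball (0 : V n) 10,
        (∑' k : ℕ, beta1 n d E x ((10 : ℝ) ^ (-(k : ℤ))) ^ 2) ≤ ENNReal.ofReal M) →
      ∃ g : V n → V n, Function.Bijective g ∧
        E ∩ ball (0 : V n) 1 = g '' (P 0 10) ∩ ball (0 : V n) 1 ∧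
        ∀ x y : V n,
          C⁻¹ * dist x y ≤ dist (g x) (g y) ∧ dist (g x) (g y) ≤ C * dist x y := by
  set N := Module.finrank ℝ (V n)
  have hsmall : 320 * d * flatConst N d ≤ 1 := by
    nlinarith [mul_flatConst_le N hd, mul_nonneg (Nat.cast_nonneg d) (flatConst_pos N hd).le]
  refine ⟨flatConst N d, flatConst_pos N hd, fun M => ?_⟩
  have hC : 1 ≤ lipConst N d (max M 0) := one_le_lipConst N d (le_max_right M 0)
  refine ⟨lipConst N d (max M 0), hC, fun E hE h0 P hP hJ => ?_⟩
  obtain ⟨L, hflat, hL⟩ := exists_flat hE h0 hd (flatConst_pos N hd).le hsmall hP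
  simp only [← rad_eq_zpow] at hJ
  obtain ⟨g, hg, hgE, hdist⟩ := hflat.exists_bilipschitz_param
    (β := fun k x => (beta1 n d E x (rad k)).toReal) (fun _ _ => ENNReal.toReal_nonneg)
    (fun k p hp η hη => exists_l1Dist_le_toReal_beta1_add (rad_pos k)
      (ne_top_of_tsum_sq_le (hJ p (mem_ball_ten hp)) k) hη)
    (le_max_right M 0) fun p hp => sum_toReal_sq_le (hJ p (mem_ball_ten hp))
  refine ⟨g, hg, hL ▸ hgE, fun x y => ⟨?_, (hdist x y).1⟩⟩
  rw [inv_mul_le_iff₀ (zero_lt_one.trans_le hC)]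
  exact (hdist x y).2
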